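/- Let $C \subset \mathbb{P}^2$ be a smooth complex plane quartic, that is, a smooth non-hyperelliptic complex projective curve of genus $3$ in its canonical embedding, so that $\mathcal{O}_C(1) \cong \omega_C$. Let $T_{\mathbb{P}^2}|_C$ be the restriction to $C$ of the tangent bundle of $\mathbb{P}^2$ and let $T_{\mathbb{P}^2}|_C(-1) = T_{\mathbb{P}^2}|_C \otimes \mathcal{O}_C(1)^{-1}$, a vector bundle of rank two and degree $4$. Then the difference divisor $C - C = \{\mathcal{O}_C(x - y) : (x,y) \in C \times C\} \subset \mathrm{Pic}^0(C)$ coincides with the theta divisor of $T_{\mathbb{P}^2}|_C(-1)$, that is, $$C - C = \{N \in \mathrm{Pic}^0(C) : h^0(T_{\mathbb{P}^2}|_C(-1) \otimes N^{-1}) \geq 1\}.$$ -/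

import Mathlib

open scoped LinearAlgebra.Projectivization Pointwise

noncomputable section

/-- The homogeneous coordinate ring `ℂ[x₀, x₁, x₂]` of `ℙ²`. -/
abbrev CoordRing : Type := MvPolynomial (Fin 3) ℂ

/-- Its grading by degree. -/
abbrev coordGrading : ℕ → Submodule ℂ CoordRing := MvPolynomial.homogeneousSubmodule (Fin 3) ℂ

instance coordGradedAlgebra : GradedAlgebra coordGrading := MvPolynomial.gradedAlgebra

/-- A degree-zero homogeneous localization of `ℂ[x₀, x₁, x₂]` is a `ℂ`-algebra, with the scalar
multiplication that Mathlib already puts on it. -/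
instance homogeneousLocalizationComplexAlgebra (S : Submonoid CoordRing) :
    Algebra ℂ (HomogeneousLocalization coordGrading S) where
  toSMul := inferInstance
  algebraMap := (HomogeneousLocalization.fromZeroRingHom coordGrading S).comp
    (algebraMap ℂ (coordGrading 0))
  commutes' _ _ := mul_comm _ _
  smul_def' c x := by
    apply HomogeneousLocalization.val_injective
    rw [HomogeneousLocalization.val_smul, HomogeneousLocalization.val_mul, Algebra.smul_def,
      IsScalarTower.algebraMap_apply ℂ CoordRing (Localization S)]
    rfl

/-- A smooth (integral) plane quartic curve `C ⊂ ℙ²` over `ℂ`, given by its equation. -/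
structure SmoothPlaneQuartic where
  /-- the equation of the curve -/
  poly : CoordRing
  isHomogeneous : poly.IsHomogeneous 4
  irreducible : Irreducible poly
  /-- Jacobian criterion: `C` is nonsingular at each of its points -/
  smooth : ∀ v : Fin 3 → ℂ, v ≠ 0 → MvPolynomial.eval v poly = 0 →
    ∃ i, MvPolynomial.eval v (MvPolynomial.pderiv i poly) ≠ 0

namespace SmoothPlaneQuartic

variable (C : SmoothPlaneQuartic)

/-! ### Points, local rings and the function field -/

/-- The (closed) points of the curve `C`. -/
def Point : Type := {p : ℙ ℂ (Fin 3 → ℂ) // MvPolynomial.eval p.rep C.poly = 0}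

instance isPrime_span_poly : (Ideal.span {C.poly}).IsPrime :=
  (Ideal.span_singleton_prime C.irreducible.ne_zero).2 C.irreducible.prime

instance isPrime_ker_eval (v : Fin 3 → ℂ) :
    (RingHom.ker (MvPolynomial.eval v : CoordRing →+* ℂ)).IsPrime :=
  RingHom.ker_isPrime _

/-- The local ring `𝒪_{ℙ²,C}` of `ℙ²` at the generic point of `C`: fractions `a / b` of forms of
the same degree with `b` not divisible by the equation of `C`. -/
abbrev PlaneGenericRing : Type :=
  HomogeneousLocalization.AtPrime coordGrading (Ideal.span {C.poly})

/-- The local ring `𝒪_{ℙ²,p}` of `ℙ²` at a point `p` of `C`: fractions `a / b` of forms of the same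
degree with `b(p) ≠ 0`. -/
abbrev PlaneLocalRing (p : C.Point) : Type :=
  HomogeneousLocalization.AtPrime coordGrading
    (RingHom.ker (MvPolynomial.eval p.1.rep : CoordRing →+* ℂ))

/-- The localization map `𝒪_{ℙ²,p} → 𝒪_{ℙ²,C}`. -/
def planeGeneralize (p : C.Point) : C.PlaneLocalRing p →+* C.PlaneGenericRing :=
  HomogeneousLocalization.mapId coordGrading <| by
    intro b hb hbF
    exact hb ((Ideal.span_singleton_le_iff_mem _).2 (RingHom.mem_ker.2 p.2) hbF)

/-- The field `K = ℂ(C)` of rational functions of `C`, the residue field of `𝒪_{ℙ²,C}`. -/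
abbrev FunctionField : Type := IsLocalRing.ResidueField C.PlaneGenericRing

/-- The restriction to `C` of the germs of functions of `ℙ²` at `p`, with values in `K`. -/
def restrictGerm (p : C.Point) : C.PlaneLocalRing p →+* C.FunctionField :=
  (IsLocalRing.residue C.PlaneGenericRing).comp (C.planeGeneralize p)

/-- The local ring `𝒪_{C,p} ⊆ K` of `C` at `p`, the image of `𝒪_{ℙ²,p}`. -/
def localRing (p : C.Point) : Subalgebra ℂ C.FunctionField where
  toSubsemiring := (C.restrictGerm p).rangeS
  algebraMap_mem' c := ⟨algebraMap ℂ (C.PlaneLocalRing p) c, by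
    change IsLocalRing.residue _ (C.planeGeneralize p _) =
      IsLocalRing.residue _ (algebraMap ℂ C.PlaneGenericRing c)
    congr 1⟩

/-- The maximal ideal `𝔪_p ⊂ 𝒪_{C,p}`, as an `𝒪_{C,p}`-submodule of `K`. -/
def maxIdeal (p : C.Point) : Submodule (C.localRing p) C.FunctionField :=
  Submodule.span (C.localRing p)
    (C.restrictGerm p '' (IsLocalRing.maximalIdeal (C.PlaneLocalRing p) : Set _))

/-- The power `𝔪_pⁿ ⊂ K` for an integer `n`; for negative `n` it is `{f ∈ K | f 𝔪_p⁻ⁿ ⊆ 𝒪_{C,p}}`. -/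
def maxIdealPow (p : C.Point) : ℤ → Submodule (C.localRing p) C.FunctionField
  | Int.ofNat n => C.maxIdeal p ^ n
  | Int.negSucc n => 1 / C.maxIdeal p ^ (n + 1)

/-! ### Sheaves

A torsion-free sheaf `E` on the integral curve `C` with generic stalk `V` (a `K`-vector space) is
the subsheaf of the constant sheaf `V` with stalks `E_p ⊆ V`; it is described by these stalks. -/

section Sheaves

variable (V : Type) [AddCommGroup V] [Module C.FunctionField V]

/-- A subsheaf of the constant sheaf `V`, described by its stalks `E_p ⊆ V`. -/
abbrev SubSheaf : Type := ∀ p : C.Point, Submodule (C.localRing p) V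

variable {C V}

/-- The tensor product `E ⊗ L` of `E` by an invertible subsheaf `L` of the constant sheaf `K`:
its stalk at `p` is `L_p E_p`. -/
def SubSheaf.twist (E : C.SubSheaf V) (L : C.SubSheaf C.FunctionField) : C.SubSheaf V :=
  fun p => L p • E p

/-- The inverse `L⁻¹ = Hom(L, 𝒪_C)` of an invertible subsheaf of the constant sheaf `K`. -/
def SubSheaf.dual (L : C.SubSheaf C.FunctionField) : C.SubSheaf C.FunctionField :=
  fun p => 1 / L p

variable [Module ℂ V] [IsScalarTower ℂ C.FunctionField V]

/-- The space of global sections `H⁰(C, E) = ⋂ E_p`. -/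
def SubSheaf.globalSections (E : C.SubSheaf V) : Submodule ℂ V :=
  ⨅ p : C.Point, (E p).restrictScalars ℂ

/-- `h⁰(E) = dim H⁰(C, E)`. -/
def SubSheaf.h0 (E : C.SubSheaf V) : Cardinal := Module.rank ℂ E.globalSections

end Sheaves

/-! ### Line bundles -/

/-- Divisors on `C`. -/
abbrev Divisor : Type := C.Point →₀ ℤ

/-- The line bundle `𝒪_C(D)`, with stalk `𝔪_p ^ (-D(p))` at `p`. -/
def lineBundle (D : C.Divisor) : C.SubSheaf C.FunctionField :=
  fun p => C.maxIdealPow p (-D p)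

/-- `𝒪_C(D) ≅ 𝒪_C(D')`: the isomorphisms are the multiplications by those `f ∈ K^×` that map
`𝒪_C(D)` onto `𝒪_C(D')`. This is linear equivalence of `D` and `D'`. -/
def divisorSetoid : Setoid C.Divisor where
  r D D' := ∃ f : C.FunctionField, f ≠ 0 ∧ ∀ p, C.lineBundle D' p = f • C.lineBundle D p
  iseqv :=
    { refl := fun D => ⟨1, one_ne_zero, fun p => (one_smul _ _).symm⟩
      symm := by
        rintro D D' ⟨f, hf, h⟩
        exact ⟨f⁻¹, inv_ne_zero hf, fun p => by rw [h p, smul_smul, inv_mul_cancel₀ hf, one_smul]⟩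
      trans := by
        rintro D D' D'' ⟨f, hf, h⟩ ⟨g, hg, h'⟩
        exact ⟨g * f, mul_ne_zero hg hf, fun p => by rw [h' p, h p, smul_smul]⟩ }

/-- `Pic(C)`, the set of isomorphism classes of line bundles on `C`; each line bundle on the smooth
curve `C` is isomorphic to some `𝒪_C(D)`. -/
def Pic : Type := Quotient C.divisorSetoid

/-- The class of `𝒪_C(D)` in `Pic(C)`. -/
def picClass (D : C.Divisor) : C.Pic := Quotient.mk C.divisorSetoid D

/-- `Pic⁰(C)`, the classes of degree zero. -/
def picZero : Set C.Pic := {N | ∃ D : C.Divisor, (D.sum fun _ n => n) = 0 ∧ C.picClass D = N}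

theorem coord_notMem (i : Fin 3) : (MvPolynomial.X i : CoordRing) ∉ Ideal.span {C.poly} := by
  rw [Ideal.mem_span_singleton]
  intro h
  have h1 := MvPolynomial.totalDegree_le_of_dvd_of_isDomain h (MvPolynomial.X_ne_zero i)
  rw [C.isHomogeneous.totalDegree C.irreducible.ne_zero, MvPolynomial.totalDegree_X] at h1
  omega

/-- The rational function `x_j / x_0` on `C`. -/
def coordQuotient (j : Fin 3) : C.FunctionField :=
  IsLocalRing.residue C.PlaneGenericRing <| HomogeneousLocalization.mk
    { deg := 1
      num := ⟨MvPolynomial.X j, MvPolynomial.isHomogeneous_X ℂ j⟩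
      den := ⟨MvPolynomial.X 0, MvPolynomial.isHomogeneous_X ℂ 0⟩
      den_mem := C.coord_notMem 0 }

/-- The line bundle `𝒪_C(1)`, restriction of `𝒪_{ℙ²}(1)`: its stalks are generated by the linear
forms `x_0, x_1, x_2`, and it is embedded into the constant sheaf `K` by `s ↦ s / x_0`. -/
def hyperplaneBundle : C.SubSheaf C.FunctionField :=
  fun p => Submodule.span (C.localRing p) (Set.range C.coordQuotient)

/-! ### The restricted tangent bundle of the plane -/

/-- The generic stalk of `T_{ℙ²}|_C`: the `ℂ`-derivations `𝒪_{ℙ²,C} → K`. -/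
abbrev GenericTangent : Type := Derivation ℂ C.PlaneGenericRing C.FunctionField

/-- The vector bundle `T_{ℙ²}|_C = Hom(Ω_{ℙ²}, 𝒪_C)`. Its stalk at `p` is
`Der_ℂ(𝒪_{ℙ²,p}, 𝒪_{C,p})`, the derivations that map `𝒪_{ℙ²,p}` into `𝒪_{C,p}`. -/
def planeTangent : C.SubSheaf C.GenericTangent := fun p =>
  { carrier := {δ | ∀ g : C.PlaneLocalRing p, δ (C.planeGeneralize p g) ∈ C.localRing p}
    add_mem' := fun ha hb g => add_mem (ha g) (hb g)
    zero_mem' := fun _ => zero_mem _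
    smul_mem' := fun c _ hd g => mul_mem c.2 (hd g) }

/-- The bundle `T_{ℙ²}|_C(-1) = T_{ℙ²}|_C ⊗ 𝒪_C(1)⁻¹`. -/
def planeTangentTwist : C.SubSheaf C.GenericTangent :=
  C.planeTangent.twist C.hyperplaneBundle.dual

/-! ### The two divisors -/

/-- The difference divisor `C - C`, the set of the classes of the `𝒪_C(x - y)`. -/
def differenceDivisor : Set C.Pic :=
  {N | ∃ x y : C.Point, N = C.picClass (Finsupp.single x 1 - Finsupp.single y 1)}

section Theta

variable {C}
variable {V : Type} [AddCommGroup V] [Module C.FunctionField V]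

theorem mem_smul_submodule_iff {p : C.Point} (f : C.FunctionField) (hf : f ≠ 0)
    (S : Submodule (C.localRing p) V) (v : V) : v ∈ f • S ↔ f⁻¹ • v ∈ S := by
  rw [Submodule.mem_smul_pointwise_iff_exists]
  exact ⟨fun ⟨w, hw, h⟩ => by rwa [← h, inv_smul_smul₀ hf],
    fun h => ⟨_, h, smul_inv_smul₀ hf v⟩⟩

theorem smul_submodule_smul {p : C.Point} (f : C.FunctionField)
    (L : Submodule (C.localRing p) C.FunctionField) (S : Submodule (C.localRing p) V) :
    (f • L) • S = f • (L • S) := by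
  apply le_antisymm
  · refine Submodule.smul_le.2 fun r hr n hn => ?_
    obtain ⟨w, hw, rfl⟩ := (Submodule.mem_smul_pointwise_iff_exists _ _ _).1 hr
    rw [smul_eq_mul, mul_smul]
    exact Submodule.smul_mem_pointwise_smul _ _ _ (Submodule.smul_mem_smul hw hn)
  · intro v hv
    obtain ⟨w, hw, rfl⟩ := (Submodule.mem_smul_pointwise_iff_exists _ _ _).1 hv
    refine Submodule.smul_induction_on hw (fun r hr n hn => ?_) fun x y hx hy => ?_
    · rw [smul_smul]
      exact Submodule.smul_mem_smul (Submodule.smul_mem_pointwise_smul r f _ hr) hn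
    · rw [smul_add]
      exact add_mem hx hy

variable [Module ℂ V] [IsScalarTower ℂ C.FunctionField V]

theorem h0_smul (E E' : C.SubSheaf V) (f : C.FunctionField) (hf : f ≠ 0)
    (h : ∀ p, E' p = f • E p) : E'.h0 = E.h0 := by
  let e : V ≃ₗ[ℂ] V :=
    { toFun := fun v => f • v
      invFun := fun v => f⁻¹ • v
      map_add' := smul_add f
      map_smul' := fun c v => smul_comm f c v
      left_inv := fun v => inv_smul_smul₀ hf v
      right_inv := fun v => smul_inv_smul₀ hf v }
  have he : E'.globalSections = E.globalSections.map (e : V →ₗ[ℂ] V) := by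
    ext v
    rw [Submodule.mem_map_equiv]
    simp only [SubSheaf.globalSections, Submodule.mem_iInf, Submodule.restrictScalars_mem, h]
    exact forall_congr' fun p => mem_smul_submodule_iff f hf (E p) v
  unfold SubSheaf.h0
  rw [he]
  exact (e.submoduleMap _).rank_eq.symm

/-- `h⁰(E ⊗ N⁻¹)` for `N ∈ Pic(C)`. -/
def h0Twist (E : C.SubSheaf V) (N : C.Pic) : Cardinal :=
  Quotient.lift (fun D : C.Divisor => (E.twist (C.lineBundle D).dual).h0) (by
    rintro D D' ⟨f, hf, h⟩
    refine (h0_smul _ _ f⁻¹ (inv_ne_zero hf) fun p => ?_).symm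
    have h1 : (1 : Submodule (C.localRing p) C.FunctionField) / C.lineBundle D' p =
        f⁻¹ • (1 / C.lineBundle D p) := by
      ext x
      rw [mem_smul_submodule_iff _ (inv_ne_zero hf), inv_inv, h p,
        Submodule.mem_div_iff_forall_mul_mem, Submodule.mem_div_iff_forall_mul_mem]
      constructor
      · intro H y hy
        have := H _ (Submodule.smul_mem_pointwise_smul y f _ hy)
        rwa [smul_eq_mul, mul_left_comm, ← mul_assoc] at this
      · intro H y hy
        obtain ⟨w, hw, rfl⟩ := (Submodule.mem_smul_pointwise_iff_exists _ _ _).1 hy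
        have := H w hw
        rwa [smul_eq_mul, mul_assoc, mul_left_comm] at this
    change (1 / C.lineBundle D' p) • E p = f⁻¹ • ((1 / C.lineBundle D p) • E p)
    rw [h1]
    exact smul_submodule_smul _ _ _) N

/-- The theta divisor `{N ∈ Pic⁰(C) | h⁰(E ⊗ N⁻¹) ≥ 1}` of `E`. -/
def thetaDivisor (E : C.SubSheaf V) : Set C.Pic := {N | N ∈ C.picZero ∧ 1 ≤ h0Twist E N}

end Theta

end SmoothPlaneQuartic

end

open scoped LinearAlgebra.Projectivization Pointwise

noncomputable section

namespace SmoothPlaneQuartic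

open MvPolynomial

theorem aeval_mul_of_isHomogeneous {A : Type*} [CommRing A] [Algebra ℂ A] {n : ℕ} {a : CoordRing}
    (ha : a.IsHomogeneous n) (c : A) (z : Fin 3 → A) :
    aeval (fun j => c * z j) a = c ^ n * aeval z a := by
  rw [aeval_def, aeval_def, eval₂_eq, eval₂_eq, Finset.mul_sum]
  refine Finset.sum_congr rfl fun d hd => ?_
  have hdeg : ∑ i ∈ d.support, d i = n := by
    have := ha (mem_support_iff.1 hd)
    simpa [Finsupp.weight_apply, Finsupp.sum] using this
  simp only [mul_pow, Finset.prod_mul_distrib, Finset.prod_pow_eq_pow_sum, hdeg]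
  ring

/-- The ratio `x_j / x_i` in a homogeneous localization in which `x_i` is invertible. -/
def coordRatio {M : Submonoid CoordRing} {i : Fin 3} (hi : (X i : CoordRing) ∈ M) (j : Fin 3) :
    HomogeneousLocalization coordGrading M :=
  HomogeneousLocalization.mk
    { deg := 1
      num := ⟨X j, isHomogeneous_X ℂ j⟩
      den := ⟨X i, isHomogeneous_X ℂ i⟩
      den_mem := hi }

/-- The fraction `a / b` of two forms of the same degree. -/
def formFrac {M : Submonoid CoordRing} {n : ℕ} {a b : CoordRing} (ha : a.IsHomogeneous n)
    (hb : b.IsHomogeneous n) (hM : b ∈ M) : HomogeneousLocalization coordGrading M :=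
  HomogeneousLocalization.mk ⟨n, ⟨a, ha⟩, ⟨b, hb⟩, hM⟩

theorem exists_eq_formFrac {M : Submonoid CoordRing} (z : HomogeneousLocalization coordGrading M) :
    ∃ (n : ℕ) (a b : CoordRing) (ha : a.IsHomogeneous n) (hb : b.IsHomogeneous n) (hM : b ∈ M),
      z = formFrac ha hb hM := by
  obtain ⟨⟨n, ⟨a, ha⟩, ⟨b, hb⟩, hM⟩, rfl⟩ := HomogeneousLocalization.mk_surjective z
  exact ⟨n, a, b, ha, hb, hM, rfl⟩

theorem val_formFrac {M : Submonoid CoordRing} {n : ℕ} {a b : CoordRing} (ha : a.IsHomogeneous n)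
    (hb : b.IsHomogeneous n) (hM : b ∈ M) :
    (formFrac ha hb hM).val = Localization.mk a ⟨b, hM⟩ := rfl

theorem algebraMap_val {M : Submonoid CoordRing} (c : ℂ) :
    (algebraMap ℂ (HomogeneousLocalization coordGrading M) c).val =
      algebraMap ℂ (Localization M) c := by
  rw [Algebra.algebraMap_eq_smul_one, HomogeneousLocalization.val_smul,
    HomogeneousLocalization.val_one, ← Algebra.algebraMap_eq_smul_one]

/-- The inclusion of a homogeneous localization into the localization. -/
def valHom (M : Submonoid CoordRing) :
    HomogeneousLocalization coordGrading M →ₐ[ℂ] Localization M where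
  toFun := HomogeneousLocalization.val
  map_one' := HomogeneousLocalization.val_one
  map_mul' := HomogeneousLocalization.val_mul
  map_zero' := HomogeneousLocalization.val_zero
  map_add' := HomogeneousLocalization.val_add
  commutes' := algebraMap_val

theorem aeval_coordRatio {M : Submonoid CoordRing} {i : Fin 3} (hi : (X i : CoordRing) ∈ M)
    {n : ℕ} {a : CoordRing} (ha : a.IsHomogeneous n) (hX : (X i ^ n : CoordRing).IsHomogeneous n) :
    aeval (coordRatio hi) a = formFrac ha hX (M.pow_mem hi n) := by
  apply HomogeneousLocalization.val_injective
  change valHom M _ = _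
  rw [comp_aeval_apply, val_formFrac]
  have h1 : (fun j => valHom M (coordRatio hi j)) =
      fun j => (Localization.mk 1 ⟨X i, hi⟩ : Localization M) *
        algebraMap CoordRing (Localization M) (X j) := by
    funext j
    change Localization.mk _ _ = _
    rw [← Localization.mk_one_eq_algebraMap, Localization.mk_mul]
    simp
  rw [h1, aeval_mul_of_isHomogeneous ha, Localization.mk_pow, one_pow]
  have h2 : aeval (fun j => algebraMap CoordRing (Localization M) (X j)) a =
      algebraMap CoordRing (Localization M) a := by
    have := aeval_algebraMap_apply (R := ℂ) (Localization M) (X : Fin 3 → CoordRing) a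
    rw [aeval_X_left_apply] at this
    exact this
  rw [h2, ← Localization.mk_one_eq_algebraMap, Localization.mk_mul]
  congr 1
  · simp
  · ext; simp

theorem formFrac_mul_aeval {M : Submonoid CoordRing} {i : Fin 3} (hi : (X i : CoordRing) ∈ M)
    {n : ℕ} {a b : CoordRing} (ha : a.IsHomogeneous n) (hb : b.IsHomogeneous n) (hM : b ∈ M) :
    formFrac ha hb hM * aeval (coordRatio hi) b = aeval (coordRatio hi) a := by
  have hX : (X i ^ n : CoordRing).IsHomogeneous n := isHomogeneous_X_pow i n
  rw [aeval_coordRatio hi hb hX, aeval_coordRatio hi ha hX]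
  apply HomogeneousLocalization.val_injective
  rw [HomogeneousLocalization.val_mul, val_formFrac, val_formFrac, val_formFrac,
    Localization.mk_mul, Localization.mk_eq_mk_iff, Localization.r_iff_exists]
  exact ⟨1, by simp; ring⟩

variable (C : SmoothPlaneQuartic)

/-- Evaluation of polynomials at the generic point `(1, x₁/x₀, x₂/x₀)` of `C`. -/
def ev : CoordRing →ₐ[ℂ] C.FunctionField := aeval C.coordQuotient

theorem ev_X (j : Fin 3) : C.ev (X j) = C.coordQuotient j := aeval_X _ _

theorem X_mem_generic (j : Fin 3) : (X j : CoordRing) ∈ (Ideal.span {C.poly}).primeCompl :=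
  C.coord_notMem j

/-- The residue map `𝒪_{ℙ²,C} → K` as a map of `ℂ`-algebras. -/
def residueHom : C.PlaneGenericRing →ₐ[ℂ] C.FunctionField where
  __ := IsLocalRing.residue C.PlaneGenericRing
  commutes' _ := rfl

theorem residueHom_surjective : Function.Surjective C.residueHom := IsLocalRing.residue_surjective

theorem residueHom_aeval (a : CoordRing) :
    C.residueHom (aeval (coordRatio (C.X_mem_generic 0)) a) = C.ev a := by
  rw [comp_aeval_apply]
  rfl

theorem formFrac_mem_maximalIdeal {P : Ideal CoordRing} [P.IsPrime] {n : ℕ} {a b : CoordRing}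
    (ha : a.IsHomogeneous n) (hb : b.IsHomogeneous n) (hM : b ∈ P.primeCompl) :
    formFrac ha hb hM ∈ IsLocalRing.maximalIdeal
      (HomogeneousLocalization.AtPrime coordGrading P) ↔ a ∈ P := by
  rw [IsLocalRing.mem_maximalIdeal, mem_nonunits_iff,
    ← HomogeneousLocalization.isUnit_iff_isUnit_val, val_formFrac, ← mem_nonunits_iff,
    ← IsLocalRing.mem_maximalIdeal]
  change Localization.mk a ⟨b, hM⟩ ∈ IsLocalRing.maximalIdeal (Localization.AtPrime P) ↔ _
  rw [Localization.mk_eq_mk', IsLocalization.AtPrime.mk'_mem_maximal_iff (Localization.AtPrime P) P]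

theorem ev_eq_zero_iff {n : ℕ} {a : CoordRing} (ha : a.IsHomogeneous n) :
    C.ev a = 0 ↔ C.poly ∣ a := by
  rw [← C.residueHom_aeval, aeval_coordRatio _ ha (isHomogeneous_X_pow 0 n),
    ← Ideal.mem_span_singleton]
  change IsLocalRing.residue _ _ = 0 ↔ _
  rw [IsLocalRing.residue_eq_zero_iff, formFrac_mem_maximalIdeal]

theorem residueHom_formFrac {n : ℕ} {a b : CoordRing} (ha : a.IsHomogeneous n)
    (hb : b.IsHomogeneous n) (hM : b ∈ (Ideal.span {C.poly}).primeCompl) :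
    C.residueHom (formFrac ha hb hM) = C.ev a / C.ev b := by
  have hb0 : C.ev b ≠ 0 := fun h => hM (Ideal.mem_span_singleton.2 ((C.ev_eq_zero_iff hb).1 h))
  rw [eq_div_iff hb0, ← C.residueHom_aeval, ← C.residueHom_aeval, ← map_mul, formFrac_mul_aeval]

theorem exists_eq_ev_div_ev (f : C.FunctionField) : ∃ (n : ℕ) (a b : CoordRing),
    a.IsHomogeneous n ∧ b.IsHomogeneous n ∧ C.ev b ≠ 0 ∧ f = C.ev a / C.ev b := by
  obtain ⟨z, rfl⟩ := C.residueHom_surjective f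
  obtain ⟨n, a, b, ha, hb, hM, rfl⟩ := exists_eq_formFrac z
  exact ⟨n, a, b, ha, hb,
    fun h => hM (Ideal.mem_span_singleton.2 ((C.ev_eq_zero_iff hb).1 h)),
    C.residueHom_formFrac ha hb hM⟩

variable {C}

theorem ev_ne_zero_of_eval_ne_zero (p : C.Point) {n : ℕ} {b : CoordRing} (hb : b.IsHomogeneous n)
    (h : eval p.1.rep b ≠ 0) : C.ev b ≠ 0 := by
  intro h0
  obtain ⟨c, rfl⟩ := (C.ev_eq_zero_iff hb).1 h0
  exact h (by rw [map_mul, p.2, zero_mul])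

theorem restrictGerm_formFrac (p : C.Point) {n : ℕ} {a b : CoordRing} (ha : a.IsHomogeneous n)
    (hb : b.IsHomogeneous n)
    (hM : b ∈ (RingHom.ker (eval p.1.rep : CoordRing →+* ℂ)).primeCompl) :
    C.restrictGerm p (formFrac ha hb hM) = C.ev a / C.ev b := 
  C.residueHom_formFrac ha hb _

theorem mem_localRing_iff (p : C.Point) (f : C.FunctionField) : f ∈ C.localRing p ↔
    ∃ (n : ℕ) (a b : CoordRing), a.IsHomogeneous n ∧ b.IsHomogeneous n ∧ eval p.1.rep b ≠ 0 ∧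
      f = C.ev a / C.ev b := by
  constructor
  · rintro ⟨z, rfl⟩
    obtain ⟨n, a, b, ha, hb, hM, rfl⟩ := exists_eq_formFrac z
    exact ⟨n, a, b, ha, hb, hM, restrictGerm_formFrac p ha hb hM⟩
  · rintro ⟨n, a, b, ha, hb, hM, rfl⟩
    exact ⟨formFrac ha hb hM, restrictGerm_formFrac p ha hb hM⟩

theorem eval_mul_eq_of_div_eq (p : C.Point) {m n : ℕ} {a b a' b' : CoordRing}
    (ha : a.IsHomogeneous n) (hb : b.IsHomogeneous n) (ha' : a'.IsHomogeneous m)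
    (hb' : b'.IsHomogeneous m) (h0 : eval p.1.rep b ≠ 0) (h0' : eval p.1.rep b' ≠ 0)
    (h : C.ev a / C.ev b = C.ev a' / C.ev b') :
    eval p.1.rep a * eval p.1.rep b' = eval p.1.rep a' * eval p.1.rep b := by
  rw [div_eq_div_iff (ev_ne_zero_of_eval_ne_zero p hb h0) (ev_ne_zero_of_eval_ne_zero p hb' h0'),
    ← sub_eq_zero, ← map_mul, ← map_mul, ← map_sub,
    C.ev_eq_zero_iff ((ha.mul hb').sub (add_comm m n ▸ ha'.mul hb))] at h
  obtain ⟨c, hc⟩ := h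
  have := congrArg (eval p.1.rep) hc
  rw [map_mul, p.2, zero_mul, map_sub, map_mul, map_mul, sub_eq_zero] at this
  exact this

theorem mem_maxIdeal_iff (p : C.Point) (f : C.FunctionField) : f ∈ C.maxIdeal p ↔
    ∃ (n : ℕ) (a b : CoordRing), a.IsHomogeneous n ∧ b.IsHomogeneous n ∧ eval p.1.rep b ≠ 0 ∧
      eval p.1.rep a = 0 ∧ f = C.ev a / C.ev b := by
  constructor
  · intro hf
    obtain ⟨z, hz, rfl⟩ : ∃ z ∈ IsLocalRing.maximalIdeal (C.PlaneLocalRing p),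
        C.restrictGerm p z = f := by
      induction hf using Submodule.span_induction with
      | mem x hx => exact hx
      | zero => exact ⟨0, zero_mem _, map_zero _⟩
      | add x y _ _ hx hy =>
        obtain ⟨z, hz, rfl⟩ := hx
        obtain ⟨w, hw, rfl⟩ := hy
        exact ⟨z + w, add_mem hz hw, map_add _ _ _⟩
      | smul c x _ hx =>
        obtain ⟨z, hz, rfl⟩ := hx
        obtain ⟨_, ⟨w, rfl⟩⟩ := c
        exact ⟨w * z, Ideal.mul_mem_left _ _ hz, map_mul _ _ _⟩
    obtain ⟨n, a, b, ha, hb, hM, rfl⟩ := exists_eq_formFrac z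
    exact ⟨n, a, b, ha, hb, hM, (formFrac_mem_maximalIdeal ha hb hM).1 hz,
      restrictGerm_formFrac p ha hb hM⟩
  · rintro ⟨n, a, b, ha, hb, hM, h0, rfl⟩
    exact Submodule.subset_span ⟨formFrac ha hb hM,
      (formFrac_mem_maximalIdeal (P := RingHom.ker (eval p.1.rep)) ha hb hM).2 h0,
      restrictGerm_formFrac p ha hb hM⟩

/-! ### Linear forms -/

/-- The linear form with given coefficients. -/
def linForm (u : Fin 3 → ℂ) : CoordRing := ∑ j, u j • X j

theorem linForm_isHomogeneous (u : Fin 3 → ℂ) : (linForm u).IsHomogeneous 1 :=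
  IsHomogeneous.sum _ _ _ fun j _ =>
    (homogeneousSubmodule (Fin 3) ℂ 1).smul_mem (u j) (isHomogeneous_X ℂ j)

theorem eval_linForm (u v : Fin 3 → ℂ) : eval v (linForm u) = u ⬝ᵥ v := by
  simp [linForm, dotProduct, smul_eval]

theorem linForm_add (u w : Fin 3 → ℂ) : linForm (u + w) = linForm u + linForm w := by
  simp [linForm, add_smul, Finset.sum_add_distrib]

theorem linForm_smul (c : ℂ) (u : Fin 3 → ℂ) : linForm (c • u) = c • linForm u := by
  simp [linForm, mul_smul, Finset.smul_sum]

theorem linForm_single (j : Fin 3) : linForm (Pi.single j 1) = X j := by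
  simp [linForm, Pi.single_apply, ite_smul]

theorem pderiv_linForm (u : Fin 3 → ℂ) (j : Fin 3) :
    pderiv j (linForm u) = MvPolynomial.C (u j) := by
  simp [linForm, pderiv_X, Pi.single_apply, smul_eq_C_mul]

theorem eval_smul_of_isHomogeneous {n : ℕ} {a : CoordRing} (ha : a.IsHomogeneous n) (c : ℂ)
    (v : Fin 3 → ℂ) : eval (c • v) a = c ^ n * eval v a :=
  aeval_mul_of_isHomogeneous ha c v

theorem linForm_eq_zero_iff {u : Fin 3 → ℂ} : linForm u = 0 ↔ u = 0 := by
  refine ⟨fun h => funext fun j => ?_, fun h => by simp [h, linForm]⟩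
  have := pderiv_linForm u j
  rw [h, map_zero] at this
  simpa using this.symm

theorem mem_span_of_eval_eq_zero {n : ℕ} {a : CoordRing} (ha : a.IsHomogeneous n)
    {v : Fin 3 → ℂ} {i : Fin 3} (hi : v i ≠ 0) (h : eval v a = 0) :
    a ∈ Ideal.span (Set.range fun j => linForm (v i • Pi.single j 1 - v j • Pi.single i 1)) := by
  set J := Ideal.span (Set.range fun j => linForm (v i • Pi.single j 1 - v j • Pi.single i 1))
    with hJ
  rw [← Ideal.Quotient.eq_zero_iff_mem]
  have h1 : ∀ j, Ideal.Quotient.mk J (X j) =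
      ((v i)⁻¹ • Ideal.Quotient.mk J (X i)) * algebraMap ℂ _ (v j) := by
    intro j
    have h2 : Ideal.Quotient.mk J (linForm (v i • Pi.single j 1 - v j • Pi.single i 1)) = 0 :=
      Ideal.Quotient.eq_zero_iff_mem.2 (Ideal.subset_span ⟨j, rfl⟩)
    rw [sub_eq_add_neg, ← neg_smul, linForm_add, linForm_smul, linForm_smul, linForm_single,
      linForm_single, neg_smul, ← sub_eq_add_neg, map_sub, sub_eq_zero] at h2
    change v i • Ideal.Quotient.mk J (X j) = v j • Ideal.Quotient.mk J (X i) at h2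
    rw [mul_comm, ← Algebra.smul_def, smul_comm, ← h2, inv_smul_smul₀ hi]
  have h3 := aeval_mul_of_isHomogeneous ha ((v i)⁻¹ • Ideal.Quotient.mk J (X i))
    (fun j => algebraMap ℂ (CoordRing ⧸ J) (v j))
  have h4 : aeval (fun j => algebraMap ℂ (CoordRing ⧸ J) (v j)) a = algebraMap ℂ _ (eval v a) := by
    have := aeval_algebraMap_apply (R := ℂ) (A := ℂ) (CoordRing ⧸ J) v a
    exact this
  have h5 : Ideal.Quotient.mk J a = aeval (fun j => Ideal.Quotient.mk J (X j)) a := by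
    have := comp_aeval_apply (X : Fin 3 → CoordRing) (Ideal.Quotient.mkₐ ℂ J) a
    rw [aeval_X_left_apply] at this
    exact this
  rw [h5, funext h1, h3, h4, h, map_zero, mul_zero]

theorem exists_eq_add_of_dotProduct_eq_zero {u u' v w : Fin 3 → ℂ} (hv : v ≠ 0)
    (hu' : u' ≠ 0) (h : ∀ c : ℂ, u ≠ c • u')
    (h1 : u ⬝ᵥ v = 0) (h2 : u' ⬝ᵥ v = 0) (h3 : w ⬝ᵥ v = 0) :
    ∃ α β : ℂ, w = α • u + β • u' := by
  by_contra! hne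
  have hli : LinearIndependent ℂ ![w, u, u'] := by
    refine linearIndependent_finCons.2 ⟨?_, ?_⟩
    · refine linearIndependent_finCons.2 ⟨?_, ?_⟩
      · refine linearIndependent_finCons.2 ⟨linearIndependent_empty_type, ?_⟩
        simpa using hu'
      · intro hmem
        have : u ∈ Submodule.span ℂ {u'} := by simpa using hmem
        obtain ⟨c, hc⟩ := Submodule.mem_span_singleton.1 this
        exact h c hc.symm
    · intro hmem
      have : w ∈ Submodule.span ℂ {u, u'} := by
        simpa [Set.pair_comm] using hmem
      obtain ⟨α, β, hc⟩ := Submodule.mem_span_pair.1 this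
      exact hne α β hc.symm
  have htop := hli.span_eq_top_of_card_eq_finrank' (by simp)
  apply hv
  have hall : ∀ z : Fin 3 → ℂ, z ⬝ᵥ v = 0 := by
    intro z
    have hz : z ∈ Submodule.span ℂ (Set.range ![w, u, u']) := htop ▸ Submodule.mem_top
    induction hz using Submodule.span_induction with
    | mem x hx =>
      obtain ⟨k, rfl⟩ := hx
      fin_cases k <;> assumption
    | zero => simp
    | add x y _ _ hx hy => rw [add_dotProduct, hx, hy, add_zero]
    | smul c x _ hx => rw [smul_dotProduct, hx, smul_zero]
  funext j
  simpa using hall (Pi.single j 1)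

/-! ### The local rings -/

theorem ev_ne_zero_of_lt {n : ℕ} {a : CoordRing} (ha : a.IsHomogeneous n) (h0 : a ≠ 0)
    (hn : n < 4) : C.ev a ≠ 0 := by
  intro h
  have h1 := totalDegree_le_of_dvd_of_isDomain ((C.ev_eq_zero_iff ha).1 h) h0
  rw [C.isHomogeneous.totalDegree C.irreducible.ne_zero, ha.totalDegree h0] at h1
  omega

theorem coordQuotient_ne_zero (j : Fin 3) : C.coordQuotient j ≠ 0 := by
  rw [← C.ev_X]
  exact ev_ne_zero_of_lt (isHomogeneous_X ℂ j) (X_ne_zero j) (by norm_num)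

theorem coordQuotient_zero : C.coordQuotient 0 = 1 := by
  have h := C.residueHom_formFrac (isHomogeneous_X ℂ 0) (isHomogeneous_X ℂ 0) (C.X_mem_generic 0)
  rw [div_self (by rw [C.ev_X]; exact coordQuotient_ne_zero 0)] at h
  exact h

/-- An index of a coordinate that does not vanish at `p`. -/
def chart (p : C.Point) : Fin 3 := (Function.ne_iff.1 p.1.rep_nonzero).choose

theorem rep_chart_ne_zero (p : C.Point) : p.1.rep (chart p) ≠ 0 :=
  (Function.ne_iff.1 p.1.rep_nonzero).choose_spec

theorem maxIdeal_le_localRing (p : C.Point) {f : C.FunctionField} (hf : f ∈ C.maxIdeal p) :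
    f ∈ C.localRing p := by
  obtain ⟨n, a, b, ha, hb, h, -, rfl⟩ := (mem_maxIdeal_iff p f).1 hf
  exact (mem_localRing_iff p _).2 ⟨n, a, b, ha, hb, h, rfl⟩

theorem ev_div_mem_maxIdeal_iff (p : C.Point) {n : ℕ} {a b : CoordRing} (ha : a.IsHomogeneous n)
    (hb : b.IsHomogeneous n) (h : eval p.1.rep b ≠ 0) :
    C.ev a / C.ev b ∈ C.maxIdeal p ↔ eval p.1.rep a = 0 := by
  rw [mem_maxIdeal_iff]
  constructor
  · rintro ⟨m, a', b', ha', hb', h', h0, he⟩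
    have := eval_mul_eq_of_div_eq p ha hb ha' hb' h h' he
    rw [h0, zero_mul] at this
    exact (mul_eq_zero.1 this).resolve_right h'
  · intro h0
    exact ⟨n, a, b, ha, hb, h, h0, rfl⟩

theorem exists_sub_mem_maxIdeal (p : C.Point) {f : C.FunctionField} (hf : f ∈ C.localRing p) :
    ∃ c : ℂ, f - algebraMap ℂ _ c ∈ C.maxIdeal p := by
  obtain ⟨n, a, b, ha, hb, h, rfl⟩ := (mem_localRing_iff p f).1 hf
  refine ⟨eval p.1.rep a / eval p.1.rep b, ?_⟩
  set c := eval p.1.rep a / eval p.1.rep b with hc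
  have hcb : (c • b).IsHomogeneous n := (homogeneousSubmodule (Fin 3) ℂ n).smul_mem c hb
  have : C.ev a / C.ev b - algebraMap ℂ _ c = C.ev (a - c • b) / C.ev b := by
    rw [map_sub, map_smul, Algebra.smul_def, sub_div,
      mul_div_cancel_right₀ _ (ev_ne_zero_of_eval_ne_zero p hb h)]
  rw [this, ev_div_mem_maxIdeal_iff p (ha.sub hcb) hb h, map_sub, smul_eval, hc,
    div_mul_cancel₀ _ h, sub_self]

theorem inv_mem_localRing (p : C.Point) {f : C.FunctionField} (hf : f ∈ C.localRing p)
    (hf' : f ∉ C.maxIdeal p) : f⁻¹ ∈ C.localRing p := by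
  obtain ⟨n, a, b, ha, hb, h, rfl⟩ := (mem_localRing_iff p f).1 hf
  rw [ev_div_mem_maxIdeal_iff p ha hb h] at hf'
  exact (mem_localRing_iff p _).2 ⟨n, b, a, hb, ha, hf', inv_div _ _⟩

theorem mul_mem_maxIdeal (p : C.Point) {f g : C.FunctionField} (hf : f ∈ C.localRing p)
    (hg : g ∈ C.maxIdeal p) : f * g ∈ C.maxIdeal p :=
  (C.maxIdeal p).smul_mem ⟨f, hf⟩ hg

theorem one_notMem_maxIdeal (p : C.Point) : (1 : C.FunctionField) ∉ C.maxIdeal p := by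
  have h := ev_div_mem_maxIdeal_iff p (C := C) (isHomogeneous_one (Fin 3) ℂ)
    (isHomogeneous_one (Fin 3) ℂ) (by simp)
  simpa using h

variable (C) in
/-- Evaluation of polynomials at the generic point of `C`, normalized so that `x_i = 1`. -/
def affineEval (i : Fin 3) : CoordRing →ₐ[ℂ] C.FunctionField :=
  aeval fun j => C.coordQuotient j / C.coordQuotient i

theorem affineEval_of_isHomogeneous (i : Fin 3) {n : ℕ} {a : CoordRing} (ha : a.IsHomogeneous n) :
    C.affineEval i a = C.ev a / C.coordQuotient i ^ n := by
  have := aeval_mul_of_isHomogeneous ha (C.coordQuotient i)⁻¹ C.coordQuotient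
  rw [inv_pow, mul_comm, ← div_eq_mul_inv] at this
  change _ = aeval C.coordQuotient a / _
  rw [← this, affineEval]
  congr 2
  funext j
  rw [div_eq_inv_mul]

theorem exists_homogenization (i : Fin 3) {w : Fin 3 → ℂ} (hw : w i = 1) (a : CoordRing) :
    ∃ (n : ℕ) (b : CoordRing), b.IsHomogeneous n ∧ C.affineEval i a = C.ev b / C.ev (X i ^ n) ∧
      eval w b = eval w a := by
  have hi : C.ev (X i) ≠ 0 := by rw [C.ev_X]; exact coordQuotient_ne_zero i
  induction a using MvPolynomial.induction_on with
  | C c =>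
    refine ⟨0, MvPolynomial.C c, isHomogeneous_C _ _, ?_, rfl⟩
    have : C.ev (MvPolynomial.C c) = algebraMap ℂ _ c := aeval_C _ _
    have h2 : C.affineEval i (MvPolynomial.C c) = algebraMap ℂ _ c := aeval_C _ _
    rw [this, h2, pow_zero, map_one, div_one]
  | add a a' h h' =>
    obtain ⟨n, b, hb, he, hv⟩ := h
    obtain ⟨n', b', hb', he', hv'⟩ := h'
    refine ⟨n + n', b * X i ^ n' + X i ^ n * b', (hb.mul (isHomogeneous_X_pow i n')).add
      ((isHomogeneous_X_pow i n).mul hb'), ?_, ?_⟩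
    · rw [map_add, he, he']
      simp only [map_add, map_mul, map_pow]
      field_simp
      ring
    · simp [hw, hv, hv']
  | mul_X a j h =>
    obtain ⟨n, b, hb, he, hv⟩ := h
    refine ⟨n + 1, b * X j, hb.mul (isHomogeneous_X ℂ j), ?_, ?_⟩
    · have h2 : C.affineEval i (X j) = C.ev (X j) / C.ev (X i) := by
        rw [C.ev_X, C.ev_X]; exact aeval_X _ _
      rw [map_mul, he, h2]
      simp only [map_mul, map_pow]
      field_simp
      ring
    · simp [hv]

/-- The coordinate vector of `p` normalized in its chart. -/
def normRep (p : C.Point) : Fin 3 → ℂ := (p.1.rep (chart p))⁻¹ • p.1.rep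

theorem normRep_chart (p : C.Point) : normRep p (chart p) = 1 := by
  simp [normRep, rep_chart_ne_zero p]

theorem eval_normRep (p : C.Point) {n : ℕ} {a : CoordRing} (ha : a.IsHomogeneous n) :
    eval (normRep p) a = ((p.1.rep (chart p))⁻¹) ^ n * eval p.1.rep a :=
  eval_smul_of_isHomogeneous ha _ _

theorem eval_normRep_eq_zero_iff (p : C.Point) {n : ℕ} {a : CoordRing} (ha : a.IsHomogeneous n) :
    eval (normRep p) a = 0 ↔ eval p.1.rep a = 0 := by
  simp [eval_normRep p ha, rep_chart_ne_zero p]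

theorem eval_X_pow_chart_ne_zero (p : C.Point) (n : ℕ) :
    eval p.1.rep (X (chart p) ^ n : CoordRing) ≠ 0 := by
  simp [rep_chart_ne_zero p]

theorem affineEval_mem_localRing (p : C.Point) (a : CoordRing) :
    C.affineEval (chart p) a ∈ C.localRing p := by
  obtain ⟨n, b, hb, he, -⟩ := exists_homogenization (C := C) (chart p) (normRep_chart p) a
  exact (mem_localRing_iff p _).2 ⟨n, b, _, hb, isHomogeneous_X_pow _ n,
    eval_X_pow_chart_ne_zero p n, he⟩

theorem affineEval_mem_maxIdeal_iff (p : C.Point) (a : CoordRing) :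
    C.affineEval (chart p) a ∈ C.maxIdeal p ↔ eval (normRep p) a = 0 := by
  obtain ⟨n, b, hb, he, hv⟩ := exists_homogenization (C := C) (chart p) (normRep_chart p) a
  rw [he, ev_div_mem_maxIdeal_iff p hb (isHomogeneous_X_pow _ n) (eval_X_pow_chart_ne_zero p n),
    ← hv, eval_normRep_eq_zero_iff p hb]

theorem ev_div_ev_eq_affineEval (i : Fin 3) {n : ℕ} {a b : CoordRing} (ha : a.IsHomogeneous n)
    (hb : b.IsHomogeneous n) : C.ev a / C.ev b = C.affineEval i a / C.affineEval i b := by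
  rw [affineEval_of_isHomogeneous i ha, affineEval_of_isHomogeneous i hb,
    div_div_div_cancel_right₀ (pow_ne_zero _ (coordQuotient_ne_zero i))]

/-- The map `ℂ[x₀, x₁, x₂] → 𝒪_{C,p}` normalized in the chart of `p`. -/
def affineEvalLocal (p : C.Point) : CoordRing →ₐ[ℂ] C.localRing p :=
  (C.affineEval (chart p)).codRestrict (C.localRing p) (affineEval_mem_localRing p)

theorem affineEval_inv_mem (p : C.Point) {b : CoordRing} (h : eval (normRep p) b ≠ 0) :
    (C.affineEval (chart p) b)⁻¹ ∈ C.localRing p :=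
  inv_mem_localRing p (affineEval_mem_localRing p b) fun h' =>
    h ((affineEval_mem_maxIdeal_iff p b).1 h')

instance isNoetherianRing_localRing (p : C.Point) : IsNoetherianRing (C.localRing p) := by
  rw [isNoetherianRing_iff_ideal_fg]
  intro J
  have hJ : J = (J.comap (affineEvalLocal p)).map (affineEvalLocal p) := by
    refine le_antisymm (fun f hf => ?_) Ideal.map_comap_le
    obtain ⟨n, a, b, ha, hb, h, hfe⟩ := (mem_localRing_iff p f.1).1 f.2
    have h' : eval (normRep p) b ≠ 0 := fun h0 => h ((eval_normRep_eq_zero_iff p hb).1 h0)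
    have hb0 : C.affineEval (chart p) b ≠ 0 := by
      intro h0
      apply h'
      rw [← affineEval_mem_maxIdeal_iff, h0]
      exact zero_mem _
    rw [ev_div_ev_eq_affineEval (chart p) ha hb] at hfe
    have h1 : affineEvalLocal p a = affineEvalLocal p b * f := by
      apply Subtype.ext
      change C.affineEval (chart p) a = C.affineEval (chart p) b * f.1
      rw [hfe, mul_div_cancel₀ _ hb0]
    have h2 : f = ⟨_, affineEval_inv_mem p h'⟩ * affineEvalLocal p a := by
      apply Subtype.ext
      change f.1 = (C.affineEval (chart p) b)⁻¹ * C.affineEval (chart p) a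
      rw [hfe, div_eq_inv_mul]
    rw [h2]
    refine Ideal.mul_mem_left _ _ (Ideal.mem_map_of_mem _ ?_)
    rw [Ideal.mem_comap, h1]
    exact Ideal.mul_mem_left _ _ hf
  rw [hJ]
  exact Ideal.FG.map (IsNoetherian.noetherian _) _

/-- The gradient of the equation of `C` at `p`: the coefficients of the tangent line. -/
def grad (p : C.Point) : Fin 3 → ℂ := fun j => eval p.1.rep (pderiv j C.poly)

theorem grad_ne_zero (p : C.Point) : grad p ≠ 0 := by
  obtain ⟨i, hi⟩ := C.smooth p.1.rep p.1.rep_nonzero p.2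
  exact fun h => hi (congrFun h i)

theorem grad_dotProduct_rep (p : C.Point) : grad p ⬝ᵥ p.1.rep = 0 := by
  have h := congrArg (eval p.1.rep) C.isHomogeneous.sum_X_mul_pderiv
  rw [map_nsmul, p.2, nsmul_zero, map_sum] at h
  simpa [dotProduct, grad, mul_comm] using h

/-- The linear form `u` vanishes at `p` and is not tangent to `C` there. -/
def IsTransverse (p : C.Point) (u : Fin 3 → ℂ) : Prop :=
  u ⬝ᵥ p.1.rep = 0 ∧ ∀ c : ℂ, u ≠ c • grad p

theorem mem_span_pair_of_eval_eq_zero (p : C.Point) {u : Fin 3 → ℂ} (hu : IsTransverse p u) {n : ℕ}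
    {a : CoordRing} (ha : a.IsHomogeneous n) (h : eval p.1.rep a = 0) :
    a ∈ Ideal.span {linForm u, linForm (grad p)} := by
  refine Ideal.span_le.2 ?_ (mem_span_of_eval_eq_zero ha (rep_chart_ne_zero p) h)
  rintro _ ⟨j, rfl⟩
  obtain ⟨α, β, h⟩ := exists_eq_add_of_dotProduct_eq_zero p.1.rep_nonzero (grad_ne_zero p) hu.2
    hu.1 (grad_dotProduct_rep p)
    (w := p.1.rep (chart p) • Pi.single j 1 - p.1.rep j • Pi.single (chart p) 1)
    (by simp [sub_dotProduct, mul_comm])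
  simp only [h, linForm_add, linForm_smul, smul_eq_C_mul]
  exact Ideal.mem_span_pair.2 ⟨_, _, rfl⟩

theorem exists_eq_affineEval_linForm_mul (p : C.Point) {u : Fin 3 → ℂ} (hu : IsTransverse p u)
    {f : C.FunctionField} (hf : f ∈ C.maxIdeal p) :
    ∃ g ∈ C.localRing p, f = C.affineEval (chart p) (linForm u) * g := by
  obtain ⟨Q, P, hPQ⟩ := Ideal.mem_span_pair.1
    (mem_span_pair_of_eval_eq_zero p hu C.isHomogeneous p.2)
  have hder : ∀ j, eval (normRep p) Q * u j + eval (normRep p) P * grad p j =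
      ((p.1.rep (chart p))⁻¹) ^ 3 * grad p j := by
    intro j
    have h1 := congrArg (fun q => eval (normRep p) (pderiv j q)) hPQ
    simp only [map_add, pderiv_mul, map_mul, pderiv_linForm, eval_C] at h1
    rw [(eval_normRep_eq_zero_iff p (linForm_isHomogeneous _)).2 (by rw [eval_linForm, hu.1]),
      (eval_normRep_eq_zero_iff p (linForm_isHomogeneous _)).2
        (by rw [eval_linForm, grad_dotProduct_rep]), eval_normRep p C.isHomogeneous.pderiv] at h1
    simpa [grad] using h1
  have hQ : eval (normRep p) Q = 0 := by
    by_contra hQ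
    refine hu.2 ((eval (normRep p) Q)⁻¹ *
      (((p.1.rep (chart p))⁻¹) ^ 3 - eval (normRep p) P)) (funext fun j => ?_)
    have := hder j
    simp only [Pi.smul_apply, smul_eq_mul]
    rw [mul_assoc, eq_inv_mul_iff_mul_eq₀ hQ]
    linear_combination this
  have hP : eval (normRep p) P ≠ 0 := by
    intro hP
    obtain ⟨j, hj⟩ := Function.ne_iff.1 (grad_ne_zero p)
    have := hder j
    rw [hQ, hP, zero_mul, zero_mul, add_zero] at this
    exact mul_ne_zero (pow_ne_zero _ (inv_ne_zero (rep_chart_ne_zero p))) hj this.symm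
  have hF : C.affineEval (chart p) C.poly = 0 := by
    rw [affineEval_of_isHomogeneous _ C.isHomogeneous,
      (C.ev_eq_zero_iff C.isHomogeneous).2 dvd_rfl, zero_div]
  have hPinv := affineEval_inv_mem p hP
  have hP0 : C.affineEval (chart p) P ≠ 0 := by
    intro h0
    apply hP
    rw [← affineEval_mem_maxIdeal_iff, h0]
    exact zero_mem _
  have hμ : C.affineEval (chart p) (linForm (grad p)) = C.affineEval (chart p) (linForm u) *
      -(C.affineEval (chart p) Q * (C.affineEval (chart p) P)⁻¹) := by
    have hF := (congrArg (C.affineEval (chart p)) hPQ).trans hF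
    rw [map_add, map_mul, map_mul] at hF
    field_simp
    linear_combination hF
  obtain ⟨n, a, b, ha, hb, h, h0, rfl⟩ := (mem_maxIdeal_iff p f).1 hf
  obtain ⟨A, B, hAB⟩ := Ideal.mem_span_pair.1 (mem_span_pair_of_eval_eq_zero p hu ha h0)
  refine ⟨(C.affineEval (chart p) A - C.affineEval (chart p) B *
    (C.affineEval (chart p) Q * (C.affineEval (chart p) P)⁻¹)) * (C.affineEval (chart p) b)⁻¹,
    mul_mem (sub_mem (affineEval_mem_localRing p A) (mul_mem (affineEval_mem_localRing p B)
      (mul_mem (affineEval_mem_localRing p Q) hPinv))) (affineEval_inv_mem p ?_), ?_⟩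
  · exact fun h0 => h ((eval_normRep_eq_zero_iff p hb).1 h0)
  · rw [ev_div_ev_eq_affineEval (chart p) ha hb, ← hAB, map_add, map_mul, map_mul, hμ]
    ring

theorem exists_isTransverse (p : C.Point) : ∃ j, IsTransverse p
    (p.1.rep (chart p) • Pi.single j 1 - p.1.rep j • Pi.single (chart p) 1) := by
  have hdot : ∀ j, (p.1.rep (chart p) • Pi.single j 1 - p.1.rep j • Pi.single (chart p) 1 :
      Fin 3 → ℂ) ⬝ᵥ p.1.rep = 0 := by
    intro j
    simp [sub_dotProduct, mul_comm]
  obtain ⟨j, k, hj, hk, hjk⟩ : ∃ j k : Fin 3, j ≠ chart p ∧ k ≠ chart p ∧ j ≠ k := by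
    generalize chart p = i
    revert i
    decide
  by_contra! h
  have h' : ∀ j, ∃ c : ℂ, (p.1.rep (chart p) • Pi.single j 1 - p.1.rep j •
      Pi.single (chart p) 1 : Fin 3 → ℂ) = c • grad p := by
    intro j
    by_contra! hc
    exact h j ⟨hdot j, hc⟩
  obtain ⟨c, hc⟩ := h' j
  obtain ⟨d, hd⟩ := h' k
  have h1 := congrFun hc j
  have h2 := congrFun hc k
  have h3 := congrFun hd k
  simp [hj, hk, hjk.symm] at h1 h2 h3
  rcases h2 with h2 | h2
  · rw [h2, zero_mul] at h1
    exact rep_chart_ne_zero p h1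
  · rw [h2, mul_zero] at h3
    exact rep_chart_ne_zero p h3

/-! ### The order of vanishing -/

/-- A uniformizer of `C` at `p`. -/
def unif (p : C.Point) : C.FunctionField := C.affineEval (chart p)
  (linForm (p.1.rep (chart p) • Pi.single (exists_isTransverse p).choose 1 -
    p.1.rep (exists_isTransverse p).choose • Pi.single (chart p) 1))

theorem IsTransverse.ne_zero {p : C.Point} {u : Fin 3 → ℂ} (hu : IsTransverse p u) : u ≠ 0 := by
  simpa using hu.2 0

theorem ev_linForm_ne_zero {u : Fin 3 → ℂ} (hu : u ≠ 0) : C.ev (linForm u) ≠ 0 :=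
  ev_ne_zero_of_lt (linForm_isHomogeneous u) (mt linForm_eq_zero_iff.1 hu) (by norm_num)

theorem affineEval_ne_zero (i : Fin 3) {n : ℕ} {a : CoordRing} (ha : a.IsHomogeneous n)
    (h : C.ev a ≠ 0) : C.affineEval i a ≠ 0 := by
  rw [affineEval_of_isHomogeneous i ha]
  exact div_ne_zero h (pow_ne_zero _ (coordQuotient_ne_zero i))

theorem unif_ne_zero (p : C.Point) : unif p ≠ 0 :=
  affineEval_ne_zero _ (linForm_isHomogeneous _)
    (ev_linForm_ne_zero (exists_isTransverse p).choose_spec.ne_zero)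

theorem affineEval_linForm_mem_maxIdeal {p : C.Point} {u : Fin 3 → ℂ} (hu : IsTransverse p u) :
    C.affineEval (chart p) (linForm u) ∈ C.maxIdeal p := by
  rw [affineEval_mem_maxIdeal_iff, eval_normRep_eq_zero_iff p (linForm_isHomogeneous u),
    eval_linForm, hu.1]

theorem unif_mem_maxIdeal (p : C.Point) : unif p ∈ C.maxIdeal p :=
  affineEval_linForm_mem_maxIdeal (exists_isTransverse p).choose_spec

theorem exists_eq_unif_mul (p : C.Point) {f : C.FunctionField} (hf : f ∈ C.maxIdeal p) :
    ∃ g ∈ C.localRing p, f = unif p * g :=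
  exists_eq_affineEval_linForm_mul p (exists_isTransverse p).choose_spec hf

/-- `u` is a unit of `𝒪_{C,p}`. -/
def IsLocalUnit (p : C.Point) (u : C.FunctionField) : Prop :=
  u ∈ C.localRing p ∧ u ∉ C.maxIdeal p

theorem IsLocalUnit.ne_zero {p : C.Point} {u : C.FunctionField} (hu : IsLocalUnit p u) : u ≠ 0 := by
  rintro rfl
  exact hu.2 (zero_mem _)

theorem isLocalUnit_iff (p : C.Point) {u : C.FunctionField} (h0 : u ≠ 0) :
    IsLocalUnit p u ↔ u ∈ C.localRing p ∧ u⁻¹ ∈ C.localRing p := by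
  constructor
  · exact fun h => ⟨h.1, inv_mem_localRing p h.1 h.2⟩
  · refine fun h => ⟨h.1, fun hm => one_notMem_maxIdeal p ?_⟩
    rw [← inv_mul_cancel₀ h0]
    exact mul_mem_maxIdeal p h.2 hm

theorem IsLocalUnit.inv {p : C.Point} {u : C.FunctionField} (hu : IsLocalUnit p u) :
    IsLocalUnit p u⁻¹ := by
  have := (isLocalUnit_iff p hu.ne_zero).1 hu
  rw [isLocalUnit_iff p (inv_ne_zero hu.ne_zero), inv_inv]
  exact this.symm

theorem IsLocalUnit.mul {p : C.Point} {u w : C.FunctionField} (hu : IsLocalUnit p u)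
    (hw : IsLocalUnit p w) : IsLocalUnit p (u * w) := by
  have h1 := (isLocalUnit_iff p hu.ne_zero).1 hu
  have h2 := (isLocalUnit_iff p hw.ne_zero).1 hw
  rw [isLocalUnit_iff p (mul_ne_zero hu.ne_zero hw.ne_zero), mul_inv]
  exact ⟨mul_mem h1.1 h2.1, mul_mem h1.2 h2.2⟩

theorem exists_notMem_unif_pow (p : C.Point) {f : C.FunctionField} (h0 : f ≠ 0) :
    ∃ n : ℕ, ∀ g ∈ C.localRing p, f ≠ unif p ^ n * g := by
  by_contra! h
  have hf : f ∈ C.localRing p := by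
    obtain ⟨g, hg, hfg⟩ := h 0
    rw [hfg, pow_zero, one_mul]
    exact hg
  let t : C.localRing p := ⟨unif p, maxIdeal_le_localRing p (unif_mem_maxIdeal p)⟩
  have htop : Ideal.span {t} ≠ ⊤ := by
    intro htop
    obtain ⟨g, hg⟩ := Ideal.mem_span_singleton'.1 ((Ideal.eq_top_iff_one _).1 htop)
    apply one_notMem_maxIdeal p
    have : g.1 * unif p = 1 := congrArg Subtype.val hg
    rw [← this]
    exact mul_mem_maxIdeal p g.2 (unif_mem_maxIdeal p)
  have hbot := Ideal.iInf_pow_eq_bot_of_isDomain (Ideal.span {t}) htop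
  have hmem : (⟨f, hf⟩ : C.localRing p) ∈ ⨅ n : ℕ, Ideal.span {t} ^ n := by
    rw [Ideal.mem_iInf]
    intro n
    obtain ⟨g, hg, hfg⟩ := h n
    rw [Ideal.span_singleton_pow, Ideal.mem_span_singleton]
    exact ⟨⟨g, hg⟩, Subtype.ext hfg⟩
  rw [hbot, Ideal.mem_bot] at hmem
  exact h0 (congrArg Subtype.val hmem)

theorem exists_eq_isLocalUnit_mul_pow (p : C.Point) {f : C.FunctionField}
    (hf : f ∈ C.localRing p) (h0 : f ≠ 0) :
    ∃ (n : ℕ) (u : C.FunctionField), IsLocalUnit p u ∧ f = u * unif p ^ n := by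
  classical
  have hex := exists_notMem_unif_pow p h0
  have hpos : Nat.find hex ≠ 0 := by
    intro h
    have := Nat.find_spec hex f hf
    rw [h, pow_zero, one_mul] at this
    exact this rfl
  obtain ⟨m, hm⟩ := Nat.exists_eq_succ_of_ne_zero hpos
  have hlt := Nat.find_min hex (m := m) (by omega)
  push Not at hlt
  obtain ⟨g, hg, hfg⟩ := hlt
  refine ⟨m, g, ⟨hg, fun hgm => ?_⟩, by rw [hfg, mul_comm]⟩
  obtain ⟨g', hg', rfl⟩ := exists_eq_unif_mul p hgm
  refine Nat.find_spec hex g' hg' ?_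
  rw [hm, hfg, pow_succ, mul_assoc]

theorem exists_eq_isLocalUnit_mul_zpow (p : C.Point) {f : C.FunctionField} (h0 : f ≠ 0) :
    ∃ (n : ℤ) (u : C.FunctionField), IsLocalUnit p u ∧ f = u * unif p ^ n := by
  obtain ⟨n, a, b, ha, hb, hb0, rfl⟩ := C.exists_eq_ev_div_ev f
  have ha0 : C.ev a ≠ 0 := fun h => h0 (by rw [h, zero_div])
  rw [ev_div_ev_eq_affineEval (chart p) ha hb]
  obtain ⟨k, u, hu, hk⟩ := exists_eq_isLocalUnit_mul_pow p (affineEval_mem_localRing p a)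
    (affineEval_ne_zero _ ha ha0)
  obtain ⟨l, w, hw, hl⟩ := exists_eq_isLocalUnit_mul_pow p (affineEval_mem_localRing p b)
    (affineEval_ne_zero _ hb hb0)
  refine ⟨k - l, u * w⁻¹, hu.mul hw.inv, ?_⟩
  rw [hk, hl, zpow_sub₀ (unif_ne_zero p), zpow_natCast, zpow_natCast]
  field_simp

open Classical in
/-- The order of vanishing of a rational function at a point (`0` for the zero function). -/
def ord (p : C.Point) (f : C.FunctionField) : ℤ :=
  if h : f ≠ 0 then (exists_eq_isLocalUnit_mul_zpow p h).choose else 0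

theorem isLocalUnit_div_zpow_ord (p : C.Point) {f : C.FunctionField} (h : f ≠ 0) :
    IsLocalUnit p (f / unif p ^ ord p f) := by
  obtain ⟨u, hu, hf⟩ := (exists_eq_isLocalUnit_mul_zpow p h).choose_spec
  rw [ord, dif_pos h]
  nth_rewrite 1 [hf]
  rwa [mul_div_cancel_right₀ _ (zpow_ne_zero _ (unif_ne_zero p))]

theorem mul_unif_zpow_mem_localRing_iff (p : C.Point) {u : C.FunctionField} (hu : IsLocalUnit p u)
    (n : ℤ) : u * unif p ^ n ∈ C.localRing p ↔ 0 ≤ n := by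
  have ht := maxIdeal_le_localRing p (unif_mem_maxIdeal p)
  constructor
  · intro h
    by_contra! hn
    obtain ⟨k, hk⟩ := Int.eq_ofNat_of_zero_le (a := -n - 1) (by omega)
    have h1 : unif p * (u⁻¹ * unif p ^ k * (u * unif p ^ n)) = 1 := by
      have : n = -(k : ℤ) - 1 := by omega
      rw [this, zpow_sub₀ (unif_ne_zero p), zpow_neg, zpow_natCast, zpow_one]
      have := hu.ne_zero
      have := unif_ne_zero p
      field_simp
    apply one_notMem_maxIdeal p
    rw [← h1, mul_comm]
    exact mul_mem_maxIdeal p (mul_mem (mul_mem hu.inv.1 (pow_mem ht k)) h) (unif_mem_maxIdeal p)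
  · intro h
    obtain ⟨k, rfl⟩ := Int.eq_ofNat_of_zero_le h
    rw [zpow_natCast]
    exact mul_mem hu.1 (pow_mem ht k)

theorem mul_zpow_mem_localRing_iff (p : C.Point) {f : C.FunctionField} (h : f ≠ 0) (n : ℤ) :
    f * unif p ^ n ∈ C.localRing p ↔ 0 ≤ ord p f + n := by
  rw [← mul_unif_zpow_mem_localRing_iff p (isLocalUnit_div_zpow_ord p h),
    zpow_add₀ (unif_ne_zero p), ← mul_assoc,
    div_mul_cancel₀ _ (zpow_ne_zero _ (unif_ne_zero p))]

theorem ord_eq_of_isLocalUnit (p : C.Point) {f : C.FunctionField} {n : ℤ}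
    (h : IsLocalUnit p (f / unif p ^ n)) : ord p f = n := by
  have h0 : f ≠ 0 := by
    rintro rfl
    exact h.ne_zero (zero_div _)
  have key : ∀ m : ℤ, 0 ≤ ord p f + m ↔ 0 ≤ n + m := by
    intro m
    rw [← mul_zpow_mem_localRing_iff p h0, ← mul_unif_zpow_mem_localRing_iff p h,
      zpow_add₀ (unif_ne_zero p), ← mul_assoc,
      div_mul_cancel₀ _ (zpow_ne_zero _ (unif_ne_zero p))]
  have h1 := (key (-ord p f)).1 (by omega)
  have h2 := (key (-n)).2 (by omega)
  omega

theorem ord_mul (p : C.Point) {f g : C.FunctionField} (hf : f ≠ 0) (hg : g ≠ 0) :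
    ord p (f * g) = ord p f + ord p g := by
  apply ord_eq_of_isLocalUnit
  rw [zpow_add₀ (unif_ne_zero p), mul_div_mul_comm]
  exact (isLocalUnit_div_zpow_ord p hf).mul (isLocalUnit_div_zpow_ord p hg)

theorem ord_inv (p : C.Point) (f : C.FunctionField) : ord p f⁻¹ = -ord p f := by
  by_cases h : f = 0
  · simp [h, ord]
  apply ord_eq_of_isLocalUnit
  rw [zpow_neg, div_inv_eq_mul, ← inv_inv (_ * _), mul_inv, inv_inv, ← div_eq_mul_inv]
  exact (isLocalUnit_div_zpow_ord p h).inv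

theorem ord_one (p : C.Point) : ord p (1 : C.FunctionField) = 0 := by
  have := ord_mul p (one_ne_zero (α := C.FunctionField)) one_ne_zero
  rw [mul_one] at this
  omega

theorem ord_div (p : C.Point) {f g : C.FunctionField} (hf : f ≠ 0) (hg : g ≠ 0) :
    ord p (f / g) = ord p f - ord p g := by
  rw [div_eq_mul_inv, ord_mul p hf (inv_ne_zero hg), ord_inv, sub_eq_add_neg]

theorem ord_pow (p : C.Point) {f : C.FunctionField} (hf : f ≠ 0) (n : ℕ) :
    ord p (f ^ n) = n * ord p f := by
  induction n with
  | zero => simp [ord_one]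
  | succ n ih => rw [pow_succ, ord_mul p (pow_ne_zero n hf) hf, ih]; push_cast; ring

theorem mem_localRing_iff_ord (p : C.Point) {f : C.FunctionField} (hf : f ≠ 0) :
    f ∈ C.localRing p ↔ 0 ≤ ord p f := by
  simpa using mul_zpow_mem_localRing_iff p hf 0

theorem maxIdeal_eq_span (p : C.Point) :
    C.maxIdeal p = Submodule.span (C.localRing p) {unif p} := by
  apply le_antisymm
  · intro f hf
    obtain ⟨g, hg, rfl⟩ := exists_eq_unif_mul p hf
    exact Submodule.mem_span_singleton.2 ⟨⟨g, hg⟩, mul_comm _ _⟩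
  · rw [Submodule.span_singleton_le_iff_mem]
    exact unif_mem_maxIdeal p

theorem mem_one_iff (p : C.Point) (f : C.FunctionField) :
    f ∈ (1 : Submodule (C.localRing p) C.FunctionField) ↔ f ∈ C.localRing p := by
  rw [Submodule.mem_one]
  exact ⟨fun ⟨g, hg⟩ => hg ▸ g.2, fun h => ⟨⟨f, h⟩, rfl⟩⟩

theorem mem_maxIdealPow_iff (p : C.Point) (n : ℤ) (f : C.FunctionField) :
    f ∈ C.maxIdealPow p n ↔ f = 0 ∨ n ≤ ord p f := by
  have key : f ∈ C.maxIdealPow p n ↔ f * unif p ^ (-n) ∈ C.localRing p := by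
    have ht := unif_ne_zero p
    cases n with
    | ofNat k =>
      change f ∈ C.maxIdeal p ^ k ↔ _
      rw [maxIdeal_eq_span, Submodule.span_pow, Set.singleton_pow, Submodule.mem_span_singleton]
      change _ ↔ f * unif p ^ (-(k : ℤ)) ∈ _
      rw [zpow_neg, zpow_natCast, ← div_eq_mul_inv]
      constructor
      · rintro ⟨g, rfl⟩
        change g.1 * unif p ^ k / unif p ^ k ∈ _
        rw [mul_div_cancel_right₀ _ (pow_ne_zero k ht)]
        exact g.2
      · intro h
        exact ⟨⟨_, h⟩, div_mul_cancel₀ _ (pow_ne_zero k ht)⟩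
    | negSucc k =>
      change f ∈ 1 / C.maxIdeal p ^ (k + 1) ↔ _
      rw [maxIdeal_eq_span, Submodule.span_pow, Set.singleton_pow,
        Submodule.mem_div_iff_forall_mul_mem, Int.neg_negSucc]
      rw [zpow_natCast]
      constructor
      · intro h
        exact (mem_one_iff p _).1 (h _ (Submodule.mem_span_singleton_self _))
      · intro h y hy
        obtain ⟨g, rfl⟩ := Submodule.mem_span_singleton.1 hy
        rw [mem_one_iff]
        change f * (g.1 * _) ∈ _
        rw [mul_left_comm]
        exact mul_mem g.2 h
  rw [key]
  by_cases h : f = 0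
  · simp [h]
  · rw [mul_zpow_mem_localRing_iff p h]
    simp only [h, false_or]
    omega

theorem mem_maxIdeal_iff_ord (p : C.Point) (f : C.FunctionField) :
    f ∈ C.maxIdeal p ↔ f = 0 ∨ 1 ≤ ord p f := by
  rw [← mem_maxIdealPow_iff]
  change _ ↔ f ∈ C.maxIdeal p ^ 1
  rw [pow_one]

/-- The order of vanishing at `p` of a form of degree `n`, given through its value in `K`. -/
def formOrd (p : C.Point) (n : ℕ) (f : C.FunctionField) : ℤ :=
  ord p f - n * ord p (C.coordQuotient (chart p))

theorem ord_affineEval (p : C.Point) {n : ℕ} {a : CoordRing} (ha : a.IsHomogeneous n)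
    (h : C.ev a ≠ 0) : ord p (C.affineEval (chart p) a) = formOrd p n (C.ev a) := by
  rw [affineEval_of_isHomogeneous _ ha,
    ord_div p h (pow_ne_zero _ (coordQuotient_ne_zero _)), ord_pow p (coordQuotient_ne_zero _),
    formOrd]

theorem formOrd_mul (p : C.Point) {m n : ℕ} {f g : C.FunctionField} (hf : f ≠ 0) (hg : g ≠ 0) :
    formOrd p (m + n) (f * g) = formOrd p m f + formOrd p n g := by
  rw [formOrd, formOrd, formOrd, ord_mul p hf hg]
  push_cast
  ring

theorem formOrd_nonneg (p : C.Point) {n : ℕ} {a : CoordRing} (ha : a.IsHomogeneous n)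
    (h : C.ev a ≠ 0) : 0 ≤ formOrd p n (C.ev a) := by
  rw [← ord_affineEval p ha h, ← mem_localRing_iff_ord p (affineEval_ne_zero _ ha h)]
  exact affineEval_mem_localRing p a

theorem formOrd_pos_iff (p : C.Point) {n : ℕ} {a : CoordRing} (ha : a.IsHomogeneous n)
    (h : C.ev a ≠ 0) : 1 ≤ formOrd p n (C.ev a) ↔ eval p.1.rep a = 0 := by
  rw [← ord_affineEval p ha h, ← eval_normRep_eq_zero_iff p ha, ← affineEval_mem_maxIdeal_iff,
    mem_maxIdeal_iff_ord]
  simp [affineEval_ne_zero (chart p) ha h]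

theorem formOrd_eq_zero_iff (p : C.Point) {n : ℕ} {a : CoordRing} (ha : a.IsHomogeneous n)
    (h : C.ev a ≠ 0) : formOrd p n (C.ev a) = 0 ↔ eval p.1.rep a ≠ 0 := by
  have h1 := formOrd_nonneg p ha h
  have h2 := formOrd_pos_iff p ha h
  rw [ne_eq, ← h2]
  omega

theorem formOrd_linForm_eq_one {p : C.Point} {u : Fin 3 → ℂ} (hu : IsTransverse p u) :
    formOrd p 1 (C.ev (linForm u)) = 1 := by
  have h0 := ev_linForm_ne_zero (C := C) hu.ne_zero
  have ha := linForm_isHomogeneous u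
  have h1 := (formOrd_pos_iff p ha h0).2 (by rw [eval_linForm, hu.1])
  obtain ⟨g, hg, he⟩ := exists_eq_affineEval_linForm_mul p hu (unif_mem_maxIdeal p)
  have hg0 : g ≠ 0 := by
    rintro rfl
    exact unif_ne_zero p (by rw [he, mul_zero])
  have h2 := congrArg (ord p) he
  rw [ord_mul p (affineEval_ne_zero _ ha h0) hg0, ord_affineEval p ha h0,
    ord_eq_of_isLocalUnit p (n := 1)] at h2
  · have := (mem_localRing_iff_ord p hg0).1 hg
    omega
  · rw [zpow_one, div_self (unif_ne_zero p)]
    exact ⟨(C.localRing p).one_mem, one_notMem_maxIdeal p⟩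

theorem isHomogeneous_congr {a : CoordRing} {m n : ℕ} (ha : a.IsHomogeneous m) (h : m = n) :
    a.IsHomogeneous n := h ▸ ha

/-! ### Points -/

variable (C) in
/-- The point of `C` with given homogeneous coordinates. -/
def pointOfVec (v : Fin 3 → ℂ) (hv : v ≠ 0) (h : eval v C.poly = 0) : C.Point :=
  ⟨Projectivization.mk ℂ v hv, by
    obtain ⟨c, hc⟩ := Projectivization.exists_smul_eq_mk_rep ℂ v hv
    rw [← hc, Units.smul_def, eval_smul_of_isHomogeneous C.isHomogeneous, h, mul_zero]⟩

theorem exists_rep_pointOfVec (v : Fin 3 → ℂ) (hv : v ≠ 0) (h : eval v C.poly = 0) :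
    ∃ c : ℂ, c ≠ 0 ∧ (C.pointOfVec v hv h).1.rep = c • v := by
  obtain ⟨c, hc⟩ := Projectivization.exists_smul_eq_mk_rep ℂ v hv
  exact ⟨c, c.ne_zero, hc.symm⟩

theorem point_eq_of_smul {p q : C.Point} {c : ℂ} (h : q.1.rep = c • p.1.rep) : p = q := by
  apply Subtype.ext
  rw [← p.1.mk_rep, ← q.1.mk_rep, eq_comm, Projectivization.mk_eq_mk_iff']
  exact ⟨c, h.symm⟩

theorem point_eq_of_forall_dotProduct {p q : C.Point}
    (h : ∀ u : Fin 3 → ℂ, u ⬝ᵥ p.1.rep = 0 → u ⬝ᵥ q.1.rep = 0) : p = q := by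
  apply point_eq_of_smul (c := (p.1.rep (chart p))⁻¹ * q.1.rep (chart p))
  funext j
  have := h (p.1.rep (chart p) • Pi.single j 1 - p.1.rep j • Pi.single (chart p) 1)
    (by simp [sub_dotProduct, mul_comm])
  simp [sub_dotProduct] at this
  have h0 := rep_chart_ne_zero p
  simp only [Pi.smul_apply, smul_eq_mul]
  field_simp
  linear_combination this

theorem point_eq_of_forall_isTransverse {p q : C.Point}
    (h : ∀ u : Fin 3 → ℂ, IsTransverse p u → u ⬝ᵥ q.1.rep = 0) : p = q := by
  apply point_eq_of_forall_dotProduct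
  intro w hw
  obtain ⟨j, hu⟩ := exists_isTransverse p
  set u := p.1.rep (chart p) • Pi.single j 1 - p.1.rep j • (Pi.single (chart p) 1 : Fin 3 → ℂ)
  obtain ⟨α, β, rfl⟩ := exists_eq_add_of_dotProduct_eq_zero p.1.rep_nonzero (grad_ne_zero p) hu.2
    hu.1 (grad_dotProduct_rep p) hw
  have hug : IsTransverse p (u + grad p) := by
    refine ⟨by rw [add_dotProduct, hu.1, grad_dotProduct_rep, add_zero], fun c hc => ?_⟩
    exact hu.2 (c - 1) (by rw [sub_smul, ← hc, one_smul, add_sub_cancel_right])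
  have h1 := h _ hu
  have h2 := h _ hug
  rw [add_dotProduct, h1, zero_add] at h2
  rw [add_dotProduct, smul_dotProduct, smul_dotProduct, h1, h2, smul_zero, smul_zero, add_zero]

/-! ### Finiteness of the zeros of a form -/

theorem linForm_mem_of_isPrime {p : C.Point} {u : Fin 3 → ℂ} (hu : IsTransverse p u) {n : ℕ}
    {a : CoordRing} (ha : a.IsHomogeneous n) (h : C.ev a ≠ 0) {q : Ideal CoordRing} [q.IsPrime]
    (haq : a ∈ q) (hFq : C.poly ∈ q) (hq : q ≤ RingHom.ker (eval p.1.rep)) : linForm u ∈ q := by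
  have hℓ := linForm_isHomogeneous u
  have hℓ0 := ev_linForm_ne_zero (C := C) hu.ne_zero
  obtain ⟨e, he⟩ := Int.eq_ofNat_of_zero_le (formOrd_nonneg p ha h)
  have hY : C.ev (X (chart p)) ≠ 0 := by rw [C.ev_X]; exact coordQuotient_ne_zero _
  have ht := affineEval_ne_zero (chart p) hℓ hℓ0
  have ha' := affineEval_ne_zero (chart p) ha h
  have h1 : ord p (C.affineEval (chart p) a / C.affineEval (chart p) (linForm u) ^ e) = 0 := by
    rw [ord_div p ha' (pow_ne_zero _ ht), ord_pow p ht, ord_affineEval p ha h,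
      ord_affineEval p hℓ hℓ0, formOrd_linForm_eq_one hu, he]
    simp
  have h2 := (mem_localRing_iff_ord p (div_ne_zero ha' (pow_ne_zero e ht))).2 h1.ge
  have h3 : C.affineEval (chart p) a / C.affineEval (chart p) (linForm u) ^ e ∉ C.maxIdeal p := by
    rw [mem_maxIdeal_iff_ord, h1]
    simp [ha', ht]
  obtain ⟨m, c, d, hc, hd, hd0, hcd⟩ := (mem_localRing_iff p _).1 h2
  rw [hcd, ev_div_mem_maxIdeal_iff p hc hd hd0] at h3
  have hd1 := ev_ne_zero_of_eval_ne_zero p hd hd0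
  rw [affineEval_of_isHomogeneous _ ha, affineEval_of_isHomogeneous _ hℓ, ← C.ev_X, pow_one] at hcd
  have h4 : C.ev (a * d * X (chart p) ^ e - c * linForm u ^ e * X (chart p) ^ n) = 0 := by
    simp only [map_sub, map_mul, map_pow]
    rw [div_pow] at hcd
    field_simp at hcd
    linear_combination hcd
  rw [C.ev_eq_zero_iff (n := n + m + e)] at h4
  · have h5 : c * linForm u ^ e * X (chart p) ^ n ∈ q := by
      have h6 := q.mul_mem_right (d * X (chart p) ^ e) haq
      have h7 : a * d * X (chart p) ^ e - c * linForm u ^ e * X (chart p) ^ n ∈ q := by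
        obtain ⟨r, hr⟩ := h4
        rw [hr]
        exact q.mul_mem_right _ hFq
      have := q.sub_mem h6 h7
      convert this using 1
      ring
    rcases ‹q.IsPrime›.mem_or_mem h5 with h5 | h5
    · rcases ‹q.IsPrime›.mem_or_mem h5 with h5 | h5
      · exact absurd (RingHom.mem_ker.1 (hq h5)) h3
      · exact ‹q.IsPrime›.mem_of_pow_mem _ h5
    · exact absurd (RingHom.mem_ker.1 (hq h5)) (eval_X_pow_chart_ne_zero p n)
  · refine ((ha.mul hd).mul (isHomogeneous_X_pow _ e)).sub ?_
    exact isHomogeneous_congr ((hc.mul (hℓ.pow e)).mul (isHomogeneous_X_pow (chart p) n)) (by ring)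

theorem finite_zeros {n : ℕ} {a : CoordRing} (ha : a.IsHomogeneous n) (h : C.ev a ≠ 0) :
    {p : C.Point | eval p.1.rep a = 0}.Finite := by
  have hle : ∀ p : {p : C.Point | eval p.1.rep a = 0},
      Ideal.span {a, C.poly} ≤ RingHom.ker (eval p.1.1.rep : CoordRing →+* ℂ) := by
    intro p
    rw [Ideal.span_le]
    rintro x (rfl | rfl)
    · exact p.2
    · exact p.1.2
  have hex := fun p => Ideal.exists_minimalPrimes_le (hle p)
  choose q hq hqle using hex
  have hfin := (Ideal.finite_minimalPrimes_of_isNoetherianRing CoordRing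
    (Ideal.span {a, C.poly})).to_subtype
  refine Set.finite_coe_iff.1 (Finite.of_injective
    (fun p => (⟨q p, hq p⟩ : (Ideal.span {a, C.poly}).minimalPrimes)) fun p p' hpp => ?_)
  have hpp : q p = q p' := congrArg Subtype.val hpp
  refine Subtype.ext (point_eq_of_forall_isTransverse fun u hu => ?_)
  have hprime : (q p).IsPrime := (hq p).1.1
  have hmem := linForm_mem_of_isPrime hu ha h (q := q p)
    ((hq p).1.2 (Ideal.subset_span (by simp))) ((hq p).1.2 (Ideal.subset_span (by simp))) (hqle p)
  rw [hpp] at hmem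
  have := RingHom.mem_ker.1 (hqle p' hmem)
  rwa [eval_linForm] at this

/-! ### Linear systems of plane curves are complete -/

theorem exists_isHomogeneous_of_eq_add {n m : ℕ} {g b s r : CoordRing}
    (hg : g.IsHomogeneous (n + m)) (hb : b.IsHomogeneous n) (h : g = b * s + C.poly * r) :
    ∃ s' : CoordRing, s'.IsHomogeneous m ∧ C.poly ∣ g - b * s' := by
  have h1 := congrArg (fun x => (DirectSum.decompose coordGrading x (n + m) : CoordRing)) h
  simp only [DirectSum.decompose_add, DirectSum.add_apply, Submodule.coe_add] at h1
  rw [DirectSum.decompose_of_mem_same coordGrading hg,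
    DirectSum.coe_decompose_mul_add_of_left_mem coordGrading hb,
    DirectSum.coe_decompose_mul_of_left_mem coordGrading (n + m) C.isHomogeneous] at h1
  refine ⟨_, (DirectSum.decompose coordGrading s m).2, ?_⟩
  rw [h1, add_sub_cancel_left]
  split_ifs
  · exact dvd_mul_right _ _
  · exact dvd_zero _

theorem exists_mul_pow_eq_ev {k : ℕ} {f : C.FunctionField} (h0 : f ≠ 0)
    (hf : ∀ p : C.Point, 0 ≤ formOrd p k f) (u : Fin 3 → ℂ) :
    ∃ (N : ℕ) (s : CoordRing), s.IsHomogeneous (N + k) ∧ f * C.ev (linForm u) ^ N = C.ev s := by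
  obtain ⟨n, a, b, ha, hb, hb0, rfl⟩ := C.exists_eq_ev_div_ev f
  have ha0 : C.ev a ≠ 0 := fun h => h0 (by rw [h, zero_div])
  let I : Ideal CoordRing :=
    Submodule.comap (LinearMap.mulLeft CoordRing (a * X 0 ^ k)) (Ideal.span {b, C.poly})
  have hI : ∀ c, c ∈ I ↔ a * X 0 ^ k * c ∈ Ideal.span {b, C.poly} := fun c => Iff.rfl
  have hX0 : C.ev (X 0) = 1 := by rw [C.ev_X, coordQuotient_zero]
  have hlocus : ∀ v ∈ zeroLocus ℂ I, v = 0 := by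
    intro v hv
    by_contra hv0
    have hF : eval v C.poly = 0 := hv C.poly ((hI _).2
      (Ideal.mul_mem_left _ _ (Ideal.subset_span (by simp))))
    let p := C.pointOfVec v hv0 hF
    obtain ⟨c, hc, hrep⟩ : ∃ c : ℂ, c ≠ 0 ∧ p.1.rep = c • v := exists_rep_pointOfVec v hv0 hF
    have hY := coordQuotient_ne_zero (C := C) (chart p)
    have h1 := hf p
    rw [formOrd, ← ord_pow p hY, ← ord_div p h0 (pow_ne_zero _ hY), ← mem_localRing_iff_ord p
      (div_ne_zero h0 (pow_ne_zero _ hY)), mem_localRing_iff] at h1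
    obtain ⟨m, d', d, hd', hd, hd0, hdd⟩ := h1
    have hd1 := ev_ne_zero_of_eval_ne_zero p hd hd0
    have h2 : C.ev (a * X 0 ^ k * d - b * (X (chart p) ^ k * d')) = 0 := by
      simp only [map_sub, map_mul, map_pow, hX0, one_pow, mul_one, C.ev_X]
      rw [div_div, div_eq_div_iff (mul_ne_zero hb0 (pow_ne_zero _ hY)) hd1] at hdd
      linear_combination hdd
    rw [C.ev_eq_zero_iff (n := n + k + m)] at h2
    · have h3 : d ∈ I := by
        obtain ⟨r, hr⟩ := h2
        rw [hI, Ideal.mem_span_pair]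
        exact ⟨X (chart p) ^ k * d', r, by linear_combination -hr⟩
      apply hd0
      rw [hrep, eval_smul_of_isHomogeneous hd, show eval v d = 0 from hv d h3, mul_zero]
    · refine ((ha.mul (isHomogeneous_X_pow _ k)).mul hd).sub ?_
      have := hb.mul ((isHomogeneous_X_pow (R := ℂ) (chart p) k).mul hd')
      rwa [← add_assoc] at this
  have hrad : linForm u ∈ I.radical := by
    rw [← vanishingIdeal_zeroLocus_eq_radical (K := ℂ) I, mem_vanishingIdeal_iff]
    intro v hv
    rw [hlocus v hv]
    change eval 0 (linForm u) = 0
    rw [eval_linForm, dotProduct_zero]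
  obtain ⟨N, hN⟩ := hrad
  obtain ⟨s, r, hsr⟩ := Ideal.mem_span_pair.1 ((hI _).1 hN)
  have hhom : (a * X 0 ^ k * linForm u ^ N).IsHomogeneous (n + (N + k)) := by
    exact isHomogeneous_congr ((ha.mul (isHomogeneous_X_pow 0 k)).mul
      ((linForm_isHomogeneous u).pow N)) (by ring)
  obtain ⟨s', hs', hdvd⟩ := exists_isHomogeneous_of_eq_add (C := C) (s := s) (r := r) hhom hb
    (by rw [← hsr]; ring)
  refine ⟨N, s', hs', ?_⟩
  rw [← C.ev_eq_zero_iff (hhom.sub (hb.mul hs'))] at hdvd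
  simp only [map_sub, map_mul, map_pow, hX0, one_pow, mul_one] at hdvd
  rw [div_mul_eq_mul_div, div_eq_iff hb0]
  linear_combination hdvd

/-- Setting `x₀ = 0`. -/
def killX0 : CoordRing →ₐ[ℂ] CoordRing := aeval (Function.update X 0 0)

theorem X_zero_dvd_sub_killX0 (a : CoordRing) : X 0 ∣ a - killX0 a := by
  induction a using MvPolynomial.induction_on with
  | C c => simp [killX0]
  | add a b ha hb =>
    rw [map_add, add_sub_add_comm]
    exact dvd_add ha hb
  | mul_X a j h =>
    have : a * X j - killX0 (a * X j) = (a - killX0 a) * X j + killX0 a * (X j - killX0 (X j)) := by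
      rw [map_mul]; ring
    rw [this]
    refine dvd_add (h.mul_right _) (Dvd.dvd.mul_left ?_ _)
    by_cases hj : j = 0
    · subst hj; simp [killX0]
    · simp [killX0, hj]

theorem killX0_X_zero : killX0 (X 0) = 0 := by simp [killX0]

theorem not_X_dvd_poly (j : Fin 3) : ¬ X j ∣ C.poly := by
  intro h
  have h1 : Associated (X j) C.poly :=
    ((X_prime (R := ℂ)).irreducible).associated_of_dvd C.irreducible h
  exact C.coord_notMem j (Ideal.mem_span_singleton.2 h1.symm.dvd)

theorem exists_eq_of_mul_eq {l : CoordRing} (hl : Prime l) (hl0 : killX0 l = l)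
    (hlF : ¬ l ∣ killX0 C.poly) (N : ℕ) : ∀ {a b c : CoordRing},
    l * a = X 0 ^ N * b + C.poly * c → ∃ b' c', a = X 0 ^ N * b' + C.poly * c' := by
  induction N with
  | zero => exact fun {a b c} _ => ⟨a, 0, by simp⟩
  | succ N ih =>
    intro a b c h
    obtain ⟨a₁, c₁, h₁⟩ : ∃ a₁ c₁, a = X 0 * a₁ + C.poly * c₁ := by
      have h2 := congrArg killX0 h
      simp only [map_add, map_mul, map_pow, killX0_X_zero, hl0, pow_succ, mul_zero, zero_mul,
        zero_add] at h2
      obtain ⟨d, hd⟩ := (hl.dvd_or_dvd (Dvd.intro _ h2)).resolve_left hlF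
      have h3 : killX0 a = killX0 C.poly * d := by
        apply mul_left_cancel₀ hl.ne_zero
        rw [h2, hd]; ring
      obtain ⟨r, hr⟩ := X_zero_dvd_sub_killX0 a
      obtain ⟨r', hr'⟩ := X_zero_dvd_sub_killX0 C.poly
      exact ⟨r - r' * d, d, by linear_combination hr + h3 - d * hr'⟩
    have h4 : C.poly * (c - l * c₁) = X 0 * (l * a₁ - X 0 ^ N * b) := by
      rw [h₁, pow_succ] at h
      linear_combination -h
    obtain ⟨c₂, hc₂⟩ := ((X_prime (R := ℂ)).dvd_or_dvd (Dvd.intro _ h4.symm)).resolve_left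
      (not_X_dvd_poly (C := C) 0)
    have h5 : l * a₁ = X 0 ^ N * b + C.poly * c₂ := by
      rw [hc₂] at h4
      apply mul_left_cancel₀ (X_ne_zero (R := ℂ) (0 : Fin 3))
      linear_combination -h4
    obtain ⟨b', c', h6⟩ := ih h5
    exact ⟨b', X 0 * c' + c₁, by rw [h₁, h6, pow_succ]; ring⟩

theorem exists_eq_of_pow_mul_eq {l : CoordRing} (hl : Prime l) (hl0 : killX0 l = l)
    (hlF : ¬ l ∣ killX0 C.poly) (N M : ℕ) : ∀ {a b c : CoordRing},
    l ^ M * a = X 0 ^ N * b + C.poly * c → ∃ b' c', a = X 0 ^ N * b' + C.poly * c' := by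
  induction M with
  | zero => exact fun {a b c} h => ⟨b, c, by simpa using h⟩
  | succ M ih =>
    intro a b c h
    obtain ⟨b', c', h'⟩ := exists_eq_of_mul_eq hl hl0 hlF N (a := l ^ M * a) (b := b) (c := c)
      (by rw [← h]; ring)
    exact ih h'

theorem prime_linForm {u : Fin 3 → ℂ} (hu : u ≠ 0) : Prime (linForm u) := by
  have h0 : linForm u ≠ 0 := mt linForm_eq_zero_iff.1 hu
  refine (irreducible_of_totalDegree_eq_one
    ((linForm_isHomogeneous u).totalDegree h0) fun x hx => ?_).prime
  obtain ⟨d, hd⟩ := MvPolynomial.ne_zero_iff.1 h0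
  exact isUnit_iff_ne_zero.2 fun hx0 => hd (zero_dvd_iff.1 (hx0 ▸ hx d))

theorem exists_eval_ne_zero_of_apply_zero : ∃ v : Fin 3 → ℂ, v 0 = 0 ∧ eval v C.poly ≠ 0 := by
  have h : killX0 C.poly ≠ 0 := by
    intro h
    have := X_zero_dvd_sub_killX0 C.poly
    rw [h, sub_zero] at this
    exact not_X_dvd_poly 0 this
  obtain ⟨v, hv⟩ : ∃ v, eval v (killX0 C.poly) ≠ 0 := by
    by_contra! h'
    exact h (MvPolynomial.funext fun v => by rw [h' v, map_zero])
  refine ⟨Function.update v 0 0, by simp, ?_⟩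
  convert hv using 1
  have : ∀ a : CoordRing, eval (Function.update v 0 0) a = eval v (killX0 a) := by
    intro a
    induction a using MvPolynomial.induction_on with
    | C c => simp [killX0]
    | add a b ha hb => simp [ha, hb]
    | mul_X a j h =>
      rw [map_mul, map_mul, map_mul, h]
      congr 1
      by_cases hj : j = 0
      · subst hj; simp [killX0]
      · simp [killX0, hj]
  exact this _

theorem exists_eq_ev_of_formOrd_nonneg {k : ℕ} {f : C.FunctionField}
    (hf : ∀ p : C.Point, f = 0 ∨ 0 ≤ formOrd p k f) :
    ∃ a : CoordRing, a.IsHomogeneous k ∧ f = C.ev a := by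
  by_cases h0 : f = 0
  · exact ⟨0, isHomogeneous_zero _ _ _, by rw [h0, map_zero]⟩
  have hf' := fun p => (hf p).resolve_left h0
  obtain ⟨v, hv0, hv⟩ := exists_eval_ne_zero_of_apply_zero (C := C)
  set u : Fin 3 → ℂ := ![0, v 2, -v 1] with hu
  have hu0 : u ≠ 0 := by
    intro h
    apply hv
    have h1 : v 2 = 0 := by simpa [hu] using congrFun h 1
    have h2 : v 1 = 0 := by simpa [hu] using congrFun h 2
    have : v = (0 : ℂ) • v := by
      funext j
      fin_cases j <;> simp [hv0, h1, h2]
    rw [this, eval_smul_of_isHomogeneous C.isHomogeneous]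
    simp
  have hk : killX0 (linForm u) = linForm u := by
    simp [linForm, Fin.sum_univ_three, hu, killX0]
  have hlF : ¬ linForm u ∣ killX0 C.poly := by
    intro hdvd
    obtain ⟨r, hr⟩ := X_zero_dvd_sub_killX0 C.poly
    obtain ⟨s, hs⟩ := hdvd
    apply hv
    have h1 : C.poly = linForm u * s + X 0 * r := by rw [← hs, ← hr]; ring
    rw [h1, map_add, map_mul, map_mul, eval_X, hv0, eval_linForm, zero_mul, add_zero]
    simp [hu, dotProduct, Fin.sum_univ_three]
    left
    ring
  obtain ⟨N, h, hh, hN⟩ := exists_mul_pow_eq_ev h0 hf' (Pi.single 0 1)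
  obtain ⟨M, e, he, hM⟩ := exists_mul_pow_eq_ev h0 hf' u
  have hX0 : C.ev (X 0) = 1 := by rw [C.ev_X, coordQuotient_zero]
  rw [linForm_single, hX0, one_pow, mul_one] at hN
  have h1 : C.ev (linForm u ^ M * h - X 0 ^ N * e) = 0 := by
    simp only [map_sub, map_mul, map_pow, hX0, one_pow, one_mul]
    rw [← hM, ← hN]
    ring
  rw [C.ev_eq_zero_iff (n := M + N + k)] at h1
  · obtain ⟨c, hc⟩ := h1
    obtain ⟨b', c', hb'⟩ := exists_eq_of_pow_mul_eq (C := C) (prime_linForm hu0) hk hlF N M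
      (a := h) (b := e) (c := c) (by rw [← hc]; ring)
    obtain ⟨s, hs, hdvd⟩ := exists_isHomogeneous_of_eq_add hh (isHomogeneous_X_pow 0 N) hb'
    refine ⟨s, hs, ?_⟩
    rw [← C.ev_eq_zero_iff (hh.sub ((isHomogeneous_X_pow 0 N).mul hs))] at hdvd
    simp only [map_sub, map_mul, map_pow, hX0, one_pow, one_mul] at hdvd
    rw [hN]
    linear_combination hdvd
  · exact (isHomogeneous_congr (((linForm_isHomogeneous u).pow M).mul hh) (by ring)).sub
      (isHomogeneous_congr ((isHomogeneous_X_pow 0 N).mul he) (by ring))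

/-! ### Divisors -/

/-- The degree of a divisor. -/
def deg : C.Divisor →+ ℤ := Finsupp.liftAddHom fun _ => AddMonoidHom.id ℤ

theorem deg_apply (D : C.Divisor) : deg D = D.sum fun _ n => n := rfl

theorem deg_single (p : C.Point) (n : ℤ) : deg (Finsupp.single p n) = n := by
  simp [deg]

/-- The effective divisor given by a multiset of points. -/
def ofMultiset (E : Multiset C.Point) : C.Divisor := (E.map fun p => Finsupp.single p (1 : ℤ)).sum

theorem ofMultiset_cons (p : C.Point) (E : Multiset C.Point) :
    ofMultiset (p ::ₘ E) = Finsupp.single p 1 + ofMultiset E := by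
  simp [ofMultiset]

theorem ofMultiset_zero : ofMultiset (0 : Multiset C.Point) = 0 := rfl

theorem deg_ofMultiset (E : Multiset C.Point) : deg (ofMultiset E) = E.card := by
  induction E using Multiset.induction_on with
  | empty => simp [ofMultiset]
  | cons p E ih => rw [ofMultiset_cons, map_add, deg_single, ih, Multiset.card_cons]; push_cast; ring

theorem ofMultiset_nonneg (E : Multiset C.Point) (p : C.Point) : 0 ≤ ofMultiset E p := by
  classical
  induction E using Multiset.induction_on with
  | empty => simp [ofMultiset]
  | cons q E ih =>
    rw [ofMultiset_cons, Finsupp.add_apply, Finsupp.single_apply]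
    split_ifs <;> omega

theorem exists_eq_ofMultiset {D : C.Divisor} (h : ∀ p, 0 ≤ D p) : ∃ E, D = ofMultiset E := by
  classical
  induction hn : (deg D).toNat generalizing D with
  | zero =>
    refine ⟨0, Finsupp.ext fun p => ?_⟩
    have hsum : ∀ p ∈ D.support, D p = 0 := by
      refine (Finset.sum_eq_zero_iff_of_nonneg fun p _ => h p).1 ?_
      have h1 : 0 ≤ ∑ p ∈ D.support, D p := Finset.sum_nonneg fun p _ => h p
      have h2 : deg D = ∑ p ∈ D.support, D p := rfl
      omega
    by_cases hp : p ∈ D.support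
    · simpa [ofMultiset] using hsum p hp
    · simpa [ofMultiset] using hp
  | succ n ih =>
    obtain ⟨p, hp⟩ : ∃ p, D p ≠ 0 := by
      by_contra! h0
      rw [show D = 0 from Finsupp.ext h0, map_zero] at hn
      simp at hn
    obtain ⟨E, hE⟩ := ih (D := D - Finsupp.single p 1) (by
      intro q
      rw [Finsupp.sub_apply, Finsupp.single_apply]
      have := h p
      have := h q
      split_ifs with hq
      · subst hq; omega
      · omega) (by rw [map_sub, deg_single]; omega)
    exact ⟨p ::ₘ E, by rw [ofMultiset_cons, ← hE, add_sub_cancel]⟩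

variable (C) in
/-- The space `L(D)` of rational functions with poles bounded by `D`. -/
def linSys (D : C.Point → ℤ) : Submodule ℂ C.FunctionField :=
  ⨅ p : C.Point, (C.maxIdealPow p (-D p)).restrictScalars ℂ

theorem mem_linSys {D : C.Point → ℤ} {f : C.FunctionField} :
    f ∈ C.linSys D ↔ ∀ p, f = 0 ∨ 0 ≤ ord p f + D p := by
  simp only [linSys, Submodule.mem_iInf, Submodule.restrictScalars_mem, mem_maxIdealPow_iff]
  refine forall_congr' fun p => or_congr Iff.rfl ?_
  omega

theorem linSys_mono {D D' : C.Point → ℤ} (h : ∀ p, D p ≤ D' p) : C.linSys D ≤ C.linSys D' := by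
  intro f hf
  rw [mem_linSys] at hf ⊢
  exact fun p => (hf p).imp id fun h' => by have := h p; omega

theorem exists_sub_smul_mem_linSys {D : C.Point → ℤ} {p : C.Point} {f g : C.FunctionField}
    (hf : f ∈ C.linSys D) (hg : g ∈ C.linSys D) (hg' : g ∉ C.linSys (D - ⇑(Finsupp.single p 1))) :
    ∃ c : ℂ, f - c • g ∈ C.linSys (D - ⇑(Finsupp.single p 1)) := by
  classical
  have hg0 : g ≠ 0 := fun h => hg' (h ▸ zero_mem _)
  have hord : ord p g + D p = 0 := by
    rw [mem_linSys] at hg hg'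
    push Not at hg'
    obtain ⟨q, -, hq⟩ := hg'
    have h1 := (hg q).resolve_left hg0
    rw [Pi.sub_apply, Finsupp.single_apply] at hq
    split_ifs at hq with hpq
    · subst hpq; omega
    · omega
  have hfg : f / g ∈ C.localRing p := by
    by_cases hf0 : f = 0
    · rw [hf0, zero_div]; exact zero_mem _
    rw [mem_localRing_iff_ord p (div_ne_zero hf0 hg0), ord_div p hf0 hg0]
    have := (mem_linSys.1 hf p).resolve_left hf0
    omega
  obtain ⟨c, hc⟩ := exists_sub_mem_maxIdeal p hfg
  refine ⟨c, mem_linSys.2 fun q => ?_⟩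
  have hmem := mem_linSys.1 (sub_mem hf (Submodule.smul_mem _ c hg)) q
  by_cases h0 : f - c • g = 0
  · exact Or.inl h0
  right
  have h1 := hmem.resolve_left h0
  rw [Pi.sub_apply, Finsupp.single_apply]
  split_ifs with hpq
  · subst hpq
    have he : f - c • g = (f / g - algebraMap ℂ _ c) * g := by
      rw [sub_mul, div_mul_cancel₀ _ hg0, Algebra.smul_def]
    have h2 : f / g - algebraMap ℂ _ c ≠ 0 := fun h => h0 (by rw [he, h, zero_mul])
    have h3 := ((mem_maxIdeal_iff_ord _ _).1 hc).resolve_left h2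
    rw [he, ord_mul _ h2 hg0]
    omega
  · omega

section Dimension

variable (U : Submodule ℂ C.FunctionField) [FiniteDimensional ℂ U]

theorem finrank_inf_linSys_single_eq {D : C.Point → ℤ} {p : C.Point} {g : C.FunctionField}
    (hgU : g ∈ U) (hg : g ∈ C.linSys D) (hg' : g ∉ C.linSys (D - ⇑(Finsupp.single p 1))) :
    Module.finrank ℂ ↥(U ⊓ C.linSys D) =
      Module.finrank ℂ ↥(U ⊓ C.linSys (D - ⇑(Finsupp.single p 1))) + 1 := by
  have hle : C.linSys (D - ⇑(Finsupp.single p 1)) ≤ C.linSys D := by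
    classical
    refine linSys_mono fun q => ?_
    rw [Pi.sub_apply, Finsupp.single_apply]
    split_ifs <;> omega
  have hfd : ∀ W : Submodule ℂ C.FunctionField, FiniteDimensional ℂ ↥(U ⊓ W) := fun W =>
    Submodule.finiteDimensional_of_le inf_le_left
  have hsup : U ⊓ C.linSys D = U ⊓ C.linSys (D - ⇑(Finsupp.single p 1)) ⊔ ℂ ∙ g := by
    apply le_antisymm
    · rintro f ⟨hfU, hf⟩
      obtain ⟨c, hc⟩ := exists_sub_smul_mem_linSys hf hg hg'
      rw [← sub_add_cancel f (c • g)]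
      exact add_mem (Submodule.mem_sup_left ⟨sub_mem hfU (U.smul_mem c hgU), hc⟩)
        (Submodule.mem_sup_right (Submodule.smul_mem _ c (Submodule.mem_span_singleton_self g)))
    · refine sup_le (inf_le_inf_left _ hle) ?_
      rw [Submodule.span_singleton_le_iff_mem]
      exact ⟨hgU, hg⟩
  apply le_antisymm
  · rw [hsup]
    refine (Submodule.finrank_add_le_finrank_add_finrank _ _).trans ?_
    have := finrank_span_le_card (R := ℂ) ({g} : Set C.FunctionField)
    simp only [Set.toFinset_singleton, Finset.card_singleton] at this
    omega
  · refine Nat.succ_le_of_lt (Submodule.finrank_lt_finrank_of_lt ?_)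
    exact lt_of_le_of_ne (inf_le_inf_left _ hle) fun h => hg'
      ((h.symm ▸ (⟨hgU, hg⟩ : g ∈ U ⊓ C.linSys D) :
        g ∈ U ⊓ C.linSys (D - ⇑(Finsupp.single p 1))).2)

theorem finrank_inf_linSys_single_le (D : C.Point → ℤ) (p : C.Point) :
    Module.finrank ℂ ↥(U ⊓ C.linSys D) ≤
      Module.finrank ℂ ↥(U ⊓ C.linSys (D - ⇑(Finsupp.single p 1))) + 1 := by
  by_cases h : U ⊓ C.linSys D ≤ C.linSys (D - ⇑(Finsupp.single p 1))
  · have : FiniteDimensional ℂ ↥(U ⊓ C.linSys (D - ⇑(Finsupp.single p 1))) :=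
      Submodule.finiteDimensional_of_le inf_le_left
    exact (Submodule.finrank_mono (le_inf inf_le_left h)).trans (Nat.le_succ _)
  · obtain ⟨g, hg, hg'⟩ := SetLike.not_le_iff_exists.1 h
    exact (finrank_inf_linSys_single_eq U hg.1 hg.2 hg').le

theorem sub_ofMultiset_cons (D : C.Point → ℤ) (p : C.Point) (E : Multiset C.Point) :
    D - ⇑(ofMultiset (p ::ₘ E)) = D - ⇑(ofMultiset E) - ⇑(Finsupp.single p 1) := by
  rw [ofMultiset_cons, Finsupp.coe_add, ← sub_sub, sub_right_comm]

theorem finrank_inf_linSys_le (D : C.Point → ℤ) (E : Multiset C.Point) :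
    Module.finrank ℂ ↥(U ⊓ C.linSys D) ≤
      Module.finrank ℂ ↥(U ⊓ C.linSys (D - ⇑(ofMultiset E))) + E.card := by
  induction E using Multiset.induction_on with
  | empty => rw [ofMultiset_zero, Finsupp.coe_zero, sub_zero, Multiset.card_zero, add_zero]
  | cons p E ih =>
    rw [sub_ofMultiset_cons, Multiset.card_cons]
    have := finrank_inf_linSys_single_le U (D - ⇑(ofMultiset E)) p
    omega

theorem finrank_inf_linSys_eq (D : C.Point → ℤ) (E : Multiset C.Point)
    (h : ∀ p E', p ::ₘ E' ≤ E → ∃ g ∈ U, g ∈ C.linSys (D - ⇑(ofMultiset E')) ∧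
      g ∉ C.linSys (D - ⇑(ofMultiset (p ::ₘ E')))) :
    Module.finrank ℂ ↥(U ⊓ C.linSys D) =
      Module.finrank ℂ ↥(U ⊓ C.linSys (D - ⇑(ofMultiset E))) + E.card := by
  induction E using Multiset.induction_on with
  | empty => rw [ofMultiset_zero, Finsupp.coe_zero, sub_zero, Multiset.card_zero, add_zero]
  | cons p E ih =>
    rw [ih fun q E' hq => h q E' (hq.trans (Multiset.le_cons_self E p)), Multiset.card_cons]
    obtain ⟨g, hgU, hg, hg'⟩ := h p E le_rfl
    rw [sub_ofMultiset_cons] at hg' ⊢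
    rw [finrank_inf_linSys_single_eq U hgU hg hg']
    omega

end Dimension

/-! ### The degree of a principal divisor -/

variable (C) in
/-- The divisor of zeros of the linear form `x₀`. -/
def hyp (p : C.Point) : ℤ := -ord p (C.coordQuotient (chart p))

theorem formOrd_eq (p : C.Point) (n : ℕ) (f : C.FunctionField) :
    formOrd p n f = ord p f + n * C.hyp p := by
  rw [formOrd, hyp]; ring

variable (C) in
/-- The space of the restrictions to `C` of the forms of degree `k`. -/
def formSpace (k : ℕ) : Submodule ℂ C.FunctionField :=
  (homogeneousSubmodule (Fin 3) ℂ k).map C.ev.toLinearMap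

instance (k : ℕ) : FiniteDimensional ℂ (C.formSpace k) :=
  Module.Finite.iff_fg.2 ((homogeneousSubmodule_fg (Fin 3) ℂ k).map _)

theorem formSpace_eq_linSys (k : ℕ) : C.formSpace k = C.linSys fun p => k * C.hyp p := by
  ext f
  rw [mem_linSys]
  constructor
  · rintro ⟨a, ha, rfl⟩ p
    by_cases h : C.ev a = 0
    · exact Or.inl h
    · right
      rw [← formOrd_eq]
      exact formOrd_nonneg p ha h
  · intro h
    simp only [← formOrd_eq] at h
    obtain ⟨a, ha, rfl⟩ := exists_eq_ev_of_formOrd_nonneg h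
    exact ⟨a, ha, rfl⟩

theorem exists_divisor_of_form {n : ℕ} {a : CoordRing} (ha : a.IsHomogeneous n)
    (h : C.ev a ≠ 0) : ∃ E : Multiset C.Point, ∀ p, ofMultiset E p = formOrd p n (C.ev a) := by
  classical
  let D : C.Divisor := Finsupp.onFinset (finite_zeros ha h).toFinset
    (fun p => formOrd p n (C.ev a)) fun p hp => by
      rw [Set.Finite.mem_toFinset, Set.mem_ofPred_eq, ← formOrd_pos_iff p ha h]
      have := formOrd_nonneg p ha h
      omega
  obtain ⟨E, hE⟩ := exists_eq_ofMultiset (D := D) fun p => formOrd_nonneg p ha h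
  exact ⟨E, fun p => by rw [← hE]; rfl⟩

theorem exists_form_of_multiset (p : C.Point) (E : Multiset C.Point) :
    ∃ g : CoordRing, g.IsHomogeneous E.card ∧ C.ev g ≠ 0 ∧
      (∀ q, ofMultiset E q ≤ formOrd q E.card (C.ev g)) ∧
      formOrd p E.card (C.ev g) = ofMultiset E p := by
  classical
  induction E using Multiset.induction_on with
  | empty =>
    refine ⟨1, isHomogeneous_one _ _, by simp, ?_, ?_⟩ <;> simp [ofMultiset_zero, formOrd, ord_one]
  | cons q E ih =>
    obtain ⟨g, hg, hg0, hle, heq⟩ := ih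
    obtain ⟨u, hu0, huq, hup⟩ : ∃ u : Fin 3 → ℂ, u ≠ 0 ∧ u ⬝ᵥ q.1.rep = 0 ∧
        formOrd p 1 (C.ev (linForm u)) = Finsupp.single q (1 : ℤ) p := by
      by_cases hqp : q = p
      · subst hqp
        obtain ⟨j, hj⟩ := exists_isTransverse q
        exact ⟨_, hj.ne_zero, hj.1, by rw [formOrd_linForm_eq_one hj, Finsupp.single_eq_same]⟩
      · have := mt point_eq_of_forall_dotProduct hqp
        push Not at this
        obtain ⟨u, hu, hu'⟩ := this
        have hu0 : u ≠ 0 := by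
          rintro rfl
          exact hu' (zero_dotProduct _)
        refine ⟨u, hu0, hu, ?_⟩
        rw [Finsupp.single_apply, if_neg hqp, formOrd_eq_zero_iff p (linForm_isHomogeneous u)
          (ev_linForm_ne_zero hu0), eval_linForm]
        exact hu'
    have hl := linForm_isHomogeneous u
    have hl0 := ev_linForm_ne_zero (C := C) hu0
    refine ⟨g * linForm u, ?_, ?_, ?_, ?_⟩
    · rw [Multiset.card_cons]
      exact hg.mul hl
    · rw [map_mul]
      exact mul_ne_zero hg0 hl0
    · intro r
      rw [map_mul, Multiset.card_cons, formOrd_mul r hg0 hl0, ofMultiset_cons, Finsupp.add_apply,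
        Finsupp.single_apply]
      have h1 := hle r
      have h2 := formOrd_nonneg r hl hl0
      split_ifs with hqr
      · subst hqr
        have := (formOrd_pos_iff q hl hl0).2 (by rw [eval_linForm, huq])
        omega
      · omega
    · rw [map_mul, Multiset.card_cons, formOrd_mul p hg0 hl0, ofMultiset_cons, Finsupp.add_apply,
        heq, hup, add_comm]

theorem finrank_formSpace_add {n : ℕ} {a : CoordRing} (ha : a.IsHomogeneous n) (h : C.ev a ≠ 0)
    {E : Multiset C.Point} (hE : ∀ p, ofMultiset E p = formOrd p n (C.ev a)) {m : ℕ}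
    (hm : E.card ≤ n + m) : Module.finrank ℂ (C.formSpace (n + m)) =
      Module.finrank ℂ (C.formSpace m) + E.card := by
  classical
  have h1 : C.formSpace (n + m) = C.formSpace (n + m) ⊓
      C.linSys (fun p => ((n + m : ℕ) : ℤ) * C.hyp p) := by
    rw [← formSpace_eq_linSys, inf_idem]
  have h2 : C.formSpace (n + m) ⊓
      C.linSys ((fun p => ((n + m : ℕ) : ℤ) * C.hyp p) - ⇑(ofMultiset E)) =
      (C.formSpace m).map (LinearMap.mulLeft ℂ (C.ev a)) := by
    apply le_antisymm
    · rintro f ⟨-, hf⟩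
      refine ⟨f / C.ev a, ?_, mul_div_cancel₀ f h⟩
      rw [SetLike.mem_coe, formSpace_eq_linSys, mem_linSys]
      intro p
      rcases mem_linSys.1 hf p with hf0 | hf0
      · exact Or.inl (by rw [hf0, zero_div])
      by_cases h0 : f = 0
      · exact Or.inl (by rw [h0, zero_div])
      right
      rw [Pi.sub_apply, hE, formOrd_eq] at hf0
      rw [ord_div p h0 h]
      push_cast at hf0
      linarith
    · rintro _ ⟨_, ⟨b, hb, rfl⟩, rfl⟩
      refine ⟨⟨a * b, ha.mul hb, map_mul C.ev _ _⟩, mem_linSys.2 fun p => ?_⟩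
      by_cases h0 : C.ev b = 0
      · exact Or.inl ((congrArg _ h0).trans (mul_zero _))
      right
      change 0 ≤ ord p (C.ev a * C.ev b) + _
      have := formOrd_nonneg p hb h0
      rw [formOrd_eq] at this
      rw [Pi.sub_apply, hE, formOrd_eq, ord_mul p h h0]
      push_cast
      linarith
  have h3 : Module.finrank ℂ ((C.formSpace m).map (LinearMap.mulLeft ℂ (C.ev a))) =
      Module.finrank ℂ (C.formSpace m) :=
    (Submodule.equivMapOfInjective _ (mul_right_injective₀ h) _).finrank_eq.symm
  rw [h1, finrank_inf_linSys_eq _ _ E, h2, h3]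
  intro p E' hE'
  have hcard := Multiset.card_le_card hE'
  rw [Multiset.card_cons] at hcard
  obtain ⟨g, hg, hg0, hle, heq⟩ := exists_form_of_multiset p E'
  obtain ⟨k, hk⟩ := Nat.exists_eq_add_of_le (show E'.card ≤ n + m by omega)
  have hX := isHomogeneous_X_pow (R := ℂ) (chart p) k
  have hX0 := ev_ne_zero_of_eval_ne_zero p hX (eval_X_pow_chart_ne_zero p k)
  refine ⟨C.ev (g * X (chart p) ^ k), ⟨_, by rw [hk]; exact hg.mul hX, rfl⟩, ?_, ?_⟩
  · refine mem_linSys.2 fun q => Or.inr ?_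
    have h4 := formOrd_mul q (m := E'.card) (n := k) hg0 hX0
    have h5 := formOrd_nonneg q hX hX0
    have h6 := hle q
    rw [← map_mul, ← hk, formOrd_eq] at h4
    rw [Pi.sub_apply]
    linarith
  · intro hmem
    have h4 := formOrd_mul p (m := E'.card) (n := k) hg0 hX0
    rw [← map_mul, ← hk, formOrd_eq, heq, (formOrd_eq_zero_iff p hX hX0).2
      (eval_X_pow_chart_ne_zero p k)] at h4
    rcases mem_linSys.1 hmem p with h5 | h5
    · rw [map_mul] at h5
      exact mul_ne_zero hg0 hX0 h5
    · rw [Pi.sub_apply, ofMultiset_cons, Finsupp.add_apply, Finsupp.single_eq_same] at h5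
      linarith

theorem card_eq_of_forms {n : ℕ} {a b : CoordRing} (ha : a.IsHomogeneous n)
    (hb : b.IsHomogeneous n) (ha0 : C.ev a ≠ 0) (hb0 : C.ev b ≠ 0) {E E' : Multiset C.Point}
    (hE : ∀ p, ofMultiset E p = formOrd p n (C.ev a))
    (hE' : ∀ p, ofMultiset E' p = formOrd p n (C.ev b)) : E.card = E'.card := by
  have h1 := finrank_formSpace_add ha ha0 hE (m := E.card + E'.card) (by omega)
  have h2 := finrank_formSpace_add hb hb0 hE' (m := E.card + E'.card) (by omega)
  omega

theorem exists_principal_divisor {f : C.FunctionField} (h0 : f ≠ 0) :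
    ∃ D : C.Divisor, (∀ p, D p = ord p f) ∧ deg D = 0 := by
  obtain ⟨n, a, b, ha, hb, hb0, rfl⟩ := C.exists_eq_ev_div_ev f
  have ha0 : C.ev a ≠ 0 := fun h => h0 (by rw [h, zero_div])
  obtain ⟨E, hE⟩ := exists_divisor_of_form ha ha0
  obtain ⟨E', hE'⟩ := exists_divisor_of_form hb hb0
  refine ⟨ofMultiset E - ofMultiset E', fun p => ?_, ?_⟩
  · rw [Finsupp.sub_apply, hE, hE', formOrd_eq, formOrd_eq, ord_div p ha0 hb0]
    ring
  · rw [map_sub, deg_ofMultiset, deg_ofMultiset, card_eq_of_forms ha hb ha0 hb0 hE hE', sub_self]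

/-! ### Lines -/

theorem exists_eq_smul_grad {p : C.Point} {u : Fin 3 → ℂ} (hu : u ≠ 0)
    (h : 2 ≤ formOrd p 1 (C.ev (linForm u))) : ∃ c : ℂ, u = c • grad p := by
  by_contra! hc
  have h1 := (formOrd_pos_iff p (linForm_isHomogeneous u) (ev_linForm_ne_zero hu)).1 (by omega)
  rw [eval_linForm] at h1
  have := formOrd_linForm_eq_one ⟨h1, hc⟩
  omega

/-- The restriction of a polynomial to the line `τ ↦ w + τ o`. -/
def restrictLine (w o : Fin 3 → ℂ) : CoordRing →ₐ[ℂ] Polynomial ℂ :=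
  aeval fun j => Polynomial.C (w j) + Polynomial.X * Polynomial.C (o j)

theorem eval_restrictLine (w o : Fin 3 → ℂ) (τ : ℂ) (a : CoordRing) :
    (restrictLine w o a).eval τ = eval (w + τ • o) a := by
  induction a using MvPolynomial.induction_on with
  | C c => simp [restrictLine]
  | add a b ha hb => simp [ha, hb]
  | mul_X a j h => 
    rw [map_mul, Polynomial.eval_mul, h, map_mul]
    simp [restrictLine]
    exact Or.inl (mul_comm _ _)

theorem derivative_restrictLine (w o : Fin 3 → ℂ) (a : CoordRing) :
    (restrictLine w o a).derivative = restrictLine w o (∑ j, o j • pderiv j a) := by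
  induction a using MvPolynomial.induction_on with
  | C c => simp [restrictLine]
  | add a b ha hb => simp [ha, hb, Finset.sum_add_distrib]
  | mul_X a i h =>
    rw [map_mul, Polynomial.derivative_mul, h]
    have h1 : (restrictLine w o (X i)).derivative = Polynomial.C (o i) := by
      simp [restrictLine]
    have h2 : ∑ j, o j • pderiv j (a * X i) = (∑ j, o j • pderiv j a) * X i + o i • a := by
      simp only [pderiv_mul, smul_add, Finset.sum_add_distrib, pderiv_X, Finset.sum_mul,
        smul_mul_assoc]
      congr 1
      simp [Pi.single_apply]
    rw [h1, h2, map_add, map_mul, map_smul, Polynomial.smul_eq_C_mul]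
    ring

theorem restrictLine_coeff (w o : Fin 3 → ℂ) {n : ℕ} {a : CoordRing} (ha : a.IsHomogeneous n) :
    (restrictLine w o a).natDegree ≤ n ∧ (restrictLine w o a).coeff n = eval o a := by
  have hlin : ∀ j, (Polynomial.C (w j) + Polynomial.X * Polynomial.C (o j)).natDegree ≤ 1 := by
    intro j
    compute_degree
  have hc : ∀ j, (Polynomial.C (w j) + Polynomial.X * Polynomial.C (o j)).coeff 1 = o j := by
    intro j
    simp [Polynomial.coeff_C]
  have hpow : ∀ j d, ((Polynomial.C (w j) + Polynomial.X * Polynomial.C (o j)) ^ d).natDegree ≤ d :=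
    fun j d => Polynomial.natDegree_pow_le_of_le d (hlin j) |>.trans (by simp)
  have hpc : ∀ j d, ((Polynomial.C (w j) + Polynomial.X * Polynomial.C (o j)) ^ d).coeff d =
      o j ^ d := by
    intro j d
    have := Polynomial.coeff_pow_of_natDegree_le (hlin j) (m := d)
    rwa [mul_one, hc] at this
  have hmon : ∀ d ∈ a.support, (∏ i, (Polynomial.C (w i) + Polynomial.X * Polynomial.C (o i)) ^
      d i).natDegree ≤ n ∧ (∏ i, (Polynomial.C (w i) + Polynomial.X * Polynomial.C (o i)) ^
      d i).coeff n = ∏ i, o i ^ d i := by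
    intro d hd
    have hdeg : d 0 + d 1 + d 2 = n := by
      have := ha (mem_support_iff.1 hd)
      rw [Finsupp.weight_apply, Finsupp.sum_fintype _ _ (by simp)] at this
      simpa [Fin.sum_univ_three] using this
    rw [Fin.prod_univ_three, Fin.prod_univ_three, ← hdeg]
    have h01 := Polynomial.natDegree_mul_le_of_le (hpow 0 (d 0)) (hpow 1 (d 1))
    refine ⟨Polynomial.natDegree_mul_le_of_le h01 (hpow 2 (d 2)), ?_⟩
    rw [Polynomial.coeff_mul_add_eq_of_natDegree_le h01 (hpow 2 (d 2)),
      Polynomial.coeff_mul_add_eq_of_natDegree_le (hpow 0 (d 0)) (hpow 1 (d 1)), hpc, hpc, hpc]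
  have hsum : restrictLine w o a = ∑ d ∈ a.support, Polynomial.C (a.coeff d) *
      ∏ i, (Polynomial.C (w i) + Polynomial.X * Polynomial.C (o i)) ^ d i := by
    rw [restrictLine, aeval_def, eval₂_eq']
    rfl
  rw [hsum]
  constructor
  · refine Polynomial.natDegree_sum_le_of_forall_le _ _ fun d hd => ?_
    exact (Polynomial.natDegree_C_mul_le _ _).trans (hmon d hd).1
  · rw [Polynomial.finsetSum_coeff, eval_eq']
    refine Finset.sum_congr rfl fun d hd => ?_
    rw [Polynomial.coeff_C_mul, (hmon d hd).2]

theorem eval_sum_smul_pderiv (o : Fin 3 → ℂ) (v : Fin 3 → ℂ) (a : CoordRing) :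
    eval v (∑ j, o j • pderiv j a) = ∑ j, o j * eval v (pderiv j a) := by
  simp [smul_eval]

theorem exists_eval_ne_zero_and_apply_zero_ne_zero :
    ∃ o : Fin 3 → ℂ, o 0 ≠ 0 ∧ eval o C.poly ≠ 0 := by
  by_contra! h
  apply mul_ne_zero (X_ne_zero (R := ℂ) (0 : Fin 3)) C.irreducible.ne_zero
  refine MvPolynomial.funext fun v => ?_
  rw [map_mul, map_zero, eval_X]
  by_cases hv : v 0 = 0
  · rw [hv, zero_mul]
  · rw [h v hv, mul_zero]

/-- There is a line with a parametrization `w + τ o`, whose point `o` is not on `C`, that is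
nowhere tangent to `C`. -/
theorem exists_transverse_line : ∃ (u o w : Fin 3 → ℂ), u ≠ 0 ∧ eval o C.poly ≠ 0 ∧
    o 0 ≠ 0 ∧ w 0 = 0 ∧ w ≠ 0 ∧ (∀ v, u ⬝ᵥ v = 0 ↔ ∃ α β : ℂ, v = α • w + β • o) ∧
    ∀ p : C.Point, u ⬝ᵥ p.1.rep = 0 → ∑ j, o j * eval p.1.rep (pderiv j C.poly) ≠ 0 := by
  obtain ⟨o, ho0, ho⟩ := exists_eval_ne_zero_and_apply_zero_ne_zero (C := C)
  set G : CoordRing := ∑ j, o j • pderiv j C.poly with hG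
  have hGh : G.IsHomogeneous 3 := IsHomogeneous.sum _ _ _ fun j _ =>
    (homogeneousSubmodule (Fin 3) ℂ 3).smul_mem (o j) C.isHomogeneous.pderiv
  have hGo : eval o G ≠ 0 := by
    have h := congrArg (eval o) C.isHomogeneous.sum_X_mul_pderiv
    rw [hG, eval_sum_smul_pderiv]
    simp only [map_sum, map_mul, eval_X, map_nsmul] at h
    rw [h]
    simpa using ho
  have hG0 : C.ev G ≠ 0 := ev_ne_zero_of_lt hGh (fun h => hGo (by rw [h, map_zero])) (by norm_num)
  obtain ⟨c, hc⟩ := ((finite_zeros hGh hG0).image fun z =>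
    -(o 0 * z.1.rep 1 - o 1 * z.1.rep 0) / (o 0 * z.1.rep 2 - o 2 * z.1.rep 0)).exists_notMem
  refine ⟨![-o 1 - c * o 2, o 0, c * o 0], o, ![0, -c, 1], ?_, ho, ho0, rfl, ?_, ?_, ?_⟩
  · intro h
    exact ho0 (by simpa using congrFun h 1)
  · intro h
    simpa using congrFun h 2
  · intro v
    simp only [dotProduct, Fin.sum_univ_three]
    constructor
    · intro h
      refine ⟨v 2 - v 0 / o 0 * o 2, v 0 / o 0, funext fun j => ?_⟩
      simp at h
      fin_cases j
      · simp [ho0]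
      · simp
        field_simp
        linear_combination h
      · simp
    · rintro ⟨α, β, rfl⟩
      simp
      ring
  · intro p hp hGp
    rw [← eval_sum_smul_pderiv, ← hG] at hGp
    apply hc
    refine ⟨p, hGp, ?_⟩
    simp only [dotProduct, Fin.sum_univ_three] at hp
    simp at hp
    have hne : o 0 * p.1.rep 2 - o 2 * p.1.rep 0 ≠ 0 := by
      intro h0
      have h1 : o 0 * p.1.rep 1 - o 1 * p.1.rep 0 = 0 := by linear_combination hp - c * h0
      have h2 : p.1.rep = (p.1.rep 0 / o 0) • o := by
        funext j
        fin_cases j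
        · simp [ho0]
        · simp; field_simp; linear_combination h1
        · simp; field_simp; linear_combination h0
      have h3 := p.2
      rw [h2, eval_smul_of_isHomogeneous C.isHomogeneous] at h3
      have h4 := pow_eq_zero_iff (by norm_num) |>.1 ((mul_eq_zero.1 h3).resolve_right ho)
      rw [h4, zero_smul] at h2
      exact p.1.rep_nonzero h2
    rw [div_eq_iff hne]
    linear_combination -hp

theorem ofMultiset_apply_of_nodup [DecidableEq C.Point] {E : Multiset C.Point} (h : E.Nodup)
    (p : C.Point) : ofMultiset E p = if p ∈ E then 1 else 0 := by
  induction E using Multiset.induction_on with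
  | empty => simp [ofMultiset]
  | cons q E ih =>
    rw [Multiset.nodup_cons] at h
    rw [ofMultiset_cons, Finsupp.add_apply, ih h.2, Finsupp.single_apply]
    by_cases hqp : q = p
    · subst hqp; simp [h.1]
    · simp [hqp, Ne.symm hqp]

/-- Some line meets `C` in four distinct points. -/
theorem exists_line_nodup : ∃ (u : Fin 3 → ℂ) (E : Multiset C.Point), u ≠ 0 ∧ E.Nodup ∧
    E.card = 4 ∧ ∀ p, ofMultiset E p = formOrd p 1 (C.ev (linForm u)) := by
  classical
  obtain ⟨u, o, w, hu, ho, ho0, hw0, hw, hline, htr⟩ := exists_transverse_line (C := C)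
  set Φ := restrictLine w o C.poly with hΦ
  obtain ⟨hdeg, hlead⟩ := restrictLine_coeff w o C.isHomogeneous
  have hnat : Φ.natDegree = 4 :=
    le_antisymm hdeg (Polynomial.le_natDegree_of_ne_zero (by rw [hlead]; exact ho))
  have hΦ0 : Φ ≠ 0 := by
    intro h
    rw [h] at hnat
    simp at hnat
  have hvec : ∀ τ : ℂ, w + τ • o ≠ 0 := by
    intro τ h
    have h0 : τ = 0 := by simpa [hw0, ho0] using congrFun h 0
    rw [h0, zero_smul, add_zero] at h
    exact hw h
  have hon : ∀ τ : ℂ, u ⬝ᵥ (w + τ • o) = 0 := fun τ => (hline _).2 ⟨1, τ, by rw [one_smul]⟩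
  have hroot : ∀ τ ∈ Φ.roots, eval (w + τ • o) C.poly = 0 := by
    intro τ hτ
    rw [← eval_restrictLine]
    exact (Polynomial.mem_roots hΦ0).1 hτ
  have hnodup : Φ.roots.Nodup := by
    rw [Multiset.nodup_iff_count_le_one]
    intro τ
    rw [Polynomial.count_roots]
    by_contra! hlt
    obtain ⟨h1, h2⟩ := (Polynomial.one_lt_rootMultiplicity_iff_isRoot hΦ0).1 hlt
    rw [Polynomial.IsRoot, hΦ, eval_restrictLine] at h1
    rw [Polynomial.IsRoot, hΦ, derivative_restrictLine, eval_restrictLine,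
      eval_sum_smul_pderiv] at h2
    obtain ⟨c, hc, hrep⟩ := exists_rep_pointOfVec (w + τ • o) (hvec τ) h1
    refine htr (C.pointOfVec _ (hvec τ) h1) (by rw [hrep, dotProduct_smul, hon, smul_zero]) ?_
    simp only [hrep, eval_smul_of_isHomogeneous C.isHomogeneous.pderiv]
    simp only [mul_left_comm _ (c ^ _), ← Finset.mul_sum, h2, mul_zero]
  let pt : {τ // τ ∈ Φ.roots} → C.Point := fun τ => C.pointOfVec _ (hvec τ.1) (hroot τ.1 τ.2)
  have hpt : Function.Injective pt := by
    intro τ τ' h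
    obtain ⟨c, hc, hrep⟩ := exists_rep_pointOfVec _ (hvec τ.1) (hroot τ.1 τ.2)
    obtain ⟨c', hc', hrep'⟩ := exists_rep_pointOfVec _ (hvec τ'.1) (hroot τ'.1 τ'.2)
    have h1 : c • (w + τ.1 • o) = c' • (w + τ'.1 • o) := by
      rw [← hrep, ← hrep']
      exact congrArg (fun p : C.Point => p.1.rep) h
    have h2 := congrFun h1 0
    simp only [Pi.smul_apply, Pi.add_apply, smul_eq_mul, hw0, zero_add, ← mul_assoc] at h2
    replace h2 := mul_right_cancel₀ ho0 h2
    obtain ⟨j, hj⟩ := Function.ne_iff.1 hw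
    have h3 := congrFun h1 j
    simp only [Pi.smul_apply, Pi.add_apply, smul_eq_mul] at h3
    have h4 : c = c' := by
      apply mul_right_cancel₀ hj
      linear_combination h3 - o j * h2
    subst h4
    exact Subtype.ext (mul_left_cancel₀ hc h2)
  refine ⟨u, Φ.roots.attach.map pt, hu, (Multiset.nodup_attach.2 hnodup).map hpt, ?_, fun p => ?_⟩
  · rw [Multiset.card_map, Multiset.card_attach,
      ← (IsAlgClosed.splits Φ).natDegree_eq_card_roots, hnat]
  rw [ofMultiset_apply_of_nodup ((Multiset.nodup_attach.2 hnodup).map hpt)]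
  have hl := linForm_isHomogeneous u
  have hl0 := ev_linForm_ne_zero (C := C) hu
  split_ifs with hmem
  · obtain ⟨τ, -, rfl⟩ := Multiset.mem_map.1 hmem
    symm
    apply formOrd_linForm_eq_one
    obtain ⟨c, hc, hrep⟩ := exists_rep_pointOfVec _ (hvec τ.1) (hroot τ.1 τ.2)
    have hup : u ⬝ᵥ (pt τ).1.rep = 0 := by
      change u ⬝ᵥ (C.pointOfVec _ (hvec τ.1) (hroot τ.1 τ.2)).1.rep = 0
      rw [hrep, dotProduct_smul, hon, smul_zero]
    refine ⟨hup, fun d hd => ?_⟩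
    have h1 := htr (pt τ) hup
    have h2 : u ⬝ᵥ o = 0 := (hline o).2 ⟨0, 1, by simp⟩
    rw [hd, smul_dotProduct, smul_eq_mul, mul_eq_zero] at h2
    rcases h2 with h2 | h2
    · rw [h2, zero_smul] at hd
      exact hu hd
    · apply h1
      refine Eq.trans ?_ h2
      simp [dotProduct, grad, mul_comm]
  · symm
    rw [formOrd_eq_zero_iff p hl hl0, eval_linForm]
    intro hup
    apply hmem
    obtain ⟨α, β, hαβ⟩ := (hline _).1 hup
    have hα : α ≠ 0 := by
      rintro rfl
      have h1 := p.2
      rw [hαβ, zero_smul, zero_add, eval_smul_of_isHomogeneous C.isHomogeneous] at h1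
      have h2 := pow_eq_zero_iff (by norm_num) |>.1 ((mul_eq_zero.1 h1).resolve_right ho)
      rw [h2, zero_smul, zero_smul, add_zero] at hαβ
      exact p.1.rep_nonzero hαβ
    have hp : p.1.rep = α • (w + (β / α) • o) := by
      rw [hαβ, smul_add, smul_smul, mul_div_cancel₀ _ hα]
    have hr : β / α ∈ Φ.roots := by
      rw [Polynomial.mem_roots hΦ0, Polynomial.IsRoot, hΦ, eval_restrictLine]
      have h1 := p.2
      rw [hp, eval_smul_of_isHomogeneous C.isHomogeneous] at h1
      exact (mul_eq_zero.1 h1).resolve_left (pow_ne_zero _ hα)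
    refine Multiset.mem_map.2 ⟨⟨_, hr⟩, Multiset.mem_attach _ _, ?_⟩
    obtain ⟨c, hc, hrep⟩ := exists_rep_pointOfVec _ (hvec _) (hroot _ hr)
    refine point_eq_of_smul (c := α * c⁻¹) ?_
    change _ = _ • (C.pointOfVec _ (hvec _) (hroot _ hr)).1.rep
    rw [hrep, smul_smul, hp, mul_assoc, inv_mul_cancel₀ hc, mul_one]

theorem card_of_linForm {u : Fin 3 → ℂ} (hu : u ≠ 0) {E : Multiset C.Point}
    (hE : ∀ p, ofMultiset E p = formOrd p 1 (C.ev (linForm u))) : E.card = 4 := by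
  obtain ⟨u', E', hu', -, hcard, hE'⟩ := exists_line_nodup (C := C)
  rw [← hcard]
  exact card_eq_of_forms (linForm_isHomogeneous u) (linForm_isHomogeneous u')
    (ev_linForm_ne_zero hu) (ev_linForm_ne_zero hu') hE hE'

theorem exists_hyp_divisor : ∃ H : C.Divisor, (∀ p, H p = C.hyp p) ∧ deg H = 4 := by
  have h0 : (Pi.single 0 1 : Fin 3 → ℂ) ≠ 0 := by simp
  obtain ⟨E, hE⟩ := exists_divisor_of_form (linForm_isHomogeneous (Pi.single 0 1))
    (ev_linForm_ne_zero (C := C) h0)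
  refine ⟨ofMultiset E, fun p => ?_, by rw [deg_ofMultiset, card_of_linForm h0 hE]; rfl⟩
  rw [hE, linForm_single, C.ev_X, coordQuotient_zero, formOrd_eq, ord_one]
  simp

/-! ### Conics -/

theorem exists_eq_linForm {a : CoordRing} (ha : a.IsHomogeneous 1) : ∃ u, a = linForm u := by
  rw [← mem_homogeneousSubmodule, homogeneousSubmodule_one_eq_span_X] at ha
  induction ha using Submodule.span_induction with
  | mem x hx =>
    obtain ⟨j, rfl⟩ := hx
    exact ⟨_, (linForm_single j).symm⟩
  | zero => exact ⟨0, by simp [linForm]⟩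
  | add x y _ _ hx hy =>
    obtain ⟨u, rfl⟩ := hx
    obtain ⟨w, rfl⟩ := hy
    exact ⟨u + w, (linForm_add u w).symm⟩
  | smul c x _ hx =>
    obtain ⟨u, rfl⟩ := hx
    exact ⟨c • u, (linForm_smul c u).symm⟩

theorem rep_ne_smul {p q : C.Point} (h : p ≠ q) (c : ℂ) : p.1.rep ≠ c • q.1.rep :=
  fun hc => h (point_eq_of_smul hc).symm

/-- A conic that contains three points of a line contains the line. -/
theorem exists_eq_linForm_mul {u : Fin 3 → ℂ} (hu : u ≠ 0) {a : CoordRing} (ha : a.IsHomogeneous 2)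
    {p q r : C.Point} (hpq : p ≠ q) (hpr : p ≠ r) (hqr : q ≠ r) (hp : u ⬝ᵥ p.1.rep = 0)
    (hq : u ⬝ᵥ q.1.rep = 0) (hr : u ⬝ᵥ r.1.rep = 0) (hap : eval p.1.rep a = 0)
    (haq : eval q.1.rep a = 0) (har : eval r.1.rep a = 0) :
    ∃ m, a = linForm u * linForm m := by
  have hcomb : ∀ v, u ⬝ᵥ v = 0 → ∃ α β : ℂ, v = α • p.1.rep + β • q.1.rep := by
    intro v hv
    rw [dotProduct_comm] at hp hq hv
    exact exists_eq_add_of_dotProduct_eq_zero hu q.1.rep_nonzero (rep_ne_smul hpq) hp hq hv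
  obtain ⟨hdeg, hlead⟩ := restrictLine_coeff p.1.rep q.1.rep ha
  rw [haq] at hlead
  have hzero : restrictLine p.1.rep q.1.rep a = 0 := by
    obtain ⟨α, β, hαβ⟩ := hcomb _ hr
    have hα : α ≠ 0 := by
      rintro rfl
      rw [zero_smul, zero_add] at hαβ
      exact rep_ne_smul hqr.symm _ hαβ
    have hβ : β ≠ 0 := by
      rintro rfl
      rw [zero_smul, add_zero] at hαβ
      exact rep_ne_smul hpr.symm _ hαβ
    have hr' : r.1.rep = α • (p.1.rep + (β / α) • q.1.rep) := by
      rw [hαβ, smul_add, smul_smul, mul_div_cancel₀ _ hα]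
    by_contra hne
    have hlt : (restrictLine p.1.rep q.1.rep a).natDegree < 2 := by
      refine lt_of_le_of_ne hdeg fun h => hne ?_
      rw [← Polynomial.leadingCoeff_eq_zero, Polynomial.leadingCoeff, h, hlead]
    refine hne (Polynomial.eq_zero_of_natDegree_lt_card_of_eval_eq_zero' _ {0, β / α} ?_ ?_)
    · intro τ hτ
      rw [eval_restrictLine]
      rcases Finset.mem_insert.1 hτ with rfl | hτ
      · rw [zero_smul, add_zero, hap]
      · rw [Finset.mem_singleton.1 hτ]
        rw [hr', eval_smul_of_isHomogeneous ha] at har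
        exact (mul_eq_zero.1 har).resolve_left (pow_ne_zero _ hα)
    · rwa [Finset.card_pair (div_ne_zero hβ hα).symm]
  have hall : ∀ v, u ⬝ᵥ v = 0 → eval v a = 0 := by
    intro v hv
    obtain ⟨α, β, rfl⟩ := hcomb v hv
    by_cases hα : α = 0
    · rw [hα, zero_smul, zero_add, eval_smul_of_isHomogeneous ha, haq, mul_zero]
    · have h1 : α • p.1.rep + β • q.1.rep = α • (p.1.rep + (β / α) • q.1.rep) := by
        rw [smul_add, smul_smul, mul_div_cancel₀ _ hα]
      rw [h1, eval_smul_of_isHomogeneous ha, ← eval_restrictLine, hzero, Polynomial.eval_zero,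
        mul_zero]
  have hprime : (Ideal.span {linForm u}).IsPrime :=
    (Ideal.span_singleton_prime (prime_linForm hu).ne_zero).2 (prime_linForm hu)
  have hmem : a ∈ Ideal.span {linForm u} := by
    rw [← IsPrime.vanishingIdeal_zeroLocus (K := ℂ) (Ideal.span {linForm u}),
      mem_vanishingIdeal_iff]
    intro v hv
    refine hall v ?_
    have := hv (linForm u) (Ideal.mem_span_singleton_self _)
    rw [← eval_linForm]
    exact this
  obtain ⟨s, hs⟩ := Ideal.mem_span_singleton.1 hmem
  obtain ⟨m, hm⟩ := exists_eq_linForm (DirectSum.decompose coordGrading s 1).2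
  refine ⟨m, ?_⟩
  rw [← hm, ← DirectSum.coe_decompose_mul_add_of_left_mem coordGrading (linForm_isHomogeneous u),
    ← hs, DirectSum.decompose_of_mem_same coordGrading ha]

theorem exists_ne_smul_dotProduct_eq_zero (w : Fin 3 → ℂ) : ∃ c c' : Fin 3 → ℂ, c' ≠ 0 ∧
    (∀ t : ℂ, c ≠ t • c') ∧ c ⬝ᵥ w = 0 ∧ c' ⬝ᵥ w = 0 := by
  by_cases h0 : w 0 = 0
  · by_cases h1 : w 1 = 0
    · refine ⟨![1, 0, 0], ![0, 1, 0], fun h => ?_, fun t h => ?_, ?_, ?_⟩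
      · simpa using congrFun h 1
      · simpa using congrFun h 0
      · simp [dotProduct, Fin.sum_univ_three, h0]
      · simp [dotProduct, Fin.sum_univ_three, h1]
    · refine ⟨![1, 0, 0], ![0, -w 2, w 1], fun h => ?_, fun t h => ?_, ?_, ?_⟩
      · exact h1 (by simpa using congrFun h 2)
      · simpa using congrFun h 0
      · simp [dotProduct, Fin.sum_univ_three, h0]
      · simp [dotProduct, Fin.sum_univ_three]
        ring
  · refine ⟨![-w 1, w 0, 0], ![-w 2, 0, w 0], fun h => ?_, fun t h => ?_, ?_, ?_⟩
    · exact h0 (by simpa using congrFun h 2)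
    · exact h0 (by simpa using congrFun h 1)
    · simp [dotProduct, Fin.sum_univ_three]
      ring
    · simp [dotProduct, Fin.sum_univ_three]
      ring

/-- Two points, possibly infinitely near, impose independent conditions on lines. -/
theorem exists_eq_smul_of_ofMultiset_le {E : Multiset C.Point} (hE : E.card = 2)
    {u u' : Fin 3 → ℂ} (hu : u ≠ 0) (hu' : u' ≠ 0)
    (h : ∀ p, ofMultiset E p ≤ formOrd p 1 (C.ev (linForm u)))
    (h' : ∀ p, ofMultiset E p ≤ formOrd p 1 (C.ev (linForm u'))) : ∃ c : ℂ, u = c • u' := by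
  classical
  by_contra! hne
  obtain ⟨r, s, rfl⟩ := Multiset.card_eq_two.1 hE
  have happ : ∀ p, ofMultiset {r, s} p = Finsupp.single r (1 : ℤ) p + Finsupp.single s (1 : ℤ) p := by
    intro p
    rw [Multiset.insert_eq_cons, ofMultiset_cons, ← Multiset.cons_zero, ofMultiset_cons,
      ofMultiset_zero, add_zero, Finsupp.add_apply]
  simp only [happ] at h h'
  by_cases hrs : r = s
  · subst hrs
    have h1 := h r
    have h2 := h' r
    rw [Finsupp.single_eq_same] at h1 h2
    obtain ⟨a, ha⟩ := exists_eq_smul_grad hu h1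
    obtain ⟨b, hb⟩ := exists_eq_smul_grad hu' h2
    have hb0 : b ≠ 0 := by
      rintro rfl
      exact hu' (by rw [hb, zero_smul])
    exact hne (a / b) (by rw [hb, smul_smul, div_mul_cancel₀ _ hb0, ← ha])
  · have hr : ∀ {w : Fin 3 → ℂ}, w ≠ 0 → (∀ p, Finsupp.single r (1 : ℤ) p +
        Finsupp.single s (1 : ℤ) p ≤ formOrd p 1 (C.ev (linForm w))) →
        w ⬝ᵥ r.1.rep = 0 ∧ w ⬝ᵥ s.1.rep = 0 := by
      intro w hw hle
      rw [← eval_linForm, ← eval_linForm,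
        ← formOrd_pos_iff r (linForm_isHomogeneous w) (ev_linForm_ne_zero hw),
        ← formOrd_pos_iff s (linForm_isHomogeneous w) (ev_linForm_ne_zero hw)]
      have h1 := hle r
      have h2 := hle s
      rw [Finsupp.single_eq_same, Finsupp.single_apply, if_neg (Ne.symm hrs)] at h1
      rw [Finsupp.single_eq_same, Finsupp.single_apply, if_neg hrs] at h2
      exact ⟨by omega, by omega⟩
    refine hrs (point_eq_of_forall_dotProduct fun w hw => ?_)
    obtain ⟨α, β, rfl⟩ := exists_eq_add_of_dotProduct_eq_zero r.1.rep_nonzero hu' hne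
      (hr hu h).1 (hr hu' h').1 hw
    rw [add_dotProduct, smul_dotProduct, smul_dotProduct, (hr hu h).2, (hr hu' h').2, smul_zero,
      smul_zero, add_zero]

/-- If `∑ m_k x_k = 0` for linear forms `m_0, m_1, m_2`, then these are linearly dependent. -/
theorem exists_sum_smul_eq_zero {m : Fin 3 → Fin 3 → ℂ}
    (h : ∑ k, linForm (m k) * X k = 0) : ∃ c : Fin 3 → ℂ, c ≠ 0 ∧ ∑ k, c k • m k = 0 := by
  have hev : ∀ v : Fin 3 → ℂ, ∑ k, (m k ⬝ᵥ v) * v k = 0 := by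
    intro v
    have := congrArg (eval v) h
    simpa [eval_linForm] using this
  have h0 : ∀ k, m k k = 0 := by
    intro k
    have := hev (Pi.single k 1)
    simpa [Pi.single_apply] using this
  have h1 : ∀ j k, j ≠ k → m j k + m k j = 0 := by
    intro j k hjk
    have := hev (Pi.single j 1 + Pi.single k 1)
    simp only [dotProduct_add, Pi.add_apply, mul_add, Finset.sum_add_distrib,
      dotProduct_single, mul_one, Pi.single_apply, mul_ite, mul_zero, Finset.sum_ite_eq',
      Finset.mem_univ, if_true, h0] at this
    linear_combination this
  have hdet : (Matrix.of m).det = 0 := by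
    rw [Matrix.det_fin_three]
    have h01 := h1 0 1 (by decide)
    have h02 := h1 0 2 (by decide)
    have h12 := h1 1 2 (by decide)
    simp only [Matrix.of_apply, h0]
    rw [eq_neg_of_add_eq_zero_left h01, eq_neg_of_add_eq_zero_left h02,
      eq_neg_of_add_eq_zero_left h12]
    ring
  obtain ⟨c, hc, hcm⟩ := Matrix.exists_vecMul_eq_zero_iff.2 hdet
  refine ⟨c, hc, ?_⟩
  rw [← hcm]
  funext j
  simp [Matrix.vecMul, dotProduct, Finset.sum_apply]

theorem linForm_sum_smul (c : Fin 3 → ℂ) (m : Fin 3 → Fin 3 → ℂ) :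
    linForm (∑ k, c k • m k) = ∑ k, c k • linForm (m k) := by
  simp only [Fin.sum_univ_three, linForm_add, linForm_smul]

/-- Three conics `a_k` with `∑ a_k x_k = 0`, passing through two of the four points of a
transverse line and through two further points (possibly infinitely near), are linearly
dependent. -/
theorem exists_sum_smul_conic_eq_zero {u : Fin 3 → ℂ} (hu : u ≠ 0) {p q p' q' : C.Point}
    (hnodup : (p ::ₘ q ::ₘ {p', q'}).Nodup)
    (hE : ∀ z, ofMultiset (p ::ₘ q ::ₘ {p', q'}) z = formOrd z 1 (C.ev (linForm u)))
    {E : Multiset C.Point} (hcard : E.card = 2) {a : Fin 3 → CoordRing}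
    (ha : ∀ k, (a k).IsHomogeneous 2)
    (hle : ∀ c : Fin 3 → ℂ, ∑ k, c k • a k ≠ 0 → ∀ z, ofMultiset {p', q'} z + ofMultiset E z ≤
      formOrd z 2 (C.ev (∑ k, c k • a k)))
    (hrel : ∑ k, a k * X k = 0) : ∃ c : Fin 3 → ℂ, c ≠ 0 ∧ ∑ k, c k • a k = 0 := by
  classical
  by_contra! hne
  have hl := linForm_isHomogeneous u
  have hl0 := ev_linForm_ne_zero (C := C) hu
  have hhom : ∀ c : Fin 3 → ℂ, (∑ k, c k • a k).IsHomogeneous 2 := fun c =>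
    IsHomogeneous.sum _ _ _ fun k _ => (homogeneousSubmodule (Fin 3) ℂ 2).smul_mem (c k) (ha k)
  have hev0 : ∀ c : Fin 3 → ℂ, c ≠ 0 → C.ev (∑ k, c k • a k) ≠ 0 := fun c hc =>
    ev_ne_zero_of_lt (hhom c) (hne c hc) (by norm_num)
  have hmemline : ∀ z ∈ (p ::ₘ q ::ₘ {p', q'}), u ⬝ᵥ z.1.rep = 0 := by
    intro z hz
    rw [← eval_linForm, ← formOrd_pos_iff z hl hl0, ← hE, ofMultiset_apply_of_nodup hnodup,
      if_pos hz]
  have hnodup' : ({p', q'} : Multiset C.Point).Nodup :=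
    (Multiset.nodup_cons.1 (Multiset.nodup_cons.1 hnodup).2).2
  have hp'q' : p' ≠ q' := by simpa using hnodup'
  have hvanish : ∀ c : Fin 3 → ℂ, ∀ z, 1 ≤ ofMultiset {p', q'} z + ofMultiset E z →
      eval z.1.rep (∑ k, c k • a k) = 0 := by
    intro c z hz
    by_cases hc : ∑ k, c k • a k = 0
    · rw [hc, map_zero]
    · have hc0 : c ≠ 0 := by
        rintro rfl
        simp at hc
      rw [← formOrd_pos_iff z (hhom c) (hev0 c hc0)]
      exact hz.trans (hle c hc z)
  have hvan' : ∀ c : Fin 3 → ℂ, ∀ z ∈ ({p', q'} : Multiset C.Point),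
      eval z.1.rep (∑ k, c k • a k) = 0 := by
    intro c z hz
    apply hvanish
    rw [ofMultiset_apply_of_nodup hnodup', if_pos hz]
    have := ofMultiset_nonneg E z
    omega
  -- the conics that contain a third point of the line contain the line
  have hdiv : ∀ z, z ∈ (p ::ₘ q ::ₘ {p', q'}) → z ≠ p' → z ≠ q' → ∀ c : Fin 3 → ℂ,
      eval z.1.rep (∑ k, c k • a k) = 0 → ∃ m, ∑ k, c k • a k = linForm u * linForm m := by
    intro z hz hz1 hz2 c hc
    exact exists_eq_linForm_mul hu (hhom c) hp'q' (Ne.symm hz1) (Ne.symm hz2)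
      (hmemline p' (by simp)) (hmemline q' (by simp)) (hmemline z hz)
      (hvan' c p' (by simp)) (hvan' c q' (by simp)) hc
  have hcase : ∀ z, z ∈ (p ::ₘ q ::ₘ {p', q'}) → z ≠ p' → z ≠ q' → ofMultiset E z = 0 := by
    intro z hz hz1 hz2
    by_contra hEz
    have hEz' : 1 ≤ ofMultiset E z := by
      have := ofMultiset_nonneg E z
      omega
    have hk : ∀ k, ∃ m, a k = linForm u * linForm m := by
      intro k
      obtain ⟨m, hm⟩ := hdiv z hz hz1 hz2 (Pi.single k 1) (hvanish _ z (by
        have := ofMultiset_nonneg {p', q'} z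
        omega))
      refine ⟨m, ?_⟩
      rw [← hm]
      simp [Pi.single_apply, ite_smul]
    choose m hm using hk
    have hsum : ∑ k, linForm (m k) * X k = 0 := by
      apply mul_left_cancel₀ (prime_linForm hu).ne_zero
      rw [mul_zero, ← hrel, Finset.mul_sum]
      exact Finset.sum_congr rfl fun k _ => by rw [hm k]; ring
    obtain ⟨c, hc, hcm⟩ := exists_sum_smul_eq_zero hsum
    apply hne c hc
    have : ∑ k, c k • a k = linForm u * linForm (∑ k, c k • m k) := by
      rw [linForm_sum_smul, Finset.mul_sum]
      exact Finset.sum_congr rfl fun k _ => by rw [hm k, mul_smul_comm]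
    rw [this, hcm]
    simp [linForm]
  have hp1 : p ≠ p' ∧ p ≠ q' := by
    have := (Multiset.nodup_cons.1 hnodup).1
    simp at this
    exact ⟨this.2.1, this.2.2⟩
  have hq1 : q ≠ p' ∧ q ≠ q' := by
    have := (Multiset.nodup_cons.1 (Multiset.nodup_cons.1 hnodup).2).1
    simp at this
    exact this
  have hEp := hcase p (by simp) hp1.1 hp1.2
  have hEq := hcase q (by simp) hq1.1 hq1.2
  obtain ⟨c, c', hc', hcc', hcp, hcp'⟩ :=
    exists_ne_smul_dotProduct_eq_zero fun k => eval p.1.rep (a k)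
  have hc : c ≠ 0 := by simpa using hcc' 0
  have hfact : ∀ d : Fin 3 → ℂ, d ≠ 0 → (d ⬝ᵥ fun k => eval p.1.rep (a k)) = 0 →
      ∃ m, m ≠ 0 ∧ ∑ k, d k • a k = linForm u * linForm m ∧
        ∀ z, ofMultiset E z ≤ formOrd z 1 (C.ev (linForm m)) := by
    intro d hd hdp
    obtain ⟨m, hm⟩ := hdiv p (by simp) hp1.1 hp1.2 d (by
      refine Eq.trans ?_ hdp
      simp [dotProduct, smul_eval])
    have hm0 : m ≠ 0 := by
      rintro rfl
      apply hne d hd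
      rw [hm]
      simp [linForm]
    refine ⟨m, hm0, hm, fun z => ?_⟩
    have h1 := hle d (hne d hd) z
    rw [hm, map_mul, formOrd_mul z (m := 1) (n := 1) hl0 (ev_linForm_ne_zero hm0), ← hE,
      ofMultiset_cons, ofMultiset_cons] at h1
    simp only [Finsupp.add_apply, Finsupp.single_apply] at h1
    have h2 := formOrd_nonneg z (linForm_isHomogeneous m) (ev_linForm_ne_zero (C := C) hm0)
    split_ifs at h1 with h3 h4 h4
    · subst h3; omega
    · subst h3; omega
    · subst h4; omega
    · omega
  obtain ⟨m, hm0, hm, hmE⟩ := hfact c hc hcp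
  obtain ⟨m', hm0', hm', hmE'⟩ := hfact c' hc' hcp'
  obtain ⟨t, ht⟩ := exists_eq_smul_of_ofMultiset_le hcard hm0 hm0' hmE hmE'
  apply hne (c - t • c') (sub_ne_zero.2 (hcc' t))
  have : ∑ k, (c - t • c') k • a k = ∑ k, c k • a k - t • ∑ k, c' k • a k := by
    simp [sub_smul, mul_smul, Finset.smul_sum]
  rw [this, hm, hm', ht, linForm_smul, mul_smul_comm, sub_self]

/-! ### Triples of functions orthogonal to the generic point -/

theorem exists_ne_zero_mem_linSys {D : C.Point → ℤ} {g : Fin 3 → C.FunctionField}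
    (hg : ∀ k, g k ∈ C.linSys D) (hli : LinearIndependent ℂ g) {E : Multiset C.Point}
    (hE : E.card = 2) : ∃ c : Fin 3 → ℂ, ∑ k, c k • g k ≠ 0 ∧
      ∑ k, c k • g k ∈ C.linSys (D - ⇑(ofMultiset E)) := by
  set U := Submodule.span ℂ (Set.range g) with hU
  have hfin : FiniteDimensional ℂ U := FiniteDimensional.span_of_finite ℂ (Set.finite_range g)
  have h3 : Module.finrank ℂ U = 3 := by
    rw [hU, finrank_span_eq_card hli, Fintype.card_fin]
  have hle : U ≤ C.linSys D := Submodule.span_le.2 (by rintro _ ⟨k, rfl⟩; exact hg k)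
  have h1 := finrank_inf_linSys_le U D E
  rw [inf_eq_left.2 hle, h3, hE] at h1
  obtain ⟨f, hf, hf0⟩ := Submodule.exists_mem_ne_zero_of_ne_bot
    (Submodule.one_le_finrank_iff.1 (by omega :
      1 ≤ Module.finrank ℂ ↥(U ⊓ C.linSys (D - ⇑(ofMultiset E)))))
  obtain ⟨c, hc⟩ := (Submodule.mem_span_range_iff_exists_fun ℂ).1 hf.1
  exact ⟨c, by rwa [hc], by rw [hc]; exact hf.2⟩

theorem linearIndependent_coordQuotient : LinearIndependent ℂ C.coordQuotient := by
  rw [Fintype.linearIndependent_iff]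
  intro c hc j
  by_contra hj
  refine ev_linForm_ne_zero (C := C) (u := c) (fun h => hj (congrFun h j)) ?_
  rw [← hc, linForm, map_sum]
  exact Finset.sum_congr rfl fun k _ => by rw [map_smul, C.ev_X]

theorem ev_linForm (u : Fin 3 → ℂ) : C.ev (linForm u) = ∑ j, u j • C.coordQuotient j := by
  rw [linForm, map_sum]
  exact Finset.sum_congr rfl fun k _ => by rw [map_smul, C.ev_X]

theorem exists_line_through {E : Multiset C.Point} (hE : E.card = 2) :
    ∃ u : Fin 3 → ℂ, u ≠ 0 ∧ ∀ p, ofMultiset E p ≤ formOrd p 1 (C.ev (linForm u)) := by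
  have hmem : ∀ k, C.coordQuotient k ∈ C.linSys C.hyp := by
    intro k
    have h : C.coordQuotient k ∈ C.formSpace 1 := ⟨X k, isHomogeneous_X ℂ k, C.ev_X k⟩
    rw [formSpace_eq_linSys] at h
    simpa using h
  obtain ⟨c, hc0, hc⟩ := exists_ne_zero_mem_linSys hmem linearIndependent_coordQuotient hE
  rw [← ev_linForm] at hc hc0
  refine ⟨c, ?_, fun p => ?_⟩
  · rintro rfl
    apply hc0
    simp [linForm]
  · have h := (mem_linSys.1 hc p).resolve_left hc0
    rw [Pi.sub_apply] at h
    rw [formOrd_eq, Nat.cast_one, one_mul]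
    omega

theorem ord_linForm (p : C.Point) (u : Fin 3 → ℂ) :
    ord p (C.ev (linForm u)) = formOrd p 1 (C.ev (linForm u)) - C.hyp p := by
  rw [formOrd_eq, Nat.cast_one, one_mul, add_sub_cancel_right]

/-- Sections of `T_{ℙ²}|_C(-1) ⊗ N⁻¹` with `N` of degree zero come from points of the plane. -/
theorem exists_sum_smul_eq_zero_of_mem_linSys {D : C.Divisor} (hD : deg D = 0)
    {g : Fin 3 → C.FunctionField} (hg : ∀ k, g k ∈ C.linSys (C.hyp - ⇑D))
    (hrel : ∑ k, g k * C.coordQuotient k = 0) :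
    ∃ v : Fin 3 → ℂ, v ≠ 0 ∧ ∑ k, v k • g k = 0 := by
  by_cases hli : LinearIndependent ℂ g
  swap
  · obtain ⟨v, hv, j, hj⟩ := Fintype.not_linearIndependent_iff.1 hli
    exact ⟨v, fun h => hj (congrFun h j), hv⟩
  obtain ⟨u, E₁, hu, hnodup, hcard, hE₁⟩ := exists_line_nodup (C := C)
  obtain ⟨p, q, p', q', rfl⟩ : ∃ p q p' q', E₁ = p ::ₘ q ::ₘ {p', q'} := by
    obtain ⟨p, hp⟩ := Multiset.card_pos_iff_exists_mem.1 (by omega : 0 < E₁.card)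
    obtain ⟨E₂, rfl⟩ := Multiset.exists_cons_of_mem hp
    rw [Multiset.card_cons] at hcard
    obtain ⟨q, hq⟩ := Multiset.card_pos_iff_exists_mem.1 (by omega : 0 < E₂.card)
    obtain ⟨E₃, rfl⟩ := Multiset.exists_cons_of_mem hq
    rw [Multiset.card_cons] at hcard
    have h3 : E₃.card = 2 := by omega
    obtain ⟨p', q', rfl⟩ := Multiset.card_eq_two.1 h3
    exact ⟨p, q, p', q', rfl⟩
  obtain ⟨c₀, hf0, hf⟩ := exists_ne_zero_mem_linSys hg hli (E := {p, q}) rfl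
  set f := ∑ k, c₀ k • g k with hfdef
  obtain ⟨Df, hDf, hdegf⟩ := exists_principal_divisor hf0
  obtain ⟨H, hH, hdegH⟩ := exists_hyp_divisor (C := C)
  obtain ⟨R, hR⟩ := exists_eq_ofMultiset (D := Df + H - D - ofMultiset {p, q}) (by
    intro z
    have h := (mem_linSys.1 hf z).resolve_left hf0
    simp only [Finsupp.sub_apply, Finsupp.add_apply, hDf, hH]
    simp only [Pi.sub_apply] at h
    omega)
  have hRcard : R.card = 2 := by
    have h := congrArg deg hR
    rw [map_sub, map_sub, map_add, deg_ofMultiset, deg_ofMultiset, hdegf, hdegH, hD] at h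
    simp at h
    omega
  have hordf : ∀ z, ord z f = ofMultiset R z - C.hyp z + D z + ofMultiset {p, q} z := by
    intro z
    have h := DFunLike.congr_fun hR z
    simp only [Finsupp.sub_apply, Finsupp.add_apply, hDf, hH] at h
    omega
  obtain ⟨u₂, hu₂, hle₂⟩ := exists_line_through hRcard
  have hl := ev_linForm_ne_zero (C := C) hu
  have hl₂ := ev_linForm_ne_zero (C := C) hu₂
  obtain ⟨E₂, hE₂⟩ := exists_divisor_of_form (linForm_isHomogeneous u₂) hl₂
  have hcard₂ := card_of_linForm hu₂ hE₂
  obtain ⟨E, hEeq⟩ := exists_eq_ofMultiset (D := ofMultiset E₂ - ofMultiset R) (by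
    intro z
    rw [Finsupp.sub_apply, hE₂]
    have := hle₂ z
    omega)
  have hEcard : E.card = 2 := by
    have h := congrArg deg hEeq
    rw [map_sub, deg_ofMultiset, deg_ofMultiset, deg_ofMultiset, hcard₂, hRcard] at h
    omega
  have hord₂ : ∀ z, ord z (C.ev (linForm u₂)) = ofMultiset E z + ofMultiset R z - C.hyp z := by
    intro z
    have h := DFunLike.congr_fun hEeq z
    rw [Finsupp.sub_apply] at h
    rw [ord_linForm, ← hE₂]
    omega
  have hord₁ : ∀ z, ord z (C.ev (linForm u)) =
      ofMultiset {p, q} z + ofMultiset {p', q'} z - C.hyp z := by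
    intro z
    rw [ord_linForm, ← hE₁]
    simp only [Multiset.insert_eq_cons, ← Multiset.cons_zero, ofMultiset_cons, ofMultiset_zero,
      Finsupp.add_apply, Finsupp.coe_zero, Pi.zero_apply]
    ring
  set φ := C.ev (linForm u) * C.ev (linForm u₂) / f with hφ
  have hφ0 : φ ≠ 0 := div_ne_zero (mul_ne_zero hl hl₂) hf0
  have hordφ : ∀ z, ord z φ = ofMultiset {p', q'} z + ofMultiset E z - C.hyp z - D z := by
    intro z
    rw [hφ, ord_div z (mul_ne_zero hl hl₂) hf0, ord_mul z hl hl₂, hord₁, hord₂, hordf]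
    ring
  have hbound : ∀ h ∈ C.linSys (C.hyp - ⇑D), h * φ ≠ 0 → ∀ z,
      ofMultiset {p', q'} z + ofMultiset E z ≤ formOrd z 2 (h * φ) := by
    intro h hh h0 z
    have hh0 : h ≠ 0 := left_ne_zero_of_mul h0
    have h1 := (mem_linSys.1 hh z).resolve_left hh0
    rw [Pi.sub_apply] at h1
    rw [formOrd_eq, ord_mul z hh0 hφ0, hordφ]
    push_cast
    linarith
  have hconic : ∀ k, ∃ a : CoordRing, a.IsHomogeneous 2 ∧ g k * φ = C.ev a := by
    intro k
    refine exists_eq_ev_of_formOrd_nonneg fun z => ?_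
    by_cases h0 : g k * φ = 0
    · exact Or.inl h0
    · right
      have h1 := hbound _ (hg k) h0 z
      have h2 := ofMultiset_nonneg {p', q'} z
      have h3 := ofMultiset_nonneg E z
      omega
  choose a ha hga using hconic
  have hsum : ∀ c : Fin 3 → ℂ, C.ev (∑ k, c k • a k) = (∑ k, c k • g k) * φ := by
    intro c
    rw [map_sum, Finset.sum_mul]
    exact Finset.sum_congr rfl fun k _ => by rw [map_smul, ← hga, smul_mul_assoc]
  have hmemsum : ∀ c : Fin 3 → ℂ, ∑ k, c k • g k ∈ C.linSys (C.hyp - ⇑D) := fun c =>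
    sum_mem fun k _ => Submodule.smul_mem _ _ (hg k)
  have hrel' : ∑ k, a k * X k = 0 := by
    by_contra hne
    have hhom : (∑ k, a k * X k).IsHomogeneous 3 :=
      IsHomogeneous.sum _ _ _ fun k _ => (ha k).mul (isHomogeneous_X ℂ k)
    apply ev_ne_zero_of_lt (C := C) hhom hne (by norm_num)
    rw [map_sum]
    have : ∀ k, C.ev (a k * X k) = g k * C.coordQuotient k * φ := by
      intro k
      rw [map_mul, ← hga, C.ev_X]
      ring
    rw [Finset.sum_congr rfl fun k _ => this k, ← Finset.sum_mul, hrel, zero_mul]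
  have hhom : ∀ c : Fin 3 → ℂ, (∑ k, c k • a k).IsHomogeneous 2 := fun c =>
    IsHomogeneous.sum _ _ _ fun k _ => (homogeneousSubmodule (Fin 3) ℂ 2).smul_mem (c k) (ha k)
  obtain ⟨c, hc, hca⟩ := exists_sum_smul_conic_eq_zero hu hnodup hE₁ hEcard ha (by
    intro c hc z
    have h0 := ev_ne_zero_of_lt (C := C) (hhom c) hc (by norm_num)
    rw [hsum] at h0 ⊢
    exact hbound _ (hmemsum c) h0 z) hrel'
  refine ⟨c, hc, ?_⟩
  have h1 := hsum c
  rw [hca, map_zero, eq_comm, mul_eq_zero] at h1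
  exact h1.resolve_right hφ0

/-! ### The stalks of the twisted restricted tangent bundle -/

section PrincipalStalks

variable {V : Type} [AddCommGroup V] [Module C.FunctionField V]

theorem mem_span_singleton_smul_iff {p : C.Point} {s : C.FunctionField} (hs : s ≠ 0)
    (E : Submodule (C.localRing p) V) (x : V) :
    x ∈ Submodule.span (C.localRing p) {s} • E ↔ s⁻¹ • x ∈ E := by
  constructor
  · intro hx
    refine Submodule.smul_induction_on hx (fun r hr n hn => ?_) fun x y hx hy => ?_
    · obtain ⟨c, rfl⟩ := Submodule.mem_span_singleton.1 hr
      have : s⁻¹ • (c • s) • n = c • n := by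
        change s⁻¹ • (c.1 * s) • n = c.1 • n
        rw [smul_smul, mul_left_comm, inv_mul_cancel₀ hs, mul_one]
      rw [this]
      exact E.smul_mem c hn
    · rw [smul_add]
      exact add_mem hx hy
  · intro hx
    rw [← smul_inv_smul₀ hs x]
    exact Submodule.smul_mem_smul (Submodule.mem_span_singleton_self s) hx

theorem one_div_span_singleton {p : C.Point} {s : C.FunctionField} (hs : s ≠ 0) :
    (1 : Submodule (C.localRing p) C.FunctionField) / Submodule.span (C.localRing p) {s} =
      Submodule.span (C.localRing p) {s⁻¹} := by
  ext f
  rw [Submodule.mem_div_iff_forall_mul_mem, Submodule.mem_span_singleton]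
  constructor
  · intro h
    have h1 := (mem_one_iff p _).1 (h s (Submodule.mem_span_singleton_self s))
    exact ⟨⟨_, h1⟩, mul_inv_cancel_right₀ hs f⟩
  · rintro ⟨c, rfl⟩ y hy
    obtain ⟨d, rfl⟩ := Submodule.mem_span_singleton.1 hy
    rw [mem_one_iff]
    change c.1 * s⁻¹ * (d.1 * s) ∈ _
    have : c.1 * s⁻¹ * (d.1 * s) = c.1 * d.1 := by field_simp
    rw [this]
    exact mul_mem c.2 d.2

end PrincipalStalks

theorem maxIdealPow_eq_span (p : C.Point) (n : ℤ) :
    C.maxIdealPow p n = Submodule.span (C.localRing p) {unif p ^ n} := by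
  have ht := zpow_ne_zero n (unif_ne_zero p)
  ext f
  rw [mem_maxIdealPow_iff, Submodule.mem_span_singleton]
  have key : f = 0 ∨ n ≤ ord p f ↔ f * unif p ^ (-n) ∈ C.localRing p := by
    by_cases h : f = 0
    · simp [h]
    · rw [mul_zpow_mem_localRing_iff p h]
      simp only [h, false_or]
      omega
  rw [key, zpow_neg]
  constructor
  · exact fun h => ⟨⟨_, h⟩, inv_mul_cancel_right₀ ht f⟩
  · rintro ⟨c, rfl⟩
    change c.1 * unif p ^ n * _ ∈ _
    rw [mul_inv_cancel_right₀ ht]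
    exact c.2

theorem ord_unif_zpow (p : C.Point) (n : ℤ) : ord p (unif p ^ n) = n := by
  apply ord_eq_of_isLocalUnit
  rw [div_self (zpow_ne_zero n (unif_ne_zero p))]
  exact ⟨(C.localRing p).one_mem, one_notMem_maxIdeal p⟩

theorem coordQuotient_div_mem_localRing (p : C.Point) (j : Fin 3) :
    C.coordQuotient j / C.coordQuotient (chart p) ∈ C.localRing p := by
  have := affineEval_mem_localRing p (X j)
  rwa [affineEval, aeval_X] at this

theorem hyperplaneBundle_eq_span (p : C.Point) : C.hyperplaneBundle p =
    Submodule.span (C.localRing p) {C.coordQuotient (chart p)} := by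
  apply le_antisymm
  · refine Submodule.span_le.2 ?_
    rintro _ ⟨j, rfl⟩
    exact Submodule.mem_span_singleton.2 ⟨⟨_, coordQuotient_div_mem_localRing p j⟩,
      div_mul_cancel₀ _ (coordQuotient_ne_zero _)⟩
  · rw [Submodule.span_singleton_le_iff_mem]
    exact Submodule.subset_span ⟨_, rfl⟩

theorem mem_planeTangentTwist_twist_iff (D : C.Divisor) (p : C.Point) (δ : C.GenericTangent) :
    δ ∈ (C.planeTangentTwist.twist (C.lineBundle D).dual) p ↔
      (C.coordQuotient (chart p) * unif p ^ (-D p)) • δ ∈ C.planeTangent p := by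
  change δ ∈ (1 / C.maxIdealPow p (-D p)) • ((1 / C.hyperplaneBundle p) • C.planeTangent p) ↔ _
  have ht := zpow_ne_zero (-D p) (unif_ne_zero p)
  have hy := coordQuotient_ne_zero (C := C) (chart p)
  rw [maxIdealPow_eq_span, hyperplaneBundle_eq_span, one_div_span_singleton ht,
    one_div_span_singleton hy, mem_span_singleton_smul_iff (inv_ne_zero ht),
    mem_span_singleton_smul_iff (inv_ne_zero hy), inv_inv, inv_inv, smul_smul]

theorem X_chart_mem (p : C.Point) :
    (X (chart p) : CoordRing) ∈ (RingHom.ker (eval p.1.rep : CoordRing →+* ℂ)).primeCompl := by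
  intro h
  apply rep_chart_ne_zero p
  have := RingHom.mem_ker.1 h
  rwa [eval_X] at this

theorem planeGeneralize_algebraMap (p : C.Point) (c : ℂ) :
    C.planeGeneralize p (algebraMap ℂ _ c) = algebraMap ℂ _ c := rfl

/-- The map `𝒪_{ℙ²,p} → 𝒪_{ℙ²,C}` of `ℂ`-algebras. -/
def planeGeneralizeHom (p : C.Point) : C.PlaneLocalRing p →ₐ[ℂ] C.PlaneGenericRing where
  __ := C.planeGeneralize p
  commutes' := planeGeneralize_algebraMap p

theorem planeGeneralize_aeval (p : C.Point) (a : CoordRing) :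
    C.planeGeneralize p (aeval (coordRatio (X_chart_mem p)) a) =
      aeval (coordRatio (C.X_mem_generic (chart p))) a := by
  change planeGeneralizeHom p _ = _
  rw [comp_aeval_apply]
  rfl

theorem residueHom_coordRatio (i j : Fin 3) :
    C.residueHom (coordRatio (C.X_mem_generic i) j) = C.coordQuotient j / C.coordQuotient i := by
  rw [← C.ev_X, ← C.ev_X]
  exact C.residueHom_formFrac (isHomogeneous_X ℂ j) (isHomogeneous_X ℂ i) (C.X_mem_generic i)

theorem residueHom_aeval_coordRatio (i : Fin 3) (a : CoordRing) :
    C.residueHom (aeval (coordRatio (C.X_mem_generic i)) a) = C.affineEval i a := by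
  rw [comp_aeval_apply, affineEval]
  congr 2
  funext j
  exact residueHom_coordRatio i j

theorem smul_eq_residueHom_mul (z : C.PlaneGenericRing) (f : C.FunctionField) :
    z • f = C.residueHom z * f := rfl

theorem mem_planeTangent_iff (p : C.Point) (δ : C.GenericTangent) : δ ∈ C.planeTangent p ↔
    ∀ j, δ (coordRatio (C.X_mem_generic (chart p)) j) ∈ C.localRing p := by
  constructor
  · exact fun h j => h (coordRatio (X_chart_mem p) j)
  · intro h
    have hpoly : ∀ a, δ (aeval (R := ℂ) (coordRatio (C.X_mem_generic (chart p))) a) ∈ C.localRing p := by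
      intro a
      induction a using MvPolynomial.induction_on with
      | C c =>
        rw [aeval_C, Derivation.map_algebraMap]
        exact zero_mem _
      | add a b ha hb =>
        rw [map_add, map_add]
        exact add_mem ha hb
      | mul_X a j ha =>
        rw [map_mul, aeval_X, Derivation.leibniz, smul_eq_residueHom_mul, smul_eq_residueHom_mul,
          residueHom_aeval_coordRatio, residueHom_coordRatio]
        exact add_mem (mul_mem (affineEval_mem_localRing p a) (h j))
          (mul_mem (coordQuotient_div_mem_localRing p j) ha)
    intro z
    have hz : C.residueHom (C.planeGeneralize p z) ∈ C.localRing p := ⟨z, rfl⟩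
    obtain ⟨n, a, b, ha, hb, hM, rfl⟩ := exists_eq_formFrac z
    have h1 := congrArg (fun x => δ (C.planeGeneralize p x))
      (formFrac_mul_aeval (X_chart_mem p) ha hb hM)
    simp only [map_mul, planeGeneralize_aeval] at h1
    rw [Derivation.leibniz, smul_eq_residueHom_mul, smul_eq_residueHom_mul,
      residueHom_aeval_coordRatio] at h1
    have hb' : eval (normRep p) b ≠ 0 := fun h0 => hM ((eval_normRep_eq_zero_iff p hb).1 h0)
    have hb0 : C.affineEval (chart p) b ≠ 0 :=
      affineEval_ne_zero _ hb (ev_ne_zero_of_eval_ne_zero p hb hM)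
    set w := δ (C.planeGeneralize p (formFrac ha hb hM)) with hw
    have h2 : w = (C.affineEval (chart p) b)⁻¹ *
        (δ (aeval (coordRatio (C.X_mem_generic (chart p))) a) -
          C.residueHom (C.planeGeneralize p (formFrac ha hb hM)) *
            δ (aeval (coordRatio (C.X_mem_generic (chart p))) b)) := by
      rw [← h1]
      field_simp
      ring
    rw [h2]
    exact mul_mem (affineEval_inv_mem p hb') (sub_mem (hpoly a) (mul_mem hz (hpoly b)))

/-- The derivatives of the affine coordinates `x_j / x_0`. -/
def affineDeriv (δ : C.GenericTangent) (j : Fin 3) : C.FunctionField :=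
  δ (coordRatio (C.X_mem_generic 0) j)

/-- The coordinates `(y ∧ a)_{ij}` of the section of `T_{ℙ²}(-1) ⊂ ⋀² ℂ³ ⊗ 𝒪(1)` given by a
derivation. -/
def wedge (δ : C.GenericTangent) (i j : Fin 3) : C.FunctionField :=
  C.coordQuotient i * affineDeriv δ j - C.coordQuotient j * affineDeriv δ i

theorem coordRatio_mul (i j : Fin 3) : coordRatio (C.X_mem_generic i) j *
    coordRatio (C.X_mem_generic 0) i = coordRatio (C.X_mem_generic 0) j := by
  apply HomogeneousLocalization.val_injective
  rw [HomogeneousLocalization.val_mul]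
  change Localization.mk _ _ * Localization.mk _ _ = Localization.mk _ _
  rw [Localization.mk_mul, Localization.mk_eq_mk_iff, Localization.r_iff_exists]
  exact ⟨1, by simp; ring⟩

theorem derivation_coordRatio (δ : C.GenericTangent) (i j : Fin 3) :
    δ (coordRatio (C.X_mem_generic i) j) = wedge δ i j / C.coordQuotient i ^ 2 := by
  have h := congrArg δ (coordRatio_mul (C := C) i j)
  rw [Derivation.leibniz, smul_eq_residueHom_mul, smul_eq_residueHom_mul, residueHom_coordRatio,
    residueHom_coordRatio, coordQuotient_zero, div_one] at h
  have hi := coordQuotient_ne_zero (C := C) i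
  rw [wedge, affineDeriv, affineDeriv, ← h, eq_div_iff (pow_ne_zero 2 hi)]
  field_simp
  ring

theorem mem_stalk_iff (D : C.Divisor) (p : C.Point) (δ : C.GenericTangent) :
    δ ∈ (C.planeTangentTwist.twist (C.lineBundle D).dual) p ↔
      ∀ j, wedge δ (chart p) j ∈ C.maxIdealPow p (D p - C.hyp p) := by
  rw [mem_planeTangentTwist_twist_iff, mem_planeTangent_iff]
  refine forall_congr' fun j => ?_
  have hy := coordQuotient_ne_zero (C := C) (chart p)
  have ht := zpow_ne_zero (-D p) (unif_ne_zero p)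
  rw [Derivation.smul_apply, derivation_coordRatio, smul_eq_mul, mem_maxIdealPow_iff]
  by_cases h0 : wedge δ (chart p) j = 0
  · simp [h0]
  · rw [mem_localRing_iff_ord p (mul_ne_zero (mul_ne_zero hy ht)
      (div_ne_zero h0 (pow_ne_zero 2 hy))), ord_mul p (mul_ne_zero hy ht)
      (div_ne_zero h0 (pow_ne_zero 2 hy)), ord_mul p hy ht, ord_div p h0 (pow_ne_zero 2 hy),
      ord_pow p hy, ord_unif_zpow, hyp]
    simp only [h0, false_or]
    push_cast
    constructor <;> intro h <;> linarith

theorem wedge_eq (δ : C.GenericTangent) (p : C.Point) (i j : Fin 3) : wedge δ i j =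
    C.coordQuotient i / C.coordQuotient (chart p) * wedge δ (chart p) j -
      C.coordQuotient j / C.coordQuotient (chart p) * wedge δ (chart p) i := by
  have hy := coordQuotient_ne_zero (C := C) (chart p)
  simp only [wedge]
  field_simp
  ring

theorem mem_globalSections_iff (D : C.Divisor) (δ : C.GenericTangent) :
    δ ∈ (C.planeTangentTwist.twist (C.lineBundle D).dual).globalSections ↔
      ∀ i j, wedge δ i j ∈ C.linSys (C.hyp - ⇑D) := by
  simp only [SubSheaf.globalSections, linSys, Submodule.mem_iInf, Submodule.restrictScalars_mem,
    mem_stalk_iff, Pi.sub_apply, neg_sub]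
  constructor
  · intro h i j p
    rw [wedge_eq δ p]
    exact sub_mem (Submodule.smul_mem _ ⟨_, coordQuotient_div_mem_localRing p i⟩ (h p j))
      (Submodule.smul_mem _ ⟨_, coordQuotient_div_mem_localRing p j⟩ (h p i))
  · exact fun h p j => h _ j p

theorem coordRatio_self : coordRatio (C.X_mem_generic 0) 0 = 1 := by
  apply HomogeneousLocalization.val_injective
  rw [HomogeneousLocalization.val_one]
  exact Localization.mk_self (⟨X 0, C.X_mem_generic 0⟩ : (Ideal.span {C.poly}).primeCompl)

theorem affineDeriv_zero (δ : C.GenericTangent) : affineDeriv δ 0 = 0 := by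
  rw [affineDeriv, coordRatio_self, Derivation.map_one_eq_zero]

theorem eq_zero_of_affineDeriv_eq_zero {δ : C.GenericTangent} (h : ∀ j, affineDeriv δ j = 0) :
    δ = 0 := by
  have hpoly : ∀ a, δ (aeval (R := ℂ) (coordRatio (C.X_mem_generic 0)) a) = 0 := by
    intro a
    induction a using MvPolynomial.induction_on with
    | C c => rw [aeval_C, Derivation.map_algebraMap]
    | add a b ha hb => rw [map_add, map_add, ha, hb, add_zero]
    | mul_X a j ha =>
      rw [map_mul, aeval_X, Derivation.leibniz, ha, smul_zero, add_zero]
      exact (congrArg _ (h j)).trans (smul_zero _)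
  ext z
  obtain ⟨n, a, b, ha, hb, hM, rfl⟩ := exists_eq_formFrac z
  have h1 := congrArg δ (formFrac_mul_aeval (C.X_mem_generic 0) ha hb hM)
  rw [Derivation.leibniz, hpoly, hpoly, smul_zero, zero_add, smul_eq_residueHom_mul,
    residueHom_aeval, mul_eq_zero] at h1
  exact h1.resolve_left fun h => hM (Ideal.mem_span_singleton.2 ((C.ev_eq_zero_iff hb).1 h))

/-! ### The sections given by the points of the plane -/

/-- The derivative in the constant direction `v`. -/
def dirDeriv (v : Fin 3 → ℂ) : Derivation ℂ CoordRing CoordRing :=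
  mkDerivation ℂ fun i => MvPolynomial.C (v i)

/-- The derivative of `a / b` in the direction `v`, restricted to `C`. -/
def quotDeriv (C : SmoothPlaneQuartic) (v : Fin 3 → ℂ) (a b : CoordRing) : C.FunctionField :=
  (C.ev b * C.ev (dirDeriv v a) - C.ev a * C.ev (dirDeriv v b)) / C.ev b ^ 2

theorem ev_ne_zero_of_mem {n : ℕ} {b : CoordRing} (hb : b.IsHomogeneous n)
    (hM : b ∈ (Ideal.span {C.poly}).primeCompl) : C.ev b ≠ 0 :=
  fun h => hM (Ideal.mem_span_singleton.2 ((C.ev_eq_zero_iff hb).1 h))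

theorem quotDeriv_congr (v : Fin 3 → ℂ) {n m : ℕ} {a b a' b' : CoordRing}
    (ha : a.IsHomogeneous n) (hb : b.IsHomogeneous n)
    (hM : b ∈ (Ideal.span {C.poly}).primeCompl) (ha' : a'.IsHomogeneous m)
    (hb' : b'.IsHomogeneous m) (hM' : b' ∈ (Ideal.span {C.poly}).primeCompl)
    (h : formFrac ha hb hM = formFrac ha' hb' hM') : C.quotDeriv v a b = C.quotDeriv v a' b' := by
  have h1 := congrArg HomogeneousLocalization.val h
  rw [val_formFrac, val_formFrac, Localization.mk_eq_mk_iff, Localization.r_iff_exists] at h1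
  obtain ⟨c, hc⟩ := h1
  have hc0 : (c : CoordRing) ≠ 0 := fun h0 => c.2 (h0 ▸ zero_mem _)
  have h2 : b' * a = b * a' := mul_left_cancel₀ hc0 hc
  have h3 := congrArg C.ev h2
  have h4 := congrArg (fun x => C.ev (dirDeriv v x)) h2
  simp only [Derivation.leibniz, smul_eq_mul, map_add, map_mul] at h3 h4
  rw [quotDeriv, quotDeriv, div_eq_div_iff (pow_ne_zero 2 (ev_ne_zero_of_mem hb hM))
    (pow_ne_zero 2 (ev_ne_zero_of_mem hb' hM'))]
  linear_combination (C.ev b * C.ev b') * h4 -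
    (C.ev b' * C.ev (dirDeriv v b) + C.ev b * C.ev (dirDeriv v b')) * h3

/-- The function `quotDeriv` on fractions. -/
def quotDerivFun (v : Fin 3 → ℂ) (z : C.PlaneGenericRing) : C.FunctionField :=
  C.quotDeriv v (exists_eq_formFrac z).choose_spec.choose
    (exists_eq_formFrac z).choose_spec.choose_spec.choose

theorem quotDerivFun_formFrac (v : Fin 3 → ℂ) {n : ℕ} {a b : CoordRing} (ha : a.IsHomogeneous n)
    (hb : b.IsHomogeneous n) (hM : b ∈ (Ideal.span {C.poly}).primeCompl) :
    quotDerivFun v (formFrac ha hb hM : C.PlaneGenericRing) = C.quotDeriv v a b := by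
  obtain ⟨ha', hb', hM', h⟩ :=
    (exists_eq_formFrac (formFrac ha hb hM)).choose_spec.choose_spec.choose_spec
  exact (quotDeriv_congr v ha hb hM ha' hb' hM' h).symm

theorem formFrac_mul {M : Submonoid CoordRing} {n m : ℕ} {a b a' b' : CoordRing}
    (ha : a.IsHomogeneous n) (hb : b.IsHomogeneous n) (hM : b ∈ M) (ha' : a'.IsHomogeneous m)
    (hb' : b'.IsHomogeneous m) (hM' : b' ∈ M) : formFrac ha hb hM * formFrac ha' hb' hM' =
      formFrac (ha.mul ha') (hb.mul hb') (M.mul_mem hM hM') := rfl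

theorem formFrac_add {M : Submonoid CoordRing} {n m : ℕ} {a b a' b' : CoordRing}
    (ha : a.IsHomogeneous n) (hb : b.IsHomogeneous n) (hM : b ∈ M) (ha' : a'.IsHomogeneous m)
    (hb' : b'.IsHomogeneous m) (hM' : b' ∈ M) : formFrac ha hb hM + formFrac ha' hb' hM' =
      formFrac ((hb.mul ha').add (add_comm m n ▸ hb'.mul ha)) (hb.mul hb') (M.mul_mem hM hM') := rfl

theorem isHomogeneous_smul (c : ℂ) {n : ℕ} {a : CoordRing} (ha : a.IsHomogeneous n) :
    (c • a).IsHomogeneous n := (homogeneousSubmodule (Fin 3) ℂ n).smul_mem c ha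

theorem formFrac_smul {M : Submonoid CoordRing} {n : ℕ} {a b : CoordRing} (c : ℂ)
    (ha : a.IsHomogeneous n) (hb : b.IsHomogeneous n) (hM : b ∈ M) : c • formFrac ha hb hM =
      formFrac (isHomogeneous_smul c ha) hb hM := rfl

theorem quotDerivFun_add (v : Fin 3 → ℂ) (z w : C.PlaneGenericRing) :
    quotDerivFun v (z + w) = quotDerivFun v z + quotDerivFun v w := by
  obtain ⟨n, a, b, ha, hb, hM, rfl⟩ := exists_eq_formFrac z
  obtain ⟨m, a', b', ha', hb', hM', rfl⟩ := exists_eq_formFrac w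
  have h1 := ev_ne_zero_of_mem hb hM
  have h2 := ev_ne_zero_of_mem hb' hM'
  rw [formFrac_add, quotDerivFun_formFrac, quotDerivFun_formFrac, quotDerivFun_formFrac]
  simp only [quotDeriv, Derivation.leibniz, smul_eq_mul, map_add, map_mul]
  field_simp
  ring

theorem quotDerivFun_smul (v : Fin 3 → ℂ) (c : ℂ) (z : C.PlaneGenericRing) :
    quotDerivFun v (c • z) = c • quotDerivFun v z := by
  obtain ⟨n, a, b, ha, hb, hM, rfl⟩ := exists_eq_formFrac z
  rw [formFrac_smul, quotDerivFun_formFrac, quotDerivFun_formFrac, quotDeriv, quotDeriv,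
    ← smul_div_assoc, smul_sub, Derivation.map_smul, map_smul, map_smul, mul_smul_comm,
    smul_mul_assoc]

theorem quotDerivFun_mul (v : Fin 3 → ℂ) (z w : C.PlaneGenericRing) :
    quotDerivFun v (z * w) =
      C.residueHom z * quotDerivFun v w + C.residueHom w * quotDerivFun v z := by
  obtain ⟨n, a, b, ha, hb, hM, rfl⟩ := exists_eq_formFrac z
  obtain ⟨m, a', b', ha', hb', hM', rfl⟩ := exists_eq_formFrac w
  have h1 := ev_ne_zero_of_mem hb hM
  have h2 := ev_ne_zero_of_mem hb' hM'
  rw [C.residueHom_formFrac, C.residueHom_formFrac, formFrac_mul, quotDerivFun_formFrac,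
    quotDerivFun_formFrac, quotDerivFun_formFrac]
  simp only [quotDeriv, Derivation.leibniz, smul_eq_mul, map_add, map_mul]
  field_simp
  ring

/-- The derivation `𝒪_{ℙ²,C} → K` given by the vector field `x_0 ∂_v`. -/
def constDerivation (C : SmoothPlaneQuartic) (v : Fin 3 → ℂ) : C.GenericTangent :=
  Derivation.mk'
    { toFun := quotDerivFun v
      map_add' := quotDerivFun_add v
      map_smul' := quotDerivFun_smul v }
    (quotDerivFun_mul v)

theorem affineDeriv_constDerivation (v : Fin 3 → ℂ) (j : Fin 3) :
    affineDeriv (C.constDerivation v) j =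
      algebraMap ℂ _ (v j) - C.coordQuotient j * algebraMap ℂ _ (v 0) := by
  have h := quotDerivFun_formFrac v (isHomogeneous_X ℂ j) (isHomogeneous_X ℂ 0) (C.X_mem_generic 0)
  refine h.trans ?_
  have hC : ∀ c : ℂ, C.ev (MvPolynomial.C c) = algebraMap ℂ _ c := fun c => aeval_C _ _
  simp [quotDeriv, dirDeriv, mkDerivation_X, C.ev_X, coordQuotient_zero, hC]

theorem wedge_constDerivation (v : Fin 3 → ℂ) (i j : Fin 3) : wedge (C.constDerivation v) i j =
    C.ev (linForm (v j • Pi.single i 1 - v i • Pi.single j 1)) := by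
  have h : linForm (v j • Pi.single i 1 - v i • Pi.single j 1) = v j • X i - v i • X j := by
    rw [sub_eq_add_neg, ← neg_smul, linForm_add, linForm_smul, linForm_smul, linForm_single,
      linForm_single, neg_smul, sub_eq_add_neg]
  rw [h, wedge, affineDeriv_constDerivation, affineDeriv_constDerivation, map_sub, map_smul,
    map_smul, C.ev_X, C.ev_X, Algebra.smul_def, Algebra.smul_def]
  ring

/-! ### The difference divisor and the theta divisor -/

theorem picClass_eq_of_ord {D D' : C.Divisor} {f : C.FunctionField} (hf : f ≠ 0)
    (h : ∀ p, D' p = D p - ord p f) : C.picClass D = C.picClass D' := by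
  refine Quotient.sound ⟨f, hf, fun p => Submodule.ext fun g => ?_⟩
  rw [mem_smul_submodule_iff f hf, lineBundle, lineBundle, mem_maxIdealPow_iff,
    mem_maxIdealPow_iff, smul_eq_mul]
  by_cases hg : g = 0
  · simp [hg]
  · have hfg : f⁻¹ * g ≠ 0 := mul_ne_zero (inv_ne_zero hf) hg
    rw [ord_mul p (inv_ne_zero hf) hg, ord_inv, h p]
    simp only [hg, hfg, false_or]
    constructor <;> intro <;> linarith

theorem one_le_h0Twist_iff (D : C.Divisor) :
    1 ≤ h0Twist C.planeTangentTwist (C.picClass D) ↔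
      ∃ δ : C.GenericTangent, δ ≠ 0 ∧ ∀ i j, wedge δ i j ∈ C.linSys (C.hyp - ⇑D) := by
  have h : h0Twist C.planeTangentTwist (C.picClass D) =
    Module.rank ℂ (C.planeTangentTwist.twist (C.lineBundle D).dual).globalSections := rfl
  rw [h, Cardinal.one_le_iff_ne_zero, ne_eq, Submodule.rank_eq_zero, ← ne_eq,
    Submodule.ne_bot_iff]
  simp only [mem_globalSections_iff]
  exact exists_congr fun δ => and_comm

theorem wedge_zero (i j : Fin 3) : wedge (0 : C.GenericTangent) i j = 0 := by
  simp [wedge, affineDeriv]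

theorem wedge_zero_left (δ : C.GenericTangent) (j : Fin 3) : wedge δ 0 j = affineDeriv δ j := by
  rw [wedge, affineDeriv_zero, coordQuotient_zero, mul_zero, sub_zero, one_mul]

/-- The linear form `v_j x_i - v_i x_j`, as a covector. -/
def planeMinor (v : Fin 3 → ℂ) (i j : Fin 3) : Fin 3 → ℂ :=
  v j • Pi.single i 1 - v i • Pi.single j 1

theorem planeMinor_dotProduct (v w : Fin 3 → ℂ) (i j : Fin 3) :
    planeMinor v i j ⬝ᵥ w = v j * w i - v i * w j := by
  simp [planeMinor, sub_dotProduct]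

theorem wedge_constDerivation_ne_zero {v : Fin 3 → ℂ} {i j : Fin 3} (h : planeMinor v i j ≠ 0) :
    wedge (C.constDerivation v) i j ≠ 0 := by
  rw [wedge_constDerivation]
  exact ev_linForm_ne_zero h

theorem exists_affineDeriv_constDerivation_ne_zero {v : Fin 3 → ℂ} (hv : v ≠ 0) :
    affineDeriv (C.constDerivation v) 1 ≠ 0 ∨ affineDeriv (C.constDerivation v) 2 ≠ 0 := by
  rw [← wedge_zero_left, ← wedge_zero_left]
  by_contra! h
  have h1 : planeMinor v 0 1 = 0 := by_contra fun h' => wedge_constDerivation_ne_zero h' h.1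
  have h2 : planeMinor v 0 2 = 0 := by_contra fun h' => wedge_constDerivation_ne_zero h' h.2
  refine hv (funext fun k => ?_)
  have e1 := congrFun h1 0
  have e2 := congrFun h1 1
  have e3 := congrFun h2 0
  simp [planeMinor] at e1 e2 e3
  fin_cases k
  exacts [e2, e1, e3]

theorem isTransverse_smul {p : C.Point} {u : Fin 3 → ℂ} {c : ℂ} (hc : c ≠ 0)
    (hu : IsTransverse p (c • u)) : IsTransverse p u := by
  refine ⟨?_, fun d hd => hu.2 (c * d) (by rw [hd, mul_smul])⟩
  have := hu.1
  rw [smul_dotProduct, smul_eq_mul] at this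
  exact (mul_eq_zero.1 this).resolve_left hc

theorem exists_isTransverse_planeMinor {p : C.Point} {v : Fin 3 → ℂ} {c : ℂ} (hc : c ≠ 0)
    (h : p.1.rep = c • v) : ∃ i j, IsTransverse p (planeMinor v i j) := by
  obtain ⟨j, hj⟩ := exists_isTransverse p
  refine ⟨j, chart p, isTransverse_smul hc ?_⟩
  convert hj using 1
  simp [planeMinor, h, smul_sub, smul_smul]

theorem wedge_constDerivation_mem_linSys (x y : C.Point) (i j : Fin 3) :
    wedge (C.constDerivation x.1.rep) i j ∈
      C.linSys (C.hyp - ⇑(Finsupp.single x 1 - Finsupp.single y 1 : C.Divisor)) := by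
  classical
  rw [mem_linSys, wedge_constDerivation]
  intro p
  refine or_iff_not_imp_left.2 fun h0 => ?_
  have hn := formOrd_nonneg p (linForm_isHomogeneous _) h0
  have hy : 0 ≤ (Finsupp.single y 1 : C.Divisor) p := by
    rw [Finsupp.single_apply]; split_ifs <;> norm_num
  rw [ord_linForm, Pi.sub_apply, Finsupp.sub_apply]
  by_cases hp : x = p
  · subst hp
    have h1 := (formOrd_pos_iff x (linForm_isHomogeneous _) h0).2
      (by rw [eval_linForm]; exact (planeMinor_dotProduct _ _ _ _).trans (by ring))
    rw [Finsupp.single_eq_same]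
    linarith
  · rw [Finsupp.single_apply, if_neg hp]
    linarith

theorem constDerivation_ne_zero {v : Fin 3 → ℂ} (hv : v ≠ 0) : C.constDerivation v ≠ 0 := by
  intro h
  rcases exists_affineDeriv_constDerivation_ne_zero (C := C) hv with h' | h' <;>
  · rw [h, ← wedge_zero_left, wedge_zero] at h'
    exact h' rfl

theorem exists_wedge_eq_mul {δ : C.GenericTangent} (hδ : δ ≠ 0) {v : Fin 3 → ℂ} (hv : v ≠ 0)
    (h : v 0 • wedge δ 1 2 + v 1 • wedge δ 2 0 + v 2 • wedge δ 0 1 = 0) :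
    ∃ f : C.FunctionField, f ≠ 0 ∧
      ∀ i j, wedge δ i j = f * wedge (C.constDerivation v) i j := by
  obtain ⟨f, hf⟩ : ∃ f : C.FunctionField,
      ∀ j, affineDeriv δ j = f * affineDeriv (C.constDerivation v) j := by
    have key : affineDeriv δ 2 * affineDeriv (C.constDerivation v) 1 =
        affineDeriv δ 1 * affineDeriv (C.constDerivation v) 2 := by
      simp only [wedge, affineDeriv_zero, coordQuotient_zero, Algebra.smul_def] at h
      rw [affineDeriv_constDerivation, affineDeriv_constDerivation]
      linear_combination -h
    rcases exists_affineDeriv_constDerivation_ne_zero (C := C) hv with h' | h'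
    · refine ⟨affineDeriv δ 1 / affineDeriv (C.constDerivation v) 1, fun j => ?_⟩
      fin_cases j
      · simp [affineDeriv_zero]
      · simp [h']
      · change affineDeriv δ 2 = _ * affineDeriv (C.constDerivation v) 2
        field_simp
        exact key
    · refine ⟨affineDeriv δ 2 / affineDeriv (C.constDerivation v) 2, fun j => ?_⟩
      fin_cases j
      · simp [affineDeriv_zero]
      · change affineDeriv δ 1 = _ * affineDeriv (C.constDerivation v) 1
        field_simp
        exact key.symm
      · simp [h']
  refine ⟨f, ?_, fun i j => ?_⟩
  · rintro rfl
    exact hδ (eq_zero_of_affineDeriv_eq_zero fun j => by rw [hf, zero_mul])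
  · rw [wedge, wedge, hf, hf]
    ring

theorem le_ord_add_formOrd {D : C.Divisor} {f : C.FunctionField} (hf : f ≠ 0) {v : Fin 3 → ℂ}
    {i j : Fin 3} (h : f * wedge (C.constDerivation v) i j ∈ C.linSys (C.hyp - ⇑D))
    (hne : planeMinor v i j ≠ 0) (p : C.Point) :
    D p ≤ ord p f + formOrd p 1 (C.ev (linForm (planeMinor v i j))) := by
  have hw := wedge_constDerivation_ne_zero (C := C) hne
  have h1 := ((mem_linSys.1 h) p).resolve_left (mul_ne_zero hf hw)
  rw [ord_mul p hf hw, wedge_constDerivation, Pi.sub_apply] at h1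
  have h2 := ord_linForm p (planeMinor v i j)
  change 0 ≤ ord p f + ord p (C.ev (linForm (planeMinor v i j))) + _ at h1
  linarith

theorem exists_planeMinor_dotProduct_ne_zero {v w : Fin 3 → ℂ} (hv : v ≠ 0)
    (h : ∀ c : ℂ, w ≠ c • v) : ∃ i j, planeMinor v i j ⬝ᵥ w ≠ 0 := by
  by_contra! H
  obtain ⟨j, hj⟩ := Function.ne_iff.1 hv
  refine h (w j / v j) (funext fun i => ?_)
  have := H i j
  rw [planeMinor_dotProduct] at this
  rw [Pi.zero_apply] at hj
  rw [Pi.smul_apply, smul_eq_mul]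
  field_simp
  linear_combination this

theorem le_ord_of_rep_ne_smul {D : C.Divisor} {f : C.FunctionField} (hf : f ≠ 0) {v : Fin 3 → ℂ}
    (hv : v ≠ 0) (h : ∀ i j, f * wedge (C.constDerivation v) i j ∈ C.linSys (C.hyp - ⇑D))
    {p : C.Point} (hp : ∀ c : ℂ, p.1.rep ≠ c • v) : D p ≤ ord p f := by
  obtain ⟨i, j, hij⟩ := exists_planeMinor_dotProduct_ne_zero hv hp
  have hne : planeMinor v i j ≠ 0 := by
    intro h0
    rw [h0, zero_dotProduct] at hij
    exact hij rfl
  have h1 := le_ord_add_formOrd hf (h i j) hne p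
  rwa [(formOrd_eq_zero_iff p (linForm_isHomogeneous _) (ev_linForm_ne_zero hne)).2
    (by rwa [eval_linForm]), add_zero] at h1

theorem le_ord_add_one {D : C.Divisor} {f : C.FunctionField} (hf : f ≠ 0) {v : Fin 3 → ℂ}
    (h : ∀ i j, f * wedge (C.constDerivation v) i j ∈ C.linSys (C.hyp - ⇑D))
    {p : C.Point} {c : ℂ} (hc : c ≠ 0) (hp : p.1.rep = c • v) : D p ≤ ord p f + 1 := by
  obtain ⟨i, j, hij⟩ := exists_isTransverse_planeMinor hc hp
  have h1 := le_ord_add_formOrd hf (h i j) hij.ne_zero p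
  rwa [formOrd_linForm_eq_one hij] at h1

theorem exists_picClass_eq_of_section {D : C.Divisor} (hD : deg D = 0) {δ : C.GenericTangent}
    (hδ : δ ≠ 0) (h : ∀ i j, wedge δ i j ∈ C.linSys (C.hyp - ⇑D)) :
    ∃ x y : C.Point, C.picClass D = C.picClass (Finsupp.single x 1 - Finsupp.single y 1) := by
  classical
  obtain ⟨v, hv, hsum⟩ := exists_sum_smul_eq_zero_of_mem_linSys hD
    (g := ![wedge δ 1 2, wedge δ 2 0, wedge δ 0 1])
    (fun k => by fin_cases k <;> exact h _ _)
    (by simp only [Fin.sum_univ_three, Matrix.cons_val, wedge]; ring)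
  simp only [Fin.sum_univ_three, Matrix.cons_val] at hsum
  obtain ⟨f, hf, hw⟩ := exists_wedge_eq_mul hδ hv hsum
  replace h : ∀ i j, f * wedge (C.constDerivation v) i j ∈ C.linSys (C.hyp - ⇑D) :=
    fun i j => hw i j ▸ h i j
  obtain ⟨Df, hDf, hdeg⟩ := exists_principal_divisor hf
  by_cases hF : eval v C.poly = 0
  · obtain ⟨c, hc, hx⟩ := exists_rep_pointOfVec v hv hF
    set x := C.pointOfVec v hv hF
    have hnn : ∀ p, 0 ≤ (Df + Finsupp.single x 1 - D : C.Divisor) p := by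
      intro p
      rw [Finsupp.sub_apply, Finsupp.add_apply, hDf]
      by_cases hp : x = p
      · subst hp
        have := le_ord_add_one hf h hc hx
        rw [Finsupp.single_eq_same]
        linarith
      · have := le_ord_of_rep_ne_smul hf hv h (p := p) fun d hd => hp <|
          point_eq_of_smul (c := d / c) (by rw [hd, hx, smul_smul, div_mul_cancel₀ _ hc])
        rw [Finsupp.single_apply, if_neg hp]
        linarith
    obtain ⟨E, hE⟩ := exists_eq_ofMultiset hnn
    have hcard : E.card = 1 := by
      have := congrArg deg hE
      rw [map_sub, map_add, deg_single, hD, hdeg, deg_ofMultiset] at this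
      push_cast at this
      omega
    obtain ⟨y, rfl⟩ := Multiset.card_eq_one.1 hcard
    refine ⟨x, y, picClass_eq_of_ord hf fun p => ?_⟩
    have := DFunLike.congr_fun hE p
    rw [← Multiset.cons_zero, ofMultiset_cons, ofMultiset_zero] at this
    simp only [Finsupp.sub_apply, Finsupp.add_apply, hDf, Finsupp.zero_apply] at this ⊢
    linarith
  · have hnn : ∀ p, 0 ≤ (Df - D) p := by
      intro p
      have := le_ord_of_rep_ne_smul hf hv h (p := p) fun d hd => hF ?_
      · rw [Finsupp.sub_apply, hDf]
        linarith
      · have hd0 : d ≠ 0 := by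
          rintro rfl
          exact p.1.rep_nonzero (by rw [hd, zero_smul])
        have h1 := p.2
        rw [hd, eval_smul_of_isHomogeneous C.isHomogeneous] at h1
        exact (mul_eq_zero.1 h1).resolve_left (pow_ne_zero _ hd0)
    obtain ⟨E, hE⟩ := exists_eq_ofMultiset hnn
    have hcard : E.card = 0 := by
      have := congrArg deg hE
      rw [map_sub, hD, hdeg, deg_ofMultiset] at this
      omega
    rw [Multiset.card_eq_zero.1 hcard, ofMultiset_zero] at hE
    obtain ⟨-, E', -, -, hE', -⟩ := exists_line_nodup (C := C)
    obtain ⟨x, -⟩ := Multiset.card_pos_iff_exists_mem.1 (by omega : 0 < E'.card)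
    refine ⟨x, x, picClass_eq_of_ord hf fun p => ?_⟩
    have := DFunLike.congr_fun hE p
    simp only [Finsupp.sub_apply, hDf, Finsupp.zero_apply] at this ⊢
    linarith

end SmoothPlaneQuartic

end

theorem difference_divisor_is_theta_divisor (C : SmoothPlaneQuartic) :
    C.differenceDivisor = SmoothPlaneQuartic.thetaDivisor C.planeTangentTwist := by
  open SmoothPlaneQuartic in
  ext N
  constructor
  · rintro ⟨x, y, rfl⟩
    refine ⟨⟨_, ?_, rfl⟩, (one_le_h0Twist_iff _).2
      ⟨C.constDerivation x.1.rep, constDerivation_ne_zero x.1.rep_nonzero,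
        wedge_constDerivation_mem_linSys x y⟩⟩
    rw [← deg_apply, map_sub, deg_single, deg_single, sub_self]
  · rintro ⟨⟨D, hD, rfl⟩, h⟩
    obtain ⟨δ, hδ, hmem⟩ := (one_le_h0Twist_iff D).1 h
    exact exists_picClass_eq_of_section hD hδ hmem
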